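/- Let E = E(d,M,p) be a fractal percolation in ℝ^d with integer scale M ≥ 2 and probability p > M^{-d+1/2}. Then, almost surely conditioned on E ≠ ∅, the distance set D(E) := { |x − y| : x, y ∈ E } contains a nonempty open interval. -/

import Mathlib

open MeasureTheory Set ENNReal ProbabilityTheory Real

noncomputable section

/-- The alphabet indexing the `M^d` subcubes of a cube in `[0,1]^d`. -/
abbrev Alpha (d M : ℕ) : Type := Fin d → Fin M

/-- Finite nonempty words over the alphabet; they index `M`-adic cubes. -/
abbrev Word (d M : ℕ) : Type := {w : List (Alpha d M) // w ≠ []}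

/-- The sample space: `{0,1}`-labelings of all finite nonempty words. -/
abbrev PercSpace (d M : ℕ) : Type := Word d M → Bool

/-- `P` is the product measure making the labels i.i.d. Bernoulli(`p`). -/
def IsBernoulliPerc (d M : ℕ) (p : ℝ) (P : Measure (PercSpace d M)) : Prop :=
  IsProbabilityMeasure P ∧
    ∀ (S : Finset (Word d M)) (b : Word d M → Bool),
      P {ω | ∀ w ∈ S, ω w = b w} =
        ∏ w ∈ S, if b w then ENNReal.ofReal p else ENNReal.ofReal (1 - p)

/-- A level-`w.length` cube is retained iff its word and every nonempty prefix
of its word carry label 1. -/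
def Retained (d M : ℕ) (ω : PercSpace d M) (w : List (Alpha d M)) : Prop :=
  ∀ (u : List (Alpha d M)) (hu : u ≠ []), u <+: w → ω ⟨u, hu⟩ = true

/-- The `i`-th coordinate of the lower-left corner of the cube indexed by `w`. -/
def wordBase (d M : ℕ) (w : List (Alpha d M)) (i : Fin d) : ℝ :=
  ∑ j : Fin w.length, ((w.get j) i : ℝ) * (M : ℝ) ^ (-(j : ℤ) - 1)

/-- The closed `M`-adic cube of level `w.length` indexed by the word `w`. -/
def wordCube (d M : ℕ) (w : List (Alpha d M)) : Set (EuclideanSpace ℝ (Fin d)) :=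
  {x | ∀ i, wordBase d M w i ≤ x i ∧ x i ≤ wordBase d M w i + (M : ℝ) ^ (-(w.length : ℤ))}

/-- `E_n`, the union of the retained level-`n` cubes. -/
def approx (d M : ℕ) (ω : PercSpace d M) (n : ℕ) : Set (EuclideanSpace ℝ (Fin d)) :=
  ⋃ w ∈ {w : List (Alpha d M) | w.length = n ∧ Retained d M ω w}, wordCube d M w

/-- The fractal percolation set `E = ⋂_{n ≥ 1} E_n`. -/
def percLimit (d M : ℕ) (ω : PercSpace d M) : Set (EuclideanSpace ℝ (Fin d)) :=
  ⋂ n ∈ {n : ℕ | 1 ≤ n}, approx d M ω n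


lemma perc_cyl {d M : ℕ} {p : ℝ} {P : Measure (PercSpace d M)} (hP : IsBernoulliPerc d M p P)
    (S : Finset (Word d M)) :
    P {ω | ∀ w ∈ S, ω w = true} = ENNReal.ofReal p ^ S.card := by
  have := hP.2 S (fun _ => true)
  simpa using this

lemma meas_label {d M : ℕ} (w : Word d M) : MeasurableSet {ω : PercSpace d M | ω w = true} :=
  measurableSet_eq_fun (measurable_pi_apply w) measurable_const

lemma meas_cyl {d M : ℕ} (S : Finset (Word d M)) :
    MeasurableSet {ω : PercSpace d M | ∀ w ∈ S, ω w = true} := by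
  have : {ω : PercSpace d M | ∀ w ∈ S, ω w = true} = ⋂ w ∈ S, {ω | ω w = true} := by
    ext; simp
  rw [this]
  exact Finset.measurableSet_biInter _ fun w _ => meas_label w

lemma perc_uniq {d M : ℕ} {μ ν : Measure (PercSpace d M)} [IsProbabilityMeasure μ]
    [IsProbabilityMeasure ν]
    (h : ∀ S : Finset (Word d M), μ {ω | ∀ w ∈ S, ω w = true} = ν {ω | ∀ w ∈ S, ω w = true}) :
    μ = ν := by
  refine ext_of_generate_finite
    (Set.range fun S : Finset (Word d M) => {ω : PercSpace d M | ∀ w ∈ S, ω w = true}) ?_ ?_ ?_ ?_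
  · apply le_antisymm
    · refine iSup_le fun w => ?_
      rw [← measurable_iff_comap_le]
      refine @measurable_to_bool _ (_) _ ?_
      apply MeasurableSpace.measurableSet_generateFrom
      refine ⟨{w}, ?_⟩
      ext ω; simp
    · apply MeasurableSpace.generateFrom_le
      rintro _ ⟨S, rfl⟩
      exact meas_cyl S
  · rintro _ ⟨S, rfl⟩ _ ⟨T, rfl⟩ _
    classical
    refine ⟨S ∪ T, ?_⟩
    ext ω
    simp only [Finset.mem_union, Set.mem_ofPred_eq, Set.mem_inter_iff]
    constructor
    · intro h; exact ⟨fun w hw => h w (Or.inl hw), fun w hw => h w (Or.inr hw)⟩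
    · rintro ⟨h1, h2⟩ w (hw | hw)
      · exact h1 w hw
      · exact h2 w hw
  · rintro _ ⟨S, rfl⟩
    exact h S
  · simp

lemma meas_upd {d M : ℕ} (w : Word d M) (b : Bool) :
    Measurable (fun ω : PercSpace d M => Function.update ω w b) := by
  refine measurable_pi_lambda _ fun u => ?_
  by_cases h : u = w
  · subst h; simp
  · simp only [Function.update_of_ne h]; exact measurable_pi_apply u

lemma cyl_upd_true {d M : ℕ} (w : Word d M) (S : Finset (Word d M)) :
    (fun ω : PercSpace d M => Function.update ω w true) ⁻¹' {ω | ∀ w ∈ S, ω w = true}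
      = {ω | ∀ u ∈ S.erase w, ω u = true} := by
  ext ω
  simp only [Set.mem_preimage, Set.mem_ofPred_eq, Finset.mem_erase]
  constructor
  · rintro h u ⟨hu, hS⟩
    have := h u hS
    rwa [Function.update_of_ne hu] at this
  · intro h u hu
    by_cases huw : u = w
    · subst huw; simp
    · rw [Function.update_of_ne huw]; exact h u ⟨huw, hu⟩

lemma site_measure {d M : ℕ} {p : ℝ} (hp0 : 0 ≤ p) (hp1 : p ≤ 1) {P : Measure (PercSpace d M)}
    (hP : IsBernoulliPerc d M p P) (w : Word d M) :
    P = ENNReal.ofReal p • P.map (fun ω => Function.update ω w true)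
      + ENNReal.ofReal (1 - p) • P.map (fun ω => Function.update ω w false) := by
  have := hP.1
  have hsum : ENNReal.ofReal p + ENNReal.ofReal (1 - p) = 1 := by
    rw [← ENNReal.ofReal_add hp0 (by linarith)]; simp
  have : IsProbabilityMeasure (ENNReal.ofReal p • P.map (fun ω => Function.update ω w true)
      + ENNReal.ofReal (1 - p) • P.map (fun ω => Function.update ω w false)) := by
    constructor
    simp [Measure.map_apply (meas_upd w _), hsum]
  have hmS := fun S => meas_cyl (d := d) (M := M) S
  apply perc_uniq
  intro S
  simp only [Measure.coe_add, Measure.coe_smul, Pi.add_apply, Pi.smul_apply, smul_eq_mul,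
    Measure.map_apply (meas_upd w _) (hmS S)]
  rw [cyl_upd_true, perc_cyl hP, perc_cyl hP]
  by_cases hw : w ∈ S
  · have : (fun ω : PercSpace d M => Function.update ω w false) ⁻¹' {ω | ∀ w ∈ S, ω w = true} = ∅ := by
      ext ω
      simp only [Set.mem_preimage, Set.mem_ofPred_eq, Set.mem_empty_iff_false, iff_false]
      intro h
      have := h w hw
      simp at this
    rw [this, Finset.card_erase_of_mem hw]
    have hc : S.card = (S.card - 1) + 1 := by
      have := Finset.card_pos.2 ⟨w, hw⟩; omega
    conv_lhs => rw [hc, pow_succ]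
    simp [mul_comm]
  · have : (fun ω : PercSpace d M => Function.update ω w false) ⁻¹' {ω | ∀ w ∈ S, ω w = true}
        = {ω | ∀ w ∈ S, ω w = true} := by
      ext ω
      simp only [Set.mem_preimage, Set.mem_ofPred_eq]
      refine forall₂_congr fun u hu => ?_
      rw [Function.update_of_ne (by rintro rfl; exact hw hu)]
    rw [this, perc_cyl hP, Finset.erase_eq_of_notMem hw, ← add_mul, hsum, one_mul]

lemma site {d M : ℕ} {p : ℝ} (hp0 : 0 ≤ p) (hp1 : p ≤ 1) {P : Measure (PercSpace d M)}
    (hP : IsBernoulliPerc d M p P) (w : Word d M) (F : PercSpace d M → ℝ≥0∞) (hF : Measurable F) :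
    ∫⁻ ω, F ω ∂P = ENNReal.ofReal p * ∫⁻ ω, F (Function.update ω w true) ∂P
      + ENNReal.ofReal (1 - p) * ∫⁻ ω, F (Function.update ω w false) ∂P := by
  conv_lhs => rw [site_measure hp0 hp1 hP w]
  rw [lintegral_add_measure, lintegral_smul_measure, lintegral_smul_measure,
    lintegral_map hF (meas_upd w _), lintegral_map hF (meas_upd w _)]
  rfl

lemma meas_lab {d M : ℕ} (φ : Bool → PercSpace d M → ℝ≥0∞) (hφ : ∀ b, Measurable (φ b))
    (w : Word d M) : Measurable fun ω => φ (ω w) ω := by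
  have : (fun ω => φ (ω w) ω) = fun ω => if ω w = true then φ true ω else φ false ω := by
    ext ω; cases h : ω w <;> simp
  rw [this]
  exact Measurable.ite (meas_label w) (hφ _) (hφ _)

lemma prodsite {d M : ℕ} {p : ℝ} (hp0 : 0 ≤ p) (hp1 : p ≤ 1) {P : Measure (PercSpace d M)}
    (hP : IsBernoulliPerc d M p P) {ι : Type*} (I : Finset ι) (e : ι → Word d M)
    (he : Set.InjOn e I) (H : PercSpace d M → ℝ≥0∞) (hH : Measurable H)
    (hHi : ∀ i ∈ I, ∀ b ω, H (Function.update ω (e i) b) = H ω)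
    (φ : ι → Bool → PercSpace d M → ℝ≥0∞) (hφm : ∀ i b, Measurable (φ i b))
    (hφ : ∀ i ∈ I, ∀ j ∈ I, ∀ b b' ω, φ j b' (Function.update ω (e i) b) = φ j b' ω) :
    ∫⁻ ω, H ω * ∏ i ∈ I, φ i (ω (e i)) ω ∂P = ∫⁻ ω, H ω * ∏ i ∈ I,
      (ENNReal.ofReal p * φ i true ω + ENNReal.ofReal (1 - p) * φ i false ω) ∂P := by
  classical
  induction I using Finset.induction_on generalizing H with
  | empty => simp
  | insert a I ha ih =>
    have hne : ∀ i ∈ I, e i ≠ e a := by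
      intro i hi h
      have := he (by simp [hi]) (by simp) h
      exact ha (this ▸ hi)
    have hm : Measurable fun ω => ∏ i ∈ I, φ i (ω (e i)) ω :=
      Finset.measurable_prod _ fun i _ => meas_lab (φ i) (hφm i) (e i)
    have hm' : ∀ b, Measurable fun ω => (H ω * φ a b ω) * ∏ i ∈ I, φ i (ω (e i)) ω :=
      fun b => (hH.mul (hφm a b)).mul hm
    have key : ∀ b ω, H (Function.update ω (e a) b) *
        ∏ i ∈ insert a I, φ i (Function.update ω (e a) b (e i)) (Function.update ω (e a) b)
        = (H ω * φ a b ω) * ∏ i ∈ I, φ i (ω (e i)) ω := by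
      intro b ω
      rw [Finset.prod_insert ha, hHi a (by simp), hφ a (by simp) a (by simp), Function.update_self,
        mul_assoc]
      congr 2
      refine Finset.prod_congr rfl fun i hi => ?_
      rw [hφ a (by simp) i (by simp [hi]), Function.update_of_ne (hne i hi)]
    rw [site hp0 hp1 hP (e a) (fun ω => H ω * ∏ i ∈ insert a I, φ i (ω (e i)) ω)
      (hH.mul (Finset.measurable_prod _ fun i _ => meas_lab (φ i) (hφm i) (e i)))]
    simp_rw [key]
    rw [← lintegral_const_mul _ (hm' _), ← lintegral_const_mul _ (hm' _),
      ← lintegral_add_left ((hm' _).const_mul _)]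
    have e1 : ∀ ω, (ENNReal.ofReal p * (H ω * φ a true ω * ∏ i ∈ I, φ i (ω (e i)) ω) +
        ENNReal.ofReal (1 - p) * (H ω * φ a false ω * ∏ i ∈ I, φ i (ω (e i)) ω))
        = (H ω * (ENNReal.ofReal p * φ a true ω + ENNReal.ofReal (1 - p) * φ a false ω))
          * ∏ i ∈ I, φ i (ω (e i)) ω := by
      intro ω; ring
    simp_rw [e1]
    rw [ih (he.mono (by simp))]
    · refine lintegral_congr fun ω => ?_
      rw [Finset.prod_insert ha, mul_assoc]
    · exact hH.mul (((hφm _ _).const_mul _).add ((hφm _ _).const_mul _))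
    · intro i hi b ω
      rw [hHi i (by simp [hi]), hφ i (by simp [hi]) a (by simp), hφ i (by simp [hi]) a (by simp)]
    · intro i hi j hj
      exact hφ i (by simp [hi]) j (by simp [hj])



/-- appending a letter to a word -/
def sn {d M : ℕ} (v : List (Alpha d M)) (c : Alpha d M) : Word d M := ⟨v ++ [c], by simp⟩

/-- retained, looking only at labels at levels above `k` -/
def ret {d M : ℕ} (k : ℕ) (ω : PercSpace d M) (w : List (Alpha d M)) : Prop :=
  ∀ (u : List (Alpha d M)) (hu : u ≠ []), u <+: w → k < u.length → ω ⟨u, hu⟩ = true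

lemma ret_snoc {d M k : ℕ} {ω : PercSpace d M} {v : List (Alpha d M)} {c : Alpha d M}
    (hk : k ≤ v.length) : ret k ω (v ++ [c]) ↔ ret k ω v ∧ ω (sn v c) = true := by
  constructor
  · intro h
    exact ⟨fun u hu hp => h u hu (hp.trans (List.prefix_append _ _)),
      h _ _ (List.prefix_refl _) (by simp; omega)⟩
  · rintro ⟨h1, h2⟩ u hu hp hl
    rcases List.prefix_concat_iff.1 hp with rfl | h
    · exact h2
    · exact h1 u hu h hl

lemma ret_short {d M k : ℕ} {ω : PercSpace d M} {w : List (Alpha d M)} (h : w.length ≤ k) :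
    ret k ω w := by
  intro u hu hp hl
  have := hp.length_le
  omega

lemma ret_prefix {d M k : ℕ} {ω : PercSpace d M} {v w : List (Alpha d M)} (h : v <+: w)
    (hw : ret k ω w) : ret k ω v := fun u hu hp hl => hw u hu (hp.trans h) hl

lemma ret_upd {d M k : ℕ} {ω : PercSpace d M} {w : List (Alpha d M)} {u : Word d M} {b : Bool}
    (h : ¬ u.1 <+: w) : ret k (Function.update ω u b) w ↔ ret k ω w := by
  unfold ret
  refine forall₄_congr fun x hx hp hl => ?_
  rw [Function.update_of_ne]
  rintro rfl
  exact h hp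

lemma ret_upd_len {d M k : ℕ} {ω : PercSpace d M} {w : List (Alpha d M)} {u : Word d M} {b : Bool}
    (h : w.length ≤ u.1.length) (hne : u.1 ≠ w) :
    ret k (Function.update ω u b) w ↔ ret k ω w :=
  ret_upd fun hp => hne (hp.eq_of_length (le_antisymm hp.length_le h))

lemma ret_upd_low {d M k : ℕ} {ω : PercSpace d M} {w : List (Alpha d M)} {u : Word d M} {b : Bool}
    (h : u.1.length ≤ k) :
    ret k (Function.update ω u b) w ↔ ret k ω w := by
  unfold ret
  refine forall₄_congr fun x hx hp hl => ?_
  rw [Function.update_of_ne]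
  rintro rfl
  simp at h
  omega

lemma meas_ret {d M : ℕ} (k : ℕ) (w : List (Alpha d M)) :
    MeasurableSet {ω : PercSpace d M | ret k ω w} := by
  have : {ω : PercSpace d M | ret k ω w}
      = ⋂ u : Word d M, ⋂ (_ : u.1 <+: w), ⋂ (_ : k < u.1.length), {ω | ω u = true} := by
    ext ω
    simp [ret]
  rw [this]
  exact MeasurableSet.iInter fun u => MeasurableSet.iInter fun _ => MeasurableSet.iInter fun _ =>
    meas_label u

open Classical in
/-- indicator of `ret` -/
def rr {d M : ℕ} (k : ℕ) (w : List (Alpha d M)) (ω : PercSpace d M) : ℝ :=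
  if ret k ω w then 1 else 0

lemma rr_nonneg {d M : ℕ} (k : ℕ) (w : List (Alpha d M)) (ω : PercSpace d M) : 0 ≤ rr k w ω := by
  unfold rr; split_ifs <;> norm_num

lemma rr_le {d M : ℕ} (k : ℕ) (w : List (Alpha d M)) (ω : PercSpace d M) : rr k w ω ≤ 1 := by
  unfold rr; split_ifs <;> norm_num

lemma rr_cases {d M : ℕ} (k : ℕ) (w : List (Alpha d M)) (ω : PercSpace d M) :
    rr k w ω = 0 ∨ rr k w ω = 1 := by
  unfold rr; split_ifs <;> norm_num

lemma meas_rr {d M : ℕ} (k : ℕ) (w : List (Alpha d M)) : Measurable (rr (d := d) (M := M) k w) := by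
  unfold rr
  exact Measurable.ite (meas_ret k w) measurable_const measurable_const

lemma rr_snoc {d M k : ℕ} {ω : PercSpace d M} {v : List (Alpha d M)} {c : Alpha d M}
    (hk : k ≤ v.length) : rr k (v ++ [c]) ω = rr k v ω * (if ω (sn v c) = true then 1 else 0) := by
  unfold rr
  rw [ret_snoc hk]
  split_ifs <;> simp_all

lemma rr_mono {d M k : ℕ} {ω : PercSpace d M} {v w : List (Alpha d M)} (h : v <+: w) :
    rr k w ω ≤ rr k v ω := by
  unfold rr
  split_ifs with h1 h2
  · rfl
  · exact absurd (ret_prefix h h1) h2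
  · norm_num
  · rfl

lemma rr_upd_len {d M k : ℕ} {ω : PercSpace d M} {w : List (Alpha d M)} {u : Word d M} {b : Bool}
    (h : w.length ≤ u.1.length) (hne : u.1 ≠ w) :
    rr k w (Function.update ω u b) = rr k w ω := by
  unfold rr
  rw [ret_upd_len h hne]

/-- words of length `n` -/
def wd (d M : ℕ) : ℕ → Finset (List (Alpha d M))
  | 0 => {[]}
  | n + 1 => (wd d M n ×ˢ Finset.univ).image fun x => x.1 ++ [x.2]

lemma mem_wd {d M : ℕ} {n : ℕ} {w : List (Alpha d M)} : w ∈ wd d M n ↔ w.length = n := by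
  induction n generalizing w with
  | zero => simp [wd]
  | succ n ih =>
    simp only [wd, Finset.mem_image, Finset.mem_product, Finset.mem_univ, and_true, Prod.exists]
    constructor
    · rintro ⟨a, b, h, rfl⟩
      simp [ih.1 h]
    · intro h
      have hne : w ≠ [] := by rintro rfl; simp at h
      refine ⟨w.dropLast, w.getLast hne, ih.2 (by simp [h]), List.dropLast_append_getLast hne⟩

lemma snoc_inj {d M : ℕ} : Function.Injective
    (fun x : List (Alpha d M) × Alpha d M => x.1 ++ [x.2]) := by
  rintro ⟨a, b⟩ ⟨a', b'⟩ h
  simp only [] at h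
  have := List.append_inj' h rfl
  simp_all

lemma sum_wd_succ {d M : ℕ} (n : ℕ) (F : List (Alpha d M) → ℝ) :
    ∑ w ∈ wd d M (n + 1), F w = ∑ v ∈ wd d M n, ∑ c, F (v ++ [c]) := by
  rw [wd, Finset.sum_image (fun x _ y _ h => snoc_inj h), Finset.sum_product]

lemma card_wd {d M : ℕ} (n : ℕ) : (wd d M n).card = (M ^ d) ^ n := by
  induction n with
  | zero => simp [wd]
  | succ n ih =>
    rw [wd, Finset.card_image_of_injective _ snoc_inj, Finset.card_product, ih]
    simp [pow_succ]

lemma tree_step {d M : ℕ} {p : ℝ} (hp0 : 0 ≤ p) (hp1 : p ≤ 1) {P : Measure (PercSpace d M)}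
    (hP : IsBernoulliPerc d M p P) {k n : ℕ} (hk : k ≤ n) (f : List (Alpha d M) → ℝ) :
    ∫⁻ ω, ENNReal.ofReal (exp (∑ w ∈ wd d M (n + 1), f w * rr k w ω)) ∂P ≤
    ∫⁻ ω, ENNReal.ofReal (exp (∑ v ∈ wd d M n,
      (p * ∑ c, (exp (f (v ++ [c])) - 1)) * rr k v ω)) ∂P := by
  have key := prodsite hp0 hp1 hP (wd d M n ×ˢ (Finset.univ : Finset (Alpha d M)))
    (fun x => sn x.1 x.2) (fun x _ y _ h => snoc_inj (congrArg Subtype.val h))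
    (fun _ => 1) measurable_const (fun _ _ _ _ => rfl)
    (fun x b ω => ENNReal.ofReal (exp (f (x.1 ++ [x.2]) * (rr k x.1 ω * (if b = true then 1 else 0)))))
    (by
      intro x b
      have := meas_rr k x.1 (d := d) (M := M)
      fun_prop)
    (by
      rintro ⟨v, c⟩ hi ⟨v', c'⟩ hj b b' ω
      simp only [Finset.mem_product, mem_wd, Finset.mem_univ, and_true] at hi hj
      rw [rr_upd_len]
      · simp [sn]; omega
      · intro h
        have := congrArg List.length h
        simp [sn] at this
        omega)
  have e1 : ∀ ω, ENNReal.ofReal (exp (∑ w ∈ wd d M (n + 1), f w * rr k w ω)) =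
      1 * ∏ x ∈ wd d M n ×ˢ (Finset.univ : Finset (Alpha d M)), ENNReal.ofReal (exp (f (x.1 ++ [x.2]) * (rr k x.1 ω *
        (if ω (sn x.1 x.2) = true then 1 else 0)))) := by
    intro ω
    rw [one_mul, ← ENNReal.ofReal_prod_of_nonneg (fun _ _ => (exp_pos _).le), ← exp_sum, sum_wd_succ,
      Finset.sum_product]
    congr 2
    refine Finset.sum_congr rfl fun v hv => Finset.sum_congr rfl fun c _ => ?_
    rw [rr_snoc (by rw [mem_wd.1 hv]; exact hk)]
  simp_rw [e1]
  rw [key]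
  refine lintegral_mono fun ω => ?_
  simp only [one_mul]
  have e2 : ENNReal.ofReal (exp (∑ v ∈ wd d M n, (p * ∑ c, (exp (f (v ++ [c])) - 1)) * rr k v ω))
      = ∏ x ∈ wd d M n ×ˢ (Finset.univ : Finset (Alpha d M)), ENNReal.ofReal (exp (p * (exp (f (x.1 ++ [x.2])) - 1) * rr k x.1 ω)) := by
    rw [← ENNReal.ofReal_prod_of_nonneg (fun _ _ => (exp_pos _).le), ← exp_sum,
      Finset.sum_product]
    congr 2
    refine Finset.sum_congr rfl fun v hv => ?_
    simp only [Finset.mul_sum, Finset.sum_mul]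
  rw [e2]
  refine Finset.prod_le_prod' fun x _ => ?_
  rw [← ENNReal.ofReal_mul hp0, ← ENNReal.ofReal_mul (by linarith),
    ← ENNReal.ofReal_add (by positivity) (mul_nonneg (by linarith) (exp_pos _).le)]
  apply ENNReal.ofReal_le_ofReal
  rcases rr_cases k x.1 ω with h | h
  · simp [h]
  · simp only [h, if_true, mul_one, Bool.false_eq_true, if_false, mul_zero, exp_zero]
    have := add_one_le_exp (p * (exp (f (x.1 ++ [x.2])) - 1))
    linarith

open Classical in
/-- number of descendants of `v` at level `n` satisfying `L` -/
def cnt {d M : ℕ} (n : ℕ) (L : List (Alpha d M) → Prop) (v : List (Alpha d M)) : ℝ :=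
  ∑ w ∈ wd d M n, if v <+: w ∧ L w then 1 else 0

lemma cnt_nonneg {d M : ℕ} (n : ℕ) (L : List (Alpha d M) → Prop) (v : List (Alpha d M)) :
    0 ≤ cnt n L v := by
  classical
  exact Finset.sum_nonneg fun _ _ => by split_ifs <;> norm_num

lemma cnt_sum {d M : ℕ} {n : ℕ} (L : List (Alpha d M) → Prop) (v : List (Alpha d M))
    (hv : v.length < n) : ∑ c, cnt n L (v ++ [c]) = cnt n L v := by
  classical
  unfold cnt
  rw [Finset.sum_comm]
  refine Finset.sum_congr rfl fun w hw => ?_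
  rw [mem_wd] at hw
  by_cases h : v <+: w
  · obtain ⟨s, rfl⟩ := h
    cases s with
    | nil => simp at hw; omega
    | cons a s =>
      have : ∀ c, (v ++ [c] <+: v ++ a :: s) ↔ c = a := by
        intro c
        rw [List.prefix_append_right_inj]
        simp [List.cons_prefix_cons]
      simp only [this, List.prefix_append, true_and]
      by_cases hL : L (v ++ a :: s) <;> simp [hL]
  · have : ∀ c, ¬ (v ++ [c] <+: w) := fun c hc => h ((List.prefix_append _ _).trans hc)
    simp [h, this]

lemma cnt_level {d M : ℕ} {n : ℕ} (L : List (Alpha d M) → Prop) {k : ℕ} (hk : k ≤ n) :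
    ∑ v ∈ wd d M k, cnt n L v = cnt n L [] := by
  induction k with
  | zero => simp [wd]
  | succ k ih =>
    rw [sum_wd_succ, ← ih (by omega)]
    exact Finset.sum_congr rfl fun v hv => cnt_sum L v (by rw [mem_wd.1 hv]; omega)

lemma cnt_self {d M : ℕ} {n : ℕ} (L : List (Alpha d M) → Prop) [DecidablePred L] {w : List (Alpha d M)}
    (hw : w ∈ wd d M n) : cnt n L w = if L w then 1 else 0 := by
  classical
  unfold cnt
  rw [Finset.sum_eq_single_of_mem w hw]
  · simp
  · intro b hb hne
    rw [if_neg]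
    rintro ⟨h, _⟩
    exact hne (h.eq_of_length (by rw [mem_wd.1 hw, mem_wd.1 hb])).symm

lemma pow_bd (n j : ℕ) (hj : j ≤ n) : (1 + 1 / (2 * ((n : ℝ) + 1))) ^ j ≤ 2 := by
  have h0 : (0:ℝ) < 2 * ((n : ℝ) + 1) := by positivity
  calc (1 + 1 / (2 * ((n : ℝ) + 1))) ^ j ≤ (exp (1 / (2 * ((n : ℝ) + 1)))) ^ j := by
        gcongr
        have := add_one_le_exp (1 / (2 * ((n : ℝ) + 1)))
        linarith
    _ = exp (j * (1 / (2 * ((n : ℝ) + 1)))) := by rw [← exp_nat_mul]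
    _ ≤ exp (1 / 2) := by
        apply exp_le_exp.2
        have : (j : ℝ) ≤ n := by exact_mod_cast hj
        rw [mul_one_div, div_le_div_iff₀ h0 (by norm_num)]
        linarith
    _ ≤ 2 := by
        have h := Real.exp_bound' (x := 1/2) (by norm_num) (by norm_num) (n := 3) (by norm_num)
        norm_num [Finset.sum_range_succ, Nat.factorial] at h
        norm_num
        linarith

lemma exp_sub_one_le {x : ℝ} (h0 : 0 ≤ x) (h1 : x ≤ 1) : exp x - 1 ≤ x * (1 + x) := by
  have := Real.abs_exp_sub_one_sub_id_le (x := x) (by rw [abs_of_nonneg h0]; exact h1)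
  have := (abs_le.1 this).2
  nlinarith

lemma tree_bound {d M : ℕ} {p : ℝ} (hp0 : 0 ≤ p) (hp1 : p ≤ 1) {P : Measure (PercSpace d M)}
    (hP : IsBernoulliPerc d M p P) {k n : ℕ} (hk : k ≤ n) (L : List (Alpha d M) → Prop)
    {D : ℝ} (hD : 0 < D)
    (h1 : ∀ v : List (Alpha d M), k ≤ v.length → v.length ≤ n → p ^ (n - v.length) * cnt n L v ≤ D)
    (h2 : p ^ (n - k) * cnt n L [] ≤ D) {θ : ℝ} (hθ : θ = 1 / (4 * D * ((n : ℝ) + 1))) :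
    ∫⁻ ω, ENNReal.ofReal (exp (∑ w ∈ wd d M n, θ * cnt n L w * rr k w ω)) ∂P ≤
      ENNReal.ofReal (exp 1) := by
  have := hP.1
  have hn : (0:ℝ) < (n : ℝ) + 1 := by positivity
  have hθ0 : 0 < θ := by rw [hθ]; positivity
  have hθD : 2 * θ * D = 1 / (2 * ((n : ℝ) + 1)) := by
    rw [hθ]; field_simp; norm_num
  have hθD1 : 2 * θ * D ≤ 1 := by
    rw [hθD, div_le_one (by positivity)]; linarith [(Nat.cast_nonneg n : (0:ℝ) ≤ n)]
  have hpow : ∀ j ≤ n, (1 + 2 * θ * D) ^ j ≤ 2 := by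
    intro j hj; rw [hθD]; exact pow_bd n j hj
  have hb0 : 0 ≤ 1 + 2 * θ * D := by positivity
  have main : ∀ j, j ≤ n - k →
      ∫⁻ ω, ENNReal.ofReal (exp (∑ w ∈ wd d M n, θ * cnt n L w * rr k w ω)) ∂P ≤
      ∫⁻ ω, ENNReal.ofReal (exp (∑ v ∈ wd d M (n - j),
        (θ * (1 + 2 * θ * D) ^ j * (p ^ j * cnt n L v)) * rr k v ω)) ∂P := by
    intro j
    induction j with
    | zero => intro _; simp
    | succ j ih =>
      intro hj
      refine (ih (by omega)).trans ?_
      have hnj : n - j = (n - (j + 1)) + 1 := by omega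
      rw [hnj]
      refine (tree_step hp0 hp1 hP (by omega) _).trans ?_
      refine lintegral_mono fun ω => ENNReal.ofReal_le_ofReal (exp_le_exp.2 ?_)
      refine Finset.sum_le_sum fun v hv => mul_le_mul_of_nonneg_right ?_ (rr_nonneg _ _ _)
      rw [mem_wd] at hv
      rw [← cnt_sum L v (by omega), Finset.mul_sum, Finset.mul_sum, Finset.mul_sum]
      refine Finset.sum_le_sum fun c _ => ?_
      set x := θ * (1 + 2 * θ * D) ^ j * (p ^ j * cnt n L (v ++ [c])) with hx
      have hc0 := cnt_nonneg n L (v ++ [c])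
      have hx0 : 0 ≤ x := by positivity
      have hxD : x ≤ 2 * θ * D := by
        have := h1 (v ++ [c]) (by simp; omega) (by simp; omega)
        have hl : n - (v ++ [c]).length = j := by simp; omega
        rw [hl] at this
        calc x ≤ θ * 2 * D := by
              rw [hx]
              gcongr
              exact hpow j (by omega)
          _ = _ := by ring
      calc p * (exp x - 1) ≤ p * (x * (1 + x)) := by
            gcongr; exact exp_sub_one_le hx0 (hxD.trans hθD1)
        _ ≤ p * (x * (1 + 2 * θ * D)) := by gcongr
        _ = _ := by rw [hx]; ring
  refine (main (n - k) le_rfl).trans ?_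
  have hnk : n - (n - k) = k := by omega
  rw [hnk]
  calc _ ≤ ∫⁻ ω, ENNReal.ofReal (exp 1) ∂P := by
        refine lintegral_mono fun ω => ENNReal.ofReal_le_ofReal (exp_le_exp.2 ?_)
        calc _ ≤ ∑ v ∈ wd d M k, (θ * (1 + 2 * θ * D) ^ (n - k) * (p ^ (n - k) * cnt n L v)) := by
              refine Finset.sum_le_sum fun v hv => mul_le_of_le_one_right ?_ (rr_le _ _ _)
              have := cnt_nonneg n L v
              positivity
          _ = θ * (1 + 2 * θ * D) ^ (n - k) * (p ^ (n - k) * cnt n L []) := by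
              rw [← Finset.mul_sum, ← Finset.mul_sum, cnt_level L hk]
          _ ≤ θ * 2 * D := by
              have := cnt_nonneg n L []
              gcongr
              exact hpow _ (by omega)
          _ ≤ 1 := by linarith
    _ = _ := by simp

open Classical in
lemma count_tail {d M : ℕ} {p : ℝ} (hp0 : 0 ≤ p) (hp1 : p ≤ 1) {P : Measure (PercSpace d M)}
    (hP : IsBernoulliPerc d M p P) {k n : ℕ} (hk : k ≤ n) (L : List (Alpha d M) → Prop)
    {D : ℝ} (hD : 0 < D)
    (h1 : ∀ v : List (Alpha d M), k ≤ v.length → v.length ≤ n → p ^ (n - v.length) * cnt n L v ≤ D)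
    (h2 : p ^ (n - k) * cnt n L [] ≤ D) (K : ℝ) :
    P {ω | K * (4 * D * ((n : ℝ) + 1)) ≤ ∑ w ∈ wd d M n, (if L w then 1 else 0) * rr k w ω} ≤
      ENNReal.ofReal (exp (1 - K)) := by
  have hm : Measurable fun ω => ENNReal.ofReal (exp (∑ w ∈ wd d M n,
      1 / (4 * D * ((n : ℝ) + 1)) * cnt n L w * rr k w ω)) := by
    have : ∀ w, Measurable (rr (d := d) (M := M) k w) := fun w => meas_rr k w
    fun_prop
  have hmk := mul_meas_ge_le_lintegral (μ := P) hm (ENNReal.ofReal (exp K))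
  have h3 := hmk.trans (tree_bound hp0 hp1 hP hk L hD h1 h2 rfl)
  have hsub : {ω | K * (4 * D * ((n : ℝ) + 1)) ≤ ∑ w ∈ wd d M n, (if L w then 1 else 0) * rr k w ω}
      ⊆ {ω | ENNReal.ofReal (exp K) ≤ ENNReal.ofReal (exp (∑ w ∈ wd d M n,
      1 / (4 * D * ((n : ℝ) + 1)) * cnt n L w * rr k w ω))} := by
    intro ω hω
    simp only [Set.mem_ofPred_eq] at hω ⊢
    apply ENNReal.ofReal_le_ofReal
    apply exp_le_exp.2
    have : ∑ w ∈ wd d M n, 1 / (4 * D * ((n : ℝ) + 1)) * cnt n L w * rr k w ω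
        = (∑ w ∈ wd d M n, (if L w then 1 else 0) * rr k w ω) / (4 * D * ((n : ℝ) + 1)) := by
      rw [Finset.sum_div]
      refine Finset.sum_congr rfl fun w hw => ?_
      rw [cnt_self L hw]; ring
    rw [this, le_div_iff₀ (by positivity)]
    exact hω
  refine (measure_mono hsub).trans ?_
  have hpos : ENNReal.ofReal (exp K) ≠ 0 := by simp [exp_pos]
  rw [sub_eq_add_neg, exp_add, exp_neg, ENNReal.ofReal_mul (exp_pos _).le,
    ENNReal.ofReal_inv_of_pos (exp_pos _), ← div_eq_mul_inv]
  rw [ENNReal.le_div_iff_mul_le (Or.inl hpos) (Or.inl ENNReal.ofReal_ne_top), mul_comm]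
  exact h3

lemma exp_le_quad {x : ℝ} (h : |x| ≤ 1) : exp x ≤ 1 + x + x ^ 2 := by
  have := (abs_le.1 (Real.abs_exp_sub_one_sub_id_le h)).2
  linarith

/-- centered normalised label -/
def xi (p : ℝ) (b : Bool) : ℝ := (if b = true then 1 else 0) / p - 1

lemma xi_mgf {p : ℝ} (hp0 : 0 < p) (hp1 : p ≤ 1) {x : ℝ} (hx : |x| ≤ p) :
    p * exp (x * xi p true) + (1 - p) * exp (x * xi p false) ≤ exp (x ^ 2 / p ^ 2) := by
  have hq : 0 ≤ 1 / p - 1 := by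
    rw [sub_nonneg, le_div_iff₀ hp0]; linarith
  have ht : xi p true = 1 / p - 1 := by simp [xi]
  have hf : xi p false = -1 := by simp [xi]
  rw [ht, hf]
  have b1 : |x * (1 / p - 1)| ≤ 1 := by
    rw [abs_mul, abs_of_nonneg hq]
    calc |x| * (1 / p - 1) ≤ p * (1 / p - 1) := by gcongr
      _ = 1 - p := by field_simp
      _ ≤ 1 := by linarith
  have b2 : |x * -1| ≤ 1 := by
    rw [abs_mul]; simp; linarith
  have e1 := exp_le_quad b1
  have e2 := exp_le_quad b2
  have e3 := add_one_le_exp (x ^ 2 / p ^ 2)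
  have h1 : p * exp (x * (1 / p - 1)) ≤ p * (1 + x * (1 / p - 1) + (x * (1 / p - 1)) ^ 2) := by gcongr
  have h2 : (1 - p) * exp (x * -1) ≤ (1 - p) * (1 + x * -1 + (x * -1) ^ 2) := by
    have : 0 ≤ 1 - p := by linarith
    gcongr
  have h3 : p * (1 + x * (1 / p - 1) + (x * (1 / p - 1)) ^ 2)
      + (1 - p) * (1 + x * -1 + (x * -1) ^ 2) = 1 + x ^ 2 * (1 / p - 1) := by
    field_simp; ring
  have h4 : x ^ 2 * (1 / p - 1) ≤ x ^ 2 / p ^ 2 := by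
    rw [div_eq_mul_inv (x ^ 2)]
    refine mul_le_mul_of_nonneg_left ?_ (sq_nonneg x)
    have : 1 / p ≤ (p ^ 2)⁻¹ := by
      rw [one_div]
      apply inv_anti₀ (by positivity)
      nlinarith
    linarith
  linarith

lemma step_conc {d M : ℕ} {p : ℝ} (hp0 : 0 < p) (hp1 : p ≤ 1) {P : Measure (PercSpace d M)}
    (hP : IsBernoulliPerc d M p P) {ι : Type*} (I : Finset ι) (e : ι → Word d M)
    (he : Set.InjOn e I) (H : Set (PercSpace d M)) (hH : MeasurableSet H)
    (hHi : ∀ i ∈ I, ∀ b ω, Function.update ω (e i) b ∈ H ↔ ω ∈ H)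
    (c : ι → PercSpace d M → ℝ) (hcm : ∀ i, Measurable (c i))
    (hc : ∀ i ∈ I, ∀ j ∈ I, ∀ b ω, c j (Function.update ω (e i) b) = c j ω)
    {δ D s ε a : ℝ} (ha : |a| = 1)
    (h0 : ∀ ω ∈ H, ∀ i ∈ I, 0 ≤ c i ω) (h1 : ∀ ω ∈ H, ∀ i ∈ I, c i ω ≤ δ)
    (h2 : ∀ ω ∈ H, ∑ i ∈ I, c i ω ≤ D) (hs : 0 ≤ s) (hsδ : s * δ ≤ p) (hδ : 0 ≤ δ) :
    P (H ∩ {ω | ε ≤ a * ∑ i ∈ I, c i ω * xi p (ω (e i))}) ≤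
      ENNReal.ofReal (exp (- s * ε + s ^ 2 * δ * D / p ^ 2)) := by
  classical
  have := hP.1
  have key := prodsite hp0.le hp1 hP I e he (H.indicator 1) (measurable_one.indicator hH)
    (by
      intro i hi b ω
      by_cases h : ω ∈ H
      · rw [Set.indicator_of_mem h, Set.indicator_of_mem ((hHi i hi b ω).2 h)]; rfl
      · rw [Set.indicator_of_notMem h, Set.indicator_of_notMem (fun h' => h ((hHi i hi b ω).1 h'))])
    (fun i b ω => ENNReal.ofReal (exp ((s * a * c i ω) * xi p b)))
    (by intro i b; have := hcm i; fun_prop)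
    (by intro i hi j hj b b' ω; simp only [hc i hi j hj])
  have bd : ∫⁻ ω, H.indicator 1 ω * ∏ i ∈ I, ENNReal.ofReal (exp ((s * a * c i ω) * xi p (ω (e i)))) ∂P
      ≤ ENNReal.ofReal (exp (s ^ 2 * δ * D / p ^ 2)) := by
    rw [key]
    calc _ ≤ ∫⁻ ω, ENNReal.ofReal (exp (s ^ 2 * δ * D / p ^ 2)) ∂P := by
          refine lintegral_mono fun ω => ?_
          by_cases hω : ω ∈ H
          swap
          · simp [hω]
          rw [Set.indicator_of_mem hω]
          simp only [Pi.one_apply, one_mul]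
          calc _ ≤ ∏ i ∈ I, ENNReal.ofReal (exp ((s * a * c i ω) ^ 2 / p ^ 2)) := by
                refine Finset.prod_le_prod' fun i hi => ?_
                rw [← ENNReal.ofReal_mul hp0.le, ← ENNReal.ofReal_mul (by linarith),
                  ← ENNReal.ofReal_add (by positivity) (mul_nonneg (by linarith) (exp_pos _).le)]
                apply ENNReal.ofReal_le_ofReal
                apply xi_mgf hp0 hp1
                rw [abs_mul, abs_mul, ha, mul_one, abs_of_nonneg hs, abs_of_nonneg (h0 ω hω i hi)]
                exact (mul_le_mul_of_nonneg_left (h1 ω hω i hi) hs).trans hsδ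
            _ = ENNReal.ofReal (exp (∑ i ∈ I, (s * a * c i ω) ^ 2 / p ^ 2)) := by
                rw [← ENNReal.ofReal_prod_of_nonneg (fun _ _ => (exp_pos _).le), ← exp_sum]
            _ ≤ _ := by
                apply ENNReal.ofReal_le_ofReal
                apply exp_le_exp.2
                rw [← Finset.sum_div]
                gcongr
                have ha2 : a ^ 2 = 1 := by rw [← sq_abs, ha]; norm_num
                calc ∑ i ∈ I, (s * a * c i ω) ^ 2 = ∑ i ∈ I, s ^ 2 * (c i ω * c i ω) := by
                      refine Finset.sum_congr rfl fun i _ => ?_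
                      rw [mul_pow, mul_pow, ha2]; ring
                  _ ≤ ∑ i ∈ I, s ^ 2 * (δ * c i ω) := by
                      refine Finset.sum_le_sum fun i hi => ?_
                      have := h0 ω hω i hi
                      have := h1 ω hω i hi
                      gcongr
                  _ = s ^ 2 * δ * ∑ i ∈ I, c i ω := by rw [Finset.mul_sum]; congr 1; ext; ring
                  _ ≤ _ := by gcongr; exact h2 ω hω
      _ = _ := by simp
  have hm : Measurable fun ω => H.indicator 1 ω *
      ∏ i ∈ I, ENNReal.ofReal (exp ((s * a * c i ω) * xi p (ω (e i)))) := by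
    refine (measurable_one.indicator hH).mul (Finset.measurable_prod _ fun i _ => ?_)
    refine meas_lab (fun b ω => ENNReal.ofReal (exp ((s * a * c i ω) * xi p b))) ?_ (e i)
    intro b; have := hcm i; fun_prop
  have h3 := (mul_meas_ge_le_lintegral (μ := P) hm (ENNReal.ofReal (exp (s * ε)))).trans bd
  have hsub : H ∩ {ω | ε ≤ a * ∑ i ∈ I, c i ω * xi p (ω (e i))} ⊆
      {ω | ENNReal.ofReal (exp (s * ε)) ≤ H.indicator 1 ω *
      ∏ i ∈ I, ENNReal.ofReal (exp ((s * a * c i ω) * xi p (ω (e i))))} := by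
    rintro ω ⟨hω, hω2⟩
    simp only [Set.mem_ofPred_eq] at hω2 ⊢
    rw [Set.indicator_of_mem hω, Pi.one_apply, one_mul,
      ← ENNReal.ofReal_prod_of_nonneg (fun _ _ => (exp_pos _).le), ← exp_sum]
    apply ENNReal.ofReal_le_ofReal
    apply exp_le_exp.2
    have : ∑ i ∈ I, s * a * c i ω * xi p (ω (e i)) = s * (a * ∑ i ∈ I, c i ω * xi p (ω (e i))) := by
      rw [Finset.mul_sum, Finset.mul_sum]; congr 1; ext; ring
    rw [this]
    gcongr
  refine (measure_mono hsub).trans ?_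
  have hpos : ENNReal.ofReal (exp (s * ε)) ≠ 0 := by simp [exp_pos]
  rw [add_comm, neg_mul, exp_add, exp_neg, ENNReal.ofReal_mul (exp_pos _).le,
    ENNReal.ofReal_inv_of_pos (exp_pos _), ← div_eq_mul_inv]
  rw [ENNReal.le_div_iff_mul_le (Or.inl hpos) (Or.inl ENNReal.ofReal_ne_top), mul_comm]
  exact h3



/-- Properties of the family of weights on pairs of words. -/
structure LinkSys (d M : ℕ) (C : ℝ) (σ : ℝ → List (Alpha d M) → List (Alpha d M) → ℝ)
    (Left : List (Alpha d M) → Prop) : Prop where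
  nonneg : ∀ t w w', 0 ≤ σ t w w'
  add : ∀ n t, ∀ w ∈ wd d M n, ∀ w' ∈ wd d M n,
    σ t w w' = ∑ c, ∑ c', σ t (w ++ [c]) (w' ++ [c'])
  bound : ∀ n, ∀ t ∈ Icc (0:ℝ) 1, ∀ w ∈ wd d M n, ∀ w' ∈ wd d M n,
    σ t w w' ≤ C * (((M:ℝ) ^ (2 * d - 1))⁻¹) ^ n
  left : ∀ n, 3 ≤ n → ∀ t ∈ Icc (0:ℝ) 1, ∀ w ∈ wd d M n, ∀ w' ∈ wd d M n, 0 < σ t w w' →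
    Left w ∧ ¬ Left w'
  cntR : ∀ n, ∀ t ∈ Icc (0:ℝ) 1, ∀ w ∈ wd d M n, ∀ v : List (Alpha d M), v.length ≤ n →
    cnt n (fun w' => 0 < σ t w w') v ≤ C * ((M:ℝ) ^ (d - 1)) ^ (n - v.length)
  cntL : ∀ n, ∀ t ∈ Icc (0:ℝ) 1, ∀ w' ∈ wd d M n, ∀ v : List (Alpha d M), v.length ≤ n →
    cnt n (fun w => 0 < σ t w w') v ≤ C * ((M:ℝ) ^ (d - 1)) ^ (n - v.length)
  lip : ∀ n, ∀ t ∈ Icc (0:ℝ) 1, ∀ s ∈ Icc (0:ℝ) 1, ∀ w ∈ wd d M n, ∀ w' ∈ wd d M n,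
    |σ t w w' - σ s w w'| ≤ C * (M:ℝ) ^ n * |t - s|
  tot : ∀ t ∈ Icc (0:ℝ) 1, σ t [] [] = 1

/-- the martingale -/
def YY {d M : ℕ} (σ : ℝ → List (Alpha d M) → List (Alpha d M) → ℝ) (p : ℝ) (k n : ℕ) (t : ℝ)
    (ω : PercSpace d M) : ℝ :=
  ((p⁻¹) ^ 2) ^ (n - k) * ∑ w ∈ wd d M n, ∑ w' ∈ wd d M n, σ t w w' * rr k w ω * rr k w' ω

def cA {d M : ℕ} (σ : ℝ → List (Alpha d M) → List (Alpha d M) → ℝ) (p : ℝ) (k n : ℕ) (t : ℝ)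
    (x : List (Alpha d M) × Alpha d M) (ω : PercSpace d M) : ℝ :=
  ((p⁻¹) ^ 2) ^ (n - k) * p⁻¹ * (rr k x.1 ω *
    ∑ w' ∈ wd d M (n + 1), σ t (x.1 ++ [x.2]) w' * rr k w' ω)

def cB {d M : ℕ} (σ : ℝ → List (Alpha d M) → List (Alpha d M) → ℝ) (p : ℝ) (k n : ℕ) (t : ℝ)
    (x : List (Alpha d M) × Alpha d M) (ω : PercSpace d M) : ℝ :=
  ((p⁻¹) ^ 2) ^ (n - k) * (rr k x.1 ω *
    ∑ w ∈ wd d M n, ∑ c, σ t (w ++ [c]) (x.1 ++ [x.2]) * rr k w ω)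

/-- pairs -/
def pr (d M n : ℕ) : Finset (List (Alpha d M) × Alpha d M) := wd d M n ×ˢ Finset.univ

section
variable {d M : ℕ} {σ : ℝ → List (Alpha d M) → List (Alpha d M) → ℝ} {p : ℝ} {k n : ℕ} {t : ℝ}

lemma sum_pr (F : List (Alpha d M) → ℝ) :
    ∑ x ∈ pr d M n, F (x.1 ++ [x.2]) = ∑ w ∈ wd d M (n + 1), F w := by
  rw [sum_wd_succ, pr, Finset.sum_product]

lemma YY_succ_eq (hk : k ≤ n) (ω : PercSpace d M) : YY σ p k (n + 1) t ω =
    ∑ x ∈ pr d M n, cA σ p k n t x ω * ((if ω (sn x.1 x.2) = true then 1 else 0) / p) := by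
  unfold YY cA
  rw [← sum_pr, Finset.mul_sum]
  refine Finset.sum_congr rfl fun x hx => ?_
  simp only [pr, Finset.mem_product, mem_wd] at hx
  have e : n + 1 - k = (n - k) + 1 := by omega
  rw [rr_snoc (by omega), e, pow_succ]
  have : ∀ w', σ t (x.1 ++ [x.2]) w' * (rr k x.1 ω * if ω (sn x.1 x.2) = true then 1 else 0) * rr k w' ω
      = (rr k x.1 ω * if ω (sn x.1 x.2) = true then 1 else 0) * (σ t (x.1 ++ [x.2]) w' * rr k w' ω) := by
    intro w'; ring
  simp_rw [this]
  rw [← Finset.mul_sum]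
  ring

lemma sum_cA_eq (hk : k ≤ n) (ω : PercSpace d M) : ∑ x ∈ pr d M n, cA σ p k n t x ω =
    ∑ x ∈ pr d M n, cB σ p k n t x ω * ((if ω (sn x.1 x.2) = true then 1 else 0) / p) := by
  unfold cA cB
  have h1 : ∀ x ∈ pr d M n, ((p⁻¹) ^ 2) ^ (n - k) * (rr k x.1 ω *
      ∑ w ∈ wd d M n, ∑ c, σ t (w ++ [c]) (x.1 ++ [x.2]) * rr k w ω) *
      ((if ω (sn x.1 x.2) = true then 1 else 0) / p) =
      ∑ y ∈ pr d M n, ((p⁻¹) ^ 2) ^ (n - k) * p⁻¹ * (rr k y.1 ω * (σ t (y.1 ++ [y.2]) (x.1 ++ [x.2])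
        * rr k (x.1 ++ [x.2]) ω)) := by
    intro x hx
    simp only [pr, Finset.mem_product, mem_wd] at hx
    have : ∑ w ∈ wd d M n, ∑ c, σ t (w ++ [c]) (x.1 ++ [x.2]) * rr k w ω
      = ∑ y ∈ pr d M n, σ t (y.1 ++ [y.2]) (x.1 ++ [x.2]) * rr k y.1 ω := by
      rw [pr, Finset.sum_product]
    rw [this, Finset.mul_sum, Finset.mul_sum, Finset.sum_mul]
    refine Finset.sum_congr rfl fun y hy => ?_
    rw [rr_snoc (by omega)]
    ring
  rw [Finset.sum_congr rfl h1, Finset.sum_comm]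
  refine Finset.sum_congr rfl fun y hy => ?_
  rw [← sum_pr, Finset.mul_sum, Finset.mul_sum]

lemma sum_cB_eq {C : ℝ} {Left} (hσ : LinkSys d M C σ Left) (ω : PercSpace d M) :
    ∑ x ∈ pr d M n, cB σ p k n t x ω = YY σ p k n t ω := by
  unfold cB YY
  rw [← Finset.mul_sum, pr, Finset.sum_product]
  congr 1
  rw [Finset.sum_comm' (t' := wd d M n) (s' := fun _ => wd d M n) (by simp [and_comm])]
  refine Finset.sum_congr rfl fun v hv => ?_
  simp_rw [Finset.mul_sum]
  rw [Finset.sum_comm]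
  refine Finset.sum_congr rfl fun w hw => ?_
  rw [hσ.add n t w hw v hv, Finset.sum_comm]
  simp only [Finset.sum_mul]
  refine Finset.sum_congr rfl fun _ _ => Finset.sum_congr rfl fun _ _ => ?_
  ring

lemma incA (hk : k ≤ n) (ω : PercSpace d M) : YY σ p k (n + 1) t ω - ∑ x ∈ pr d M n, cA σ p k n t x ω =
    ∑ x ∈ pr d M n, cA σ p k n t x ω * xi p (ω (sn x.1 x.2)) := by
  rw [YY_succ_eq hk, ← Finset.sum_sub_distrib]
  refine Finset.sum_congr rfl fun x _ => ?_
  unfold xi; ring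

lemma incB {C : ℝ} {Left} (hσ : LinkSys d M C σ Left) (hk : k ≤ n) (ω : PercSpace d M) :
    ∑ x ∈ pr d M n, cA σ p k n t x ω - YY σ p k n t ω =
    ∑ x ∈ pr d M n, cB σ p k n t x ω * xi p (ω (sn x.1 x.2)) := by
  rw [sum_cA_eq hk, ← sum_cB_eq hσ, ← Finset.sum_sub_distrib]
  refine Finset.sum_congr rfl fun x _ => ?_
  unfold xi; ring

open Classical in
/-- number of retained right words linked to `w` -/
def nR (σ : ℝ → List (Alpha d M) → List (Alpha d M) → ℝ) (k n : ℕ) (t : ℝ)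
    (w : List (Alpha d M)) (ω : PercSpace d M) : ℝ :=
  ∑ w' ∈ wd d M n, (if 0 < σ t w w' then 1 else 0) * rr k w' ω

open Classical in
/-- number of retained left words linked to `w'` -/
def nL (σ : ℝ → List (Alpha d M) → List (Alpha d M) → ℝ) (k n : ℕ) (t : ℝ)
    (w' : List (Alpha d M)) (ω : PercSpace d M) : ℝ :=
  ∑ w ∈ wd d M n, (if 0 < σ t w w' then 1 else 0) * rr k w ω

/-- good set -/
def HH (σ : ℝ → List (Alpha d M) → List (Alpha d M) → ℝ) (p : ℝ) (k n : ℕ) (t B : ℝ) :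
    Set (PercSpace d M) :=
  {ω | YY σ p k n t ω ≤ 2 ∧ ∀ w ∈ wd d M n, nR σ k n t w ω ≤ B ∧ nL σ k n t w ω ≤ B}

lemma meas_YY : Measurable (YY σ p k n t) := by
  unfold YY
  have : ∀ w, Measurable (rr (d := d) (M := M) k w) := fun w => meas_rr k w
  fun_prop

lemma meas_nR (w) : Measurable (nR σ k n t w) := by
  unfold nR
  have : ∀ w, Measurable (rr (d := d) (M := M) k w) := fun w => meas_rr k w
  fun_prop

lemma meas_nL (w) : Measurable (nL σ k n t w) := by
  unfold nL
  have : ∀ w, Measurable (rr (d := d) (M := M) k w) := fun w => meas_rr k w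
  fun_prop

lemma meas_cA (x) : Measurable (cA σ p k n t x) := by
  unfold cA
  have : ∀ w, Measurable (rr (d := d) (M := M) k w) := fun w => meas_rr k w
  fun_prop

lemma meas_cB (x) : Measurable (cB σ p k n t x) := by
  unfold cB
  have : ∀ w, Measurable (rr (d := d) (M := M) k w) := fun w => meas_rr k w
  fun_prop

lemma meas_HH (B : ℝ) : MeasurableSet (HH σ p k n t B) := by
  unfold HH
  have : {ω : PercSpace d M | YY σ p k n t ω ≤ 2 ∧ ∀ w ∈ wd d M n, nR σ k n t w ω ≤ B ∧ nL σ k n t w ω ≤ B}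
      = {ω | YY σ p k n t ω ≤ 2} ∩ ⋂ w ∈ wd d M n, ({ω | nR σ k n t w ω ≤ B} ∩ {ω | nL σ k n t w ω ≤ B}) := by
    ext ω; simp
  rw [this]
  refine (measurableSet_le meas_YY measurable_const).inter (Finset.measurableSet_biInter _ fun w _ => ?_)
  exact (measurableSet_le (meas_nR w) measurable_const).inter
    (measurableSet_le (meas_nL w) measurable_const)

lemma rr_upd_lev {ω : PercSpace d M} {w : List (Alpha d M)} {x : List (Alpha d M) × Alpha d M}
    {b : Bool} (hx : x ∈ pr d M n) (hw : w ∈ wd d M n) :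
    rr k w (Function.update ω (sn x.1 x.2) b) = rr k w ω := by
  simp only [pr, Finset.mem_product, mem_wd] at hx
  rw [mem_wd] at hw
  apply rr_upd_len
  · simp [sn]; omega
  · intro h
    have := congrArg List.length h
    simp [sn] at this
    omega

lemma HH_upd {B : ℝ} {ω : PercSpace d M} {x : List (Alpha d M) × Alpha d M}
    {b : Bool} (hx : x ∈ pr d M n) :
    Function.update ω (sn x.1 x.2) b ∈ HH σ p k n t B ↔ ω ∈ HH σ p k n t B := by
  have h1 : YY σ p k n t (Function.update ω (sn x.1 x.2) b) = YY σ p k n t ω := by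
    unfold YY
    congr 1
    refine Finset.sum_congr rfl fun w hw => Finset.sum_congr rfl fun w' hw' => ?_
    rw [rr_upd_lev hx hw, rr_upd_lev hx hw']
  have h2 : ∀ w, nR σ k n t w (Function.update ω (sn x.1 x.2) b) = nR σ k n t w ω := by
    intro w
    unfold nR
    refine Finset.sum_congr rfl fun w hw => ?_
    rw [rr_upd_lev hx hw]
  have h3 : ∀ w, nL σ k n t w (Function.update ω (sn x.1 x.2) b) = nL σ k n t w ω := by
    intro w
    unfold nL
    refine Finset.sum_congr rfl fun w hw => ?_
    rw [rr_upd_lev hx hw]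
  simp only [HH, Set.mem_ofPred_eq, h1, h2, h3]

lemma link_parent {C : ℝ} {Left} (hσ : LinkSys d M C σ Left) {v v' : List (Alpha d M)}
    (hv : v ∈ wd d M n) (hv' : v' ∈ wd d M n) (c c' : Alpha d M)
    (h : 0 < σ t (v ++ [c]) (v' ++ [c'])) : 0 < σ t v v' := by
  rw [hσ.add n t v hv v' hv']
  refine Finset.sum_pos' (fun _ _ => Finset.sum_nonneg fun _ _ => hσ.nonneg _ _ _) ⟨c, by simp, ?_⟩
  exact Finset.sum_pos' (fun _ _ => hσ.nonneg _ _ _) ⟨c', by simp, h⟩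

lemma snoc_mem {v : List (Alpha d M)} (hv : v ∈ wd d M n) (c : Alpha d M) :
    v ++ [c] ∈ wd d M (n + 1) := by
  rw [mem_wd] at *; simp [hv]

lemma cA_nonneg {C : ℝ} {Left} (hσ : LinkSys d M C σ Left) (hp : 0 < p) (x) (ω) :
    0 ≤ cA σ p k n t x ω := by
  unfold cA
  have := rr_nonneg k x.1 ω
  have : 0 ≤ ∑ w' ∈ wd d M (n + 1), σ t (x.1 ++ [x.2]) w' * rr k w' ω :=
    Finset.sum_nonneg fun w _ => mul_nonneg (hσ.nonneg _ _ _) (rr_nonneg _ _ _)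
  positivity

lemma cB_nonneg {C : ℝ} {Left} (hσ : LinkSys d M C σ Left) (hp : 0 < p) (x) (ω) :
    0 ≤ cB σ p k n t x ω := by
  unfold cB
  have := rr_nonneg k x.1 ω
  have : 0 ≤ ∑ w ∈ wd d M n, ∑ c, σ t (w ++ [c]) (x.1 ++ [x.2]) * rr k w ω :=
    Finset.sum_nonneg fun w _ => Finset.sum_nonneg fun _ _ =>
      mul_nonneg (hσ.nonneg _ _ _) (rr_nonneg _ _ _)
  positivity

open Classical in
lemma sigma_le {C : ℝ} {Left} (hC : 0 ≤ C) (hσ : LinkSys d M C σ Left) (ht : t ∈ Icc (0:ℝ) 1)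
    {v v' : List (Alpha d M)}
    (hv : v ∈ wd d M n) (hv' : v' ∈ wd d M n) (c c' : Alpha d M) :
    σ t (v ++ [c]) (v' ++ [c']) ≤ C * (((M:ℝ) ^ (2 * d - 1))⁻¹) ^ (n + 1) *
      (if 0 < σ t v v' then 1 else 0) := by
  by_cases h : 0 < σ t (v ++ [c]) (v' ++ [c'])
  · rw [if_pos (link_parent hσ hv hv' c c' h), mul_one]
    exact hσ.bound (n + 1) t ht _ (snoc_mem hv c) _ (snoc_mem hv' c')
  · refine (not_lt.1 h).trans ?_
    split_ifs <;> positivity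

lemma cA_le {C : ℝ} {Left} (hC : 0 ≤ C) (hσ : LinkSys d M C σ Left) (hp : 0 < p)
    (ht : t ∈ Icc (0:ℝ) 1) {B : ℝ} {ω} (hω : ω ∈ HH σ p k n t B) {x} (hx : x ∈ pr d M n) :
    cA σ p k n t x ω ≤ ((p⁻¹) ^ 2) ^ (n - k) * p⁻¹ *
      (C * (((M:ℝ) ^ (2 * d - 1))⁻¹) ^ (n + 1) * (M ^ d * B)) := by
  classical
  have hx' := hx
  simp only [pr, Finset.mem_product] at hx
  have hB := (hω.2 x.1 hx.1).1
  unfold cA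
  have hs0 : 0 ≤ ∑ w' ∈ wd d M (n + 1), σ t (x.1 ++ [x.2]) w' * rr k w' ω :=
    Finset.sum_nonneg fun w _ => mul_nonneg (hσ.nonneg _ _ _) (rr_nonneg _ _ _)
  have hp' : 0 ≤ ((p⁻¹) ^ 2) ^ (n - k) * p⁻¹ := by positivity
  refine mul_le_mul_of_nonneg_left ?_ hp'
  calc rr k x.1 ω * ∑ w' ∈ wd d M (n + 1), σ t (x.1 ++ [x.2]) w' * rr k w' ω
      ≤ ∑ w' ∈ wd d M (n + 1), σ t (x.1 ++ [x.2]) w' * rr k w' ω :=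
        mul_le_of_le_one_left hs0 (rr_le _ _ _)
    _ = ∑ v' ∈ wd d M n, ∑ c', σ t (x.1 ++ [x.2]) (v' ++ [c']) * rr k (v' ++ [c']) ω := sum_wd_succ _ _
    _ ≤ ∑ v' ∈ wd d M n, ∑ c' : Alpha d M, C * (((M:ℝ) ^ (2 * d - 1))⁻¹) ^ (n + 1) *
        (if 0 < σ t x.1 v' then 1 else 0) * rr k v' ω := by
        refine Finset.sum_le_sum fun v' hv' => Finset.sum_le_sum fun c' _ => ?_
        have h1 := sigma_le hC hσ ht hx.1 hv' x.2 c'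
        have h2 := rr_mono (k := k) (ω := ω) (List.prefix_append v' [c'])
        exact mul_le_mul h1 h2 (rr_nonneg _ _ _) ((hσ.nonneg _ _ _).trans h1)
    _ = C * (((M:ℝ) ^ (2 * d - 1))⁻¹) ^ (n + 1) * (M ^ d * nR σ k n t x.1 ω) := by
        unfold nR
        simp only [Finset.sum_const, Finset.card_univ, Fintype.card_pi, Fintype.card_fin,
          Finset.prod_const, nsmul_eq_mul, Finset.mul_sum]
        refine Finset.sum_congr rfl fun _ _ => ?_
        push_cast; ring
    _ ≤ _ := by gcongr

lemma cB_le {C : ℝ} {Left} (hC : 0 ≤ C) (hσ : LinkSys d M C σ Left) (hp : 0 < p) (hp1 : p ≤ 1)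
    (ht : t ∈ Icc (0:ℝ) 1) {B : ℝ} (hB0 : 0 ≤ B) {ω} (hω : ω ∈ HH σ p k n t B) {x} (hx : x ∈ pr d M n) :
    cB σ p k n t x ω ≤ ((p⁻¹) ^ 2) ^ (n - k) * p⁻¹ *
      (C * (((M:ℝ) ^ (2 * d - 1))⁻¹) ^ (n + 1) * (M ^ d * B)) := by
  classical
  have hx' := hx
  simp only [pr, Finset.mem_product] at hx
  have hB := (hω.2 x.1 hx.1).2
  unfold cB
  have hs0 : 0 ≤ ∑ w ∈ wd d M n, ∑ c, σ t (w ++ [c]) (x.1 ++ [x.2]) * rr k w ω :=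
    Finset.sum_nonneg fun w _ => Finset.sum_nonneg fun _ _ =>
      mul_nonneg (hσ.nonneg _ _ _) (rr_nonneg _ _ _)
  have hp' : 0 ≤ ((p⁻¹) ^ 2) ^ (n - k) := by positivity
  rw [mul_assoc]
  refine mul_le_mul_of_nonneg_left ?_ hp'
  calc rr k x.1 ω * ∑ w ∈ wd d M n, ∑ c, σ t (w ++ [c]) (x.1 ++ [x.2]) * rr k w ω
      ≤ ∑ w ∈ wd d M n, ∑ c, σ t (w ++ [c]) (x.1 ++ [x.2]) * rr k w ω :=
        mul_le_of_le_one_left hs0 (rr_le _ _ _)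
    _ ≤ ∑ v' ∈ wd d M n, ∑ c' : Alpha d M, C * (((M:ℝ) ^ (2 * d - 1))⁻¹) ^ (n + 1) *
        (if 0 < σ t v' x.1 then 1 else 0) * rr k v' ω := by
        refine Finset.sum_le_sum fun v' hv' => Finset.sum_le_sum fun c' _ => ?_
        have h1 := sigma_le hC hσ ht hv' hx.1 c' x.2
        exact mul_le_mul_of_nonneg_right h1 (rr_nonneg _ _ _)
    _ = C * (((M:ℝ) ^ (2 * d - 1))⁻¹) ^ (n + 1) * (M ^ d * nL σ k n t x.1 ω) := by
        unfold nL
        simp only [Finset.sum_const, Finset.card_univ, Fintype.card_pi, Fintype.card_fin,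
          Finset.prod_const, nsmul_eq_mul, Finset.mul_sum]
        refine Finset.sum_congr rfl fun _ _ => ?_
        push_cast; ring
    _ ≤ C * (((M:ℝ) ^ (2 * d - 1))⁻¹) ^ (n + 1) * (M ^ d * B) := by gcongr
    _ ≤ _ := by
        refine le_mul_of_one_le_left (by positivity) ?_
        exact (one_le_inv₀ hp).2 hp1

lemma sum_cA_le {C : ℝ} {Left} (hσ : LinkSys d M C σ Left) (hp : 0 < p) (hk : k ≤ n) (ω : PercSpace d M) :
    ∑ x ∈ pr d M n, cA σ p k n t x ω ≤ p⁻¹ * YY σ p k n t ω := by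
  rw [sum_cA_eq hk, ← sum_cB_eq hσ, Finset.mul_sum]
  refine Finset.sum_le_sum fun x _ => ?_
  rw [mul_comm]
  refine mul_le_mul_of_nonneg_right ?_ (cB_nonneg hσ hp _ _)
  split_ifs
  · simp
  · simp [hp.le]

lemma YY_nonneg {C : ℝ} {Left} (hσ : LinkSys d M C σ Left) (ω : PercSpace d M) :
    0 ≤ YY σ p k n t ω := by
  unfold YY
  refine mul_nonneg (by positivity) (Finset.sum_nonneg fun _ _ => Finset.sum_nonneg fun _ _ => ?_)
  exact mul_nonneg (mul_nonneg (hσ.nonneg _ _ _) (rr_nonneg _ _ _)) (rr_nonneg _ _ _)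

end

section
variable {d M : ℕ} {σ : ℝ → List (Alpha d M) → List (Alpha d M) → ℝ} {p : ℝ} {k n : ℕ} {t : ℝ}

lemma sn_injOn : Set.InjOn (fun x : List (Alpha d M) × Alpha d M => sn x.1 x.2)
    (pr d M n : Set (List (Alpha d M) × Alpha d M)) := by
  intro x hx y hy h
  have h' : x.1 ++ [x.2] = y.1 ++ [y.2] := congrArg Subtype.val h
  have := List.append_inj' h' rfl
  exact Prod.ext this.1 (by simpa using this.2)

lemma cA_zero {C : ℝ} {Left : List (Alpha d M) → Prop} (hσ : LinkSys d M C σ Left)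
    (ht : t ∈ Icc (0:ℝ) 1) (hn : 3 ≤ n + 1) {x} (hx : x ∈ pr d M n)
    (hL : ¬ Left (x.1 ++ [x.2])) (ω) : cA σ p k n t x ω = 0 := by
  unfold cA
  simp only [pr, Finset.mem_product] at hx
  rw [Finset.sum_eq_zero, mul_zero, mul_zero]
  intro w' hw'
  have : σ t (x.1 ++ [x.2]) w' = 0 := by
    refine le_antisymm (not_lt.1 fun h => hL ?_) (hσ.nonneg _ _ _)
    exact (hσ.left (n+1) hn t ht _ (snoc_mem hx.1 _) w' hw' h).1
  rw [this, zero_mul]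

lemma stepA {C : ℝ} {Left : List (Alpha d M) → Prop} (hC : 0 ≤ C) (hσ : LinkSys d M C σ Left)
    (hp0 : 0 < p) (hp1 : p ≤ 1) {P : Measure (PercSpace d M)}
    (hP : IsBernoulliPerc d M p P) (hk : k ≤ n) (hn : 3 ≤ n + 1) (ht : t ∈ Icc (0:ℝ) 1)
    {B δ s ε a : ℝ} (ha : |a| = 1)
    (hδ : ((p⁻¹) ^ 2) ^ (n - k) * p⁻¹ * (C * (((M:ℝ) ^ (2 * d - 1))⁻¹) ^ (n + 1) * (M ^ d * B)) ≤ δ)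
    (hδ0 : 0 ≤ δ) (hs : 0 ≤ s) (hsδ : s * δ ≤ p) :
    P (HH σ p k n t B ∩ {ω | ε ≤ a * (YY σ p k (n + 1) t ω - ∑ x ∈ pr d M n, cA σ p k n t x ω)}) ≤
      ENNReal.ofReal (exp (- s * ε + s ^ 2 * δ * (2 / p) / p ^ 2)) := by
  classical
  have key := step_conc hp0 hp1 hP ((pr d M n).filter fun x => Left (x.1 ++ [x.2]))
    (fun x => sn x.1 x.2) ((sn_injOn (n := n)).mono (by intro x hx; exact Finset.mem_coe.2 (Finset.mem_filter.1 (Finset.mem_coe.1 hx)).1)) (HH σ p k n t B) (meas_HH B)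
    (fun i hi b ω => HH_upd (Finset.mem_filter.1 hi).1) (cA σ p k n t) meas_cA
    (by
      intro x hx y hy b ω
      rw [Finset.mem_filter] at hx hy
      unfold cA
      have hy1 := hy.1
      simp only [pr, Finset.mem_product] at hy1
      rw [rr_upd_lev hx.1 hy1.1]
      congr 2
      refine Finset.sum_congr rfl fun w' hw' => ?_
      by_cases h : 0 < σ t (y.1 ++ [y.2]) w'
      · congr 1
        have hx1 := hx.1
        simp only [pr, Finset.mem_product, mem_wd] at hx1
        apply rr_upd_len
        · rw [mem_wd] at hw'
          simp [sn]; omega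
        · rintro h1
          have := (hσ.left (n+1) hn t ht _ (snoc_mem hy1.1 _) w' hw' h).2
          rw [← h1] at this
          exact this hx.2
      · have : σ t (y.1 ++ [y.2]) w' = 0 := le_antisymm (not_lt.1 h) (hσ.nonneg _ _ _)
        rw [this, zero_mul, zero_mul])
    (δ := δ) (D := 2 / p) (s := s) (ε := ε) (a := a) ha
    (fun ω _ i _ => cA_nonneg hσ hp0 i ω)
    (fun ω hω i hi => (cA_le hC hσ hp0 ht hω (Finset.mem_filter.1 hi).1).trans hδ)
    (by
      intro ω hω
      calc _ ≤ ∑ x ∈ pr d M n, cA σ p k n t x ω :=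
            Finset.sum_le_sum_of_subset_of_nonneg (Finset.filter_subset _ _)
              fun _ _ _ => cA_nonneg hσ hp0 _ _
        _ ≤ p⁻¹ * YY σ p k n t ω := sum_cA_le hσ hp0 hk ω
        _ ≤ p⁻¹ * 2 := by
            have := hω.1
            gcongr
        _ = 2 / p := by ring)
    hs hsδ hδ0
  refine le_trans (le_of_eq ?_) key
  congr 2
  ext ω
  simp only [Set.mem_ofPred_eq]
  rw [incA hk, Finset.sum_filter]
  have : ∀ x ∈ pr d M n, cA σ p k n t x ω * xi p (ω (sn x.1 x.2)) =
      if Left (x.1 ++ [x.2]) then cA σ p k n t x ω * xi p (ω (sn x.1 x.2)) else 0 := by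
    intro x hx
    split_ifs with h
    · rfl
    · rw [cA_zero hσ ht hn hx h, zero_mul]
  rw [Finset.sum_congr rfl this]

lemma stepB {C : ℝ} {Left : List (Alpha d M) → Prop} (hC : 0 ≤ C) (hσ : LinkSys d M C σ Left)
    (hp0 : 0 < p) (hp1 : p ≤ 1) {P : Measure (PercSpace d M)}
    (hP : IsBernoulliPerc d M p P) (hk : k ≤ n) (ht : t ∈ Icc (0:ℝ) 1)
    {B δ s ε a : ℝ} (hB : 0 ≤ B) (ha : |a| = 1)
    (hδ : ((p⁻¹) ^ 2) ^ (n - k) * p⁻¹ * (C * (((M:ℝ) ^ (2 * d - 1))⁻¹) ^ (n + 1) * (M ^ d * B)) ≤ δ)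
    (hδ0 : 0 ≤ δ) (hs : 0 ≤ s) (hsδ : s * δ ≤ p) :
    P (HH σ p k n t B ∩ {ω | ε ≤ a * (∑ x ∈ pr d M n, cA σ p k n t x ω - YY σ p k n t ω)}) ≤
      ENNReal.ofReal (exp (- s * ε + s ^ 2 * δ * (2 / p) / p ^ 2)) := by
  classical
  have key := step_conc hp0 hp1 hP (pr d M n)
    (fun x => sn x.1 x.2) sn_injOn (HH σ p k n t B) (meas_HH B)
    (fun i hi b ω => HH_upd hi) (cB σ p k n t) meas_cB
    (by
      intro x hx y hy b ω
      unfold cB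
      have hy1 := hy
      simp only [pr, Finset.mem_product] at hy1
      rw [rr_upd_lev hx hy1.1]
      congr 2
      refine Finset.sum_congr rfl fun w' hw' => Finset.sum_congr rfl fun c _ => ?_
      rw [rr_upd_lev hx hw'])
    (δ := δ) (D := 2 / p) (s := s) (ε := ε) (a := a) ha
    (fun ω _ i _ => cB_nonneg hσ hp0 i ω)
    (fun ω hω i hi => (cB_le hC hσ hp0 hp1 ht hB hω hi).trans hδ)
    (by
      intro ω hω
      rw [sum_cB_eq hσ]
      refine hω.1.trans ?_
      rw [le_div_iff₀ hp0]; linarith)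
    hs hsδ hδ0
  refine le_trans (le_of_eq ?_) key
  congr 2
  ext ω
  simp only [Set.mem_ofPred_eq]
  rw [incB hσ hk]

lemma core_step {C : ℝ} {Left : List (Alpha d M) → Prop} (hC : 0 ≤ C) (hσ : LinkSys d M C σ Left)
    (hp0 : 0 < p) (hp1 : p ≤ 1) {P : Measure (PercSpace d M)}
    (hP : IsBernoulliPerc d M p P) (hk : k ≤ n) (hn : 3 ≤ n + 1) (ht : t ∈ Icc (0:ℝ) 1)
    {B δ s ε : ℝ} (hB : 0 ≤ B)
    (hδ : ((p⁻¹) ^ 2) ^ (n - k) * p⁻¹ * (C * (((M:ℝ) ^ (2 * d - 1))⁻¹) ^ (n + 1) * (M ^ d * B)) ≤ δ)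
    (hδ0 : 0 ≤ δ) (hs : 0 ≤ s) (hsδ : s * δ ≤ p) :
    P (HH σ p k n t B ∩ {ω | 2 * ε ≤ |YY σ p k (n + 1) t ω - YY σ p k n t ω|}) ≤
      4 * ENNReal.ofReal (exp (- s * ε + s ^ 2 * δ * (2 / p) / p ^ 2)) := by
  have A1 := stepA (ε := ε) (a := 1) hC hσ hp0 hp1 hP hk hn ht (by simp) hδ hδ0 hs hsδ
  have A2 := stepA (ε := ε) (a := -1) hC hσ hp0 hp1 hP hk hn ht (by simp) hδ hδ0 hs hsδ
  have B1 := stepB (ε := ε) (a := 1) hC hσ hp0 hp1 hP hk ht hB (by simp) hδ hδ0 hs hsδ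
  have B2 := stepB (ε := ε) (a := -1) hC hσ hp0 hp1 hP hk ht hB (by simp) hδ hδ0 hs hsδ
  set e := ENNReal.ofReal (exp (- s * ε + s ^ 2 * δ * (2 / p) / p ^ 2))
  have h4 : 4 * e = (e + e) + (e + e) := by ring
  rw [h4]
  refine le_trans (measure_mono ?_) ((measure_union_le _ _).trans (add_le_add
    ((measure_union_le _ _).trans (add_le_add A1 A2)) ((measure_union_le _ _).trans (add_le_add B1 B2))))
  rintro ω ⟨hω, h⟩
  simp only [Set.mem_union, Set.mem_inter_iff, hω, true_and, Set.mem_ofPred_eq] at h ⊢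
  by_contra hcon
  push Not at hcon
  obtain ⟨⟨h1, h2⟩, h3, h4⟩ := hcon
  rcases abs_cases (YY σ p k (n + 1) t ω - YY σ p k n t ω) with ⟨h5, _⟩ | ⟨h5, _⟩ <;> linarith

lemma core_count {C : ℝ} {Left : List (Alpha d M) → Prop} (hσ : LinkSys d M C σ Left)
    (hp0 : 0 < p) (hp1 : p ≤ 1) {P : Measure (PercSpace d M)}
    (hP : IsBernoulliPerc d M p P) (hk : k ≤ n) (ht : t ∈ Icc (0:ℝ) 1) {D : ℝ} (hD : 0 < D)
    (h1 : ∀ v : List (Alpha d M), k ≤ v.length → v.length ≤ n →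
      p ^ (n - v.length) * (C * ((M:ℝ) ^ (d - 1)) ^ (n - v.length)) ≤ D)
    (h2 : p ^ (n - k) * (C * ((M:ℝ) ^ (d - 1)) ^ n) ≤ D) (K : ℝ) :
    P {ω | ¬ ∀ w ∈ wd d M n, nR σ k n t w ω ≤ K * (4 * D * ((n : ℝ) + 1)) ∧
        nL σ k n t w ω ≤ K * (4 * D * ((n : ℝ) + 1))} ≤
      2 * ((M:ℝ≥0∞) ^ d) ^ n * ENNReal.ofReal (exp (1 - K)) := by
  classical
  have hR : ∀ w ∈ wd d M n, P {ω | K * (4 * D * ((n : ℝ) + 1)) ≤ nR σ k n t w ω} ≤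
      ENNReal.ofReal (exp (1 - K)) := by
    intro w hw
    have := count_tail hp0.le hp1 hP hk (fun w' => 0 < σ t w w') hD
      (fun v hv1 hv2 => le_trans (mul_le_mul_of_nonneg_left (hσ.cntR n t ht w hw v hv2)
        (by positivity)) (h1 v hv1 hv2))
      (le_trans (mul_le_mul_of_nonneg_left (hσ.cntR n t ht w hw [] (by simp))
        (by positivity)) (by simpa using h2)) K
    unfold nR
    convert this
  have hL : ∀ w ∈ wd d M n, P {ω | K * (4 * D * ((n : ℝ) + 1)) ≤ nL σ k n t w ω} ≤
      ENNReal.ofReal (exp (1 - K)) := by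
    intro w hw
    have := count_tail hp0.le hp1 hP hk (fun w' => 0 < σ t w' w) hD
      (fun v hv1 hv2 => le_trans (mul_le_mul_of_nonneg_left (hσ.cntL n t ht w hw v hv2)
        (by positivity)) (h1 v hv1 hv2))
      (le_trans (mul_le_mul_of_nonneg_left (hσ.cntL n t ht w hw [] (by simp))
        (by positivity)) (by simpa using h2)) K
    unfold nL
    convert this
  calc P _ ≤ P (⋃ w ∈ wd d M n, ({ω | K * (4 * D * ((n : ℝ) + 1)) ≤ nR σ k n t w ω} ∪
        {ω | K * (4 * D * ((n : ℝ) + 1)) ≤ nL σ k n t w ω})) := by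
        refine measure_mono fun ω hω => ?_
        simp only [Set.mem_ofPred_eq] at hω
        push Not at hω
        obtain ⟨w, hw, h⟩ := hω
        simp only [Set.mem_iUnion, Set.mem_union, Set.mem_ofPred_eq]
        refine ⟨w, hw, ?_⟩
        by_cases h' : nR σ k n t w ω ≤ K * (4 * D * ((n : ℝ) + 1))
        · exact Or.inr (h h').le
        · exact Or.inl (not_le.1 h').le
    _ ≤ ∑ w ∈ wd d M n, P ({ω | K * (4 * D * ((n : ℝ) + 1)) ≤ nR σ k n t w ω} ∪
        {ω | K * (4 * D * ((n : ℝ) + 1)) ≤ nL σ k n t w ω}) := measure_biUnion_finset_le _ _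
    _ ≤ ∑ w ∈ wd d M n, (ENNReal.ofReal (exp (1 - K)) + ENNReal.ofReal (exp (1 - K))) :=
        Finset.sum_le_sum fun w hw => (measure_union_le _ _).trans (add_le_add (hR w hw) (hL w hw))
    _ = _ := by
        rw [Finset.sum_const, card_wd, nsmul_eq_mul]
        push_cast
        ring

lemma YY_init {C : ℝ} {Left : List (Alpha d M) → Prop} (hσ : LinkSys d M C σ Left)
    (ht : t ∈ Icc (0:ℝ) 1) (ω) : YY σ p k k t ω = 1 := by
  unfold YY
  have : ∀ w ∈ wd d M k, rr k w ω = 1 := fun w hw => by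
    unfold rr; rw [if_pos (ret_short (by rw [mem_wd.1 hw]))]
  have h2 : ∀ n, ∑ w ∈ wd d M n, ∑ w' ∈ wd d M n, σ t w w' = 1 := by
    intro n
    induction n with
    | zero => simpa [wd] using hσ.tot t ht
    | succ n ih =>
      rw [← ih, sum_wd_succ]
      refine Finset.sum_congr rfl fun w hw => ?_
      simp_rw [sum_wd_succ]
      rw [Finset.sum_comm]
      refine Finset.sum_congr rfl fun w' hw' => ?_
      rw [hσ.add n t w hw w' hw']
  rw [Nat.sub_self, pow_zero, one_mul, ← h2 k]
  refine Finset.sum_congr rfl fun w hw => Finset.sum_congr rfl fun w' hw' => ?_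
  rw [this w hw, this w' hw']; ring

lemma YY_lip {C : ℝ} {Left : List (Alpha d M) → Prop} (hσ : LinkSys d M C σ Left)
    (hp0 : 0 < p) (hp : ((M:ℝ) ^ d)⁻¹ ≤ p) (hM : 1 ≤ M) {s : ℝ}
    (ht : t ∈ Icc (0:ℝ) 1) (hs : s ∈ Icc (0:ℝ) 1) (ω) :
    |YY σ p k n t ω - YY σ p k n s ω| ≤ C * ((M:ℝ) ^ (4 * d + 1)) ^ n * |t - s| := by
  have hM' : (1:ℝ) ≤ M := by exact_mod_cast hM
  have hM0 : (0:ℝ) < M := by linarith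
  have h1 : (p⁻¹) ≤ (M:ℝ) ^ d := by
    rw [inv_le_comm₀ hp0 (by positivity)]; exact hp
  have h2 : ((p⁻¹) ^ 2) ^ (n - k) ≤ (((M:ℝ) ^ d) ^ 2) ^ n := by
    calc ((p⁻¹) ^ 2) ^ (n - k) ≤ (((M:ℝ) ^ d) ^ 2) ^ (n - k) := by gcongr
      _ ≤ _ := pow_le_pow_right₀ (one_le_pow₀ (one_le_pow₀ hM')) (by omega)
  unfold YY
  rw [← mul_sub, abs_mul, abs_of_nonneg (by positivity), ← Finset.sum_sub_distrib]
  have h3 : |∑ w ∈ wd d M n, (∑ w' ∈ wd d M n, σ t w w' * rr k w ω * rr k w' ω -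
      ∑ w' ∈ wd d M n, σ s w w' * rr k w ω * rr k w' ω)| ≤
      ∑ w ∈ wd d M n, ∑ w' ∈ wd d M n, C * (M:ℝ) ^ n * |t - s| := by
    refine (Finset.abs_sum_le_sum_abs _ _).trans (Finset.sum_le_sum fun w hw => ?_)
    rw [← Finset.sum_sub_distrib]
    refine (Finset.abs_sum_le_sum_abs _ _).trans (Finset.sum_le_sum fun w' hw' => ?_)
    have : σ t w w' * rr k w ω * rr k w' ω - σ s w w' * rr k w ω * rr k w' ω
      = (σ t w w' - σ s w w') * (rr k w ω * rr k w' ω) := by ring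
    rw [this, abs_mul]
    have h4 : |rr k w ω * rr k w' ω| ≤ 1 := by
      rcases rr_cases k w ω with h | h <;> rcases rr_cases k w' ω with h' | h' <;> simp [h, h']
    calc _ ≤ |σ t w w' - σ s w w'| * 1 := by gcongr
      _ ≤ _ := by rw [mul_one]; exact hσ.lip n t ht s hs w hw w' hw'
  simp only [Finset.sum_const, card_wd, nsmul_eq_mul] at h3
  calc _ ≤ (((M:ℝ) ^ d) ^ 2) ^ n * _ := mul_le_mul h2 h3 (abs_nonneg _) (by positivity)
    _ = C * ((M:ℝ) ^ (4 * d + 1)) ^ n * |t - s| := by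
      push_cast
      simp only [← pow_mul]
      ring
end


lemma poly_geo {ρ : ℝ} (h0 : 0 < ρ) (h1 : ρ < 1) (c : ℝ) :
    Filter.Tendsto (fun n : ℕ => c * ((n:ℝ) + 1) ^ 2 * ρ ^ n) Filter.atTop (nhds 0) := by
  have h := tendsto_pow_const_mul_const_pow_of_abs_lt_one 2 (r := ρ) (by rwa [abs_of_pos h0])
  have h' := ((Filter.tendsto_add_atTop_iff_nat 1).2 h).const_mul (c / ρ)
  rw [mul_zero] at h'
  refine h'.congr fun n => ?_
  push_cast
  field_simp
  ring

lemma consts {κ c p R : ℝ} (hκ0 : 0 < κ) (hκ : κ < 1) (hp : 0 < p) (hR : 1 ≤ R) :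
    ∃ s ε : ℕ → ℝ, (∀ n, 0 ≤ s n) ∧ (∀ n, 0 ≤ ε n) ∧ Summable ε ∧
      (∀ᶠ n in Filter.atTop, s n * (c * ((n:ℝ) + 1) ^ 2 * κ ^ n) ≤ p) ∧
      Summable fun n : ℕ => R ^ n * exp (- s n * ε n +
        s n ^ 2 * (c * ((n:ℝ) + 1) ^ 2 * κ ^ n) * (2 / p) / p ^ 2) := by
  set ρ := κ ^ ((1:ℝ) / 8) with hρ
  have hρ0 : 0 < ρ := rpow_pos_of_pos hκ0 _
  have hρ1 : ρ < 1 := rpow_lt_one hκ0.le hκ (by norm_num)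
  have h8 : ρ ^ 8 = κ := by
    rw [hρ, ← Real.rpow_natCast, ← rpow_mul hκ0.le]; norm_num
  refine ⟨fun n => ((ρ ^ n)⁻¹) ^ 2, fun n => ρ ^ n, fun n => by positivity, fun n => by positivity,
    summable_geometric_of_lt_one hρ0.le hρ1, ?_, ?_⟩
  · have h6 := poly_geo (ρ := ρ ^ 6) (by positivity) (pow_lt_one₀ hρ0.le hρ1 (by norm_num)) c
    filter_upwards [h6.eventually (gt_mem_nhds hp)] with n hn
    have : ((ρ ^ n)⁻¹) ^ 2 * (c * ((n:ℝ) + 1) ^ 2 * κ ^ n) = c * ((n:ℝ) + 1) ^ 2 * (ρ ^ 6) ^ n := by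
      rw [← h8, ← pow_mul, ← pow_mul, mul_comm 8 n, mul_comm 6 n, pow_mul, pow_mul]
      field_simp
    rw [this]; exact hn.le
  · have h4 := poly_geo (ρ := ρ ^ 4) (by positivity) (pow_lt_one₀ hρ0.le hρ1 (by norm_num)) (c * (2 / p) / p ^ 2)
    obtain ⟨m, hm⟩ : ∃ m : ℕ, R * ρ ^ m < 1 / 2 := by
      obtain ⟨m, hm⟩ := exists_pow_lt_of_lt_one (x := 1 / 2 / R) (by positivity) hρ1
      refine ⟨m, ?_⟩
      rw [lt_div_iff₀ (by positivity)] at hm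
      linarith
    have hg : Summable fun n : ℕ => (m.factorial : ℝ) * exp 1 * (1 / 2 : ℝ) ^ n :=
      (summable_geometric_of_lt_one (by norm_num) (by norm_num)).mul_left _
    refine summable_of_isBigO_nat hg (Asymptotics.IsBigO.of_bound 1 ?_)
    filter_upwards [h4.eventually (gt_mem_nhds one_pos)] with n hn
    rw [norm_of_nonneg (by positivity), norm_of_nonneg (by positivity), one_mul]
    have e1 : -((ρ ^ n)⁻¹) ^ 2 * ρ ^ n = - (ρ ^ n)⁻¹ := by field_simp
    have e2 : (((ρ ^ n)⁻¹) ^ 2) ^ 2 * (c * ((n:ℝ) + 1) ^ 2 * κ ^ n) * (2 / p) / p ^ 2 =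
        c * (2 / p) / p ^ 2 * ((n:ℝ) + 1) ^ 2 * (ρ ^ 4) ^ n := by
      rw [← h8, ← pow_mul ρ 8, ← pow_mul ρ 4, mul_comm 8 n, mul_comm 4 n, pow_mul, pow_mul]
      field_simp
    rw [e1, e2, exp_add]
    have e3 : exp (-(ρ ^ n)⁻¹) ≤ m.factorial * (ρ ^ m) ^ n := by
      have := Real.pow_div_factorial_le_exp (x := (ρ ^ n)⁻¹) (by positivity) m
      rw [exp_neg, inv_le_comm₀ (exp_pos _) (by positivity)]
      refine le_trans (le_of_eq ?_) this
      rw [← pow_mul, mul_comm m n, pow_mul, inv_pow]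
      field_simp
    calc R ^ n * (exp (-(ρ ^ n)⁻¹) * exp (c * (2 / p) / p ^ 2 * ((n:ℝ) + 1) ^ 2 * (ρ ^ 4) ^ n))
        ≤ R ^ n * ((m.factorial * (ρ ^ m) ^ n) * exp 1) := by gcongr
      _ = m.factorial * exp 1 * (R * ρ ^ m) ^ n := by rw [mul_pow]; ring
      _ ≤ _ := by gcongr

lemma exp_MK {M : ℕ} (a : ℕ) : ((M:ℝ) ^ a) ≤ exp (M * a) := by
  rw [mul_comm, exp_nat_mul]
  gcongr
  linarith [add_one_le_exp (M:ℝ)]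

section
variable {d M : ℕ} {σ : ℝ → List (Alpha d M) → List (Alpha d M) → ℝ} {p : ℝ} {k n : ℕ} {t : ℝ}

/-- one-step estimate with `k`-free constants -/
lemma core_uniform {C : ℝ} {Left : List (Alpha d M) → Prop} (hC : 0 < C) (hσ : LinkSys d M C σ Left)
    (hd : 1 ≤ d) (hM : 2 ≤ M) (hp0 : 0 < p) (hp1 : p ≤ 1) (hlam : 1 < p ^ 2 * (M:ℝ) ^ (2 * d - 1))
    {P : Measure (PercSpace d M)} (hP : IsBernoulliPerc d M p P) :
    ∃ κ c : ℝ, 0 < κ ∧ κ < 1 ∧ 0 ≤ c ∧ ∀ k n : ℕ, k ≤ n → 3 ≤ n + 1 → ∀ t ∈ Icc (0:ℝ) 1, ∀ s ε : ℝ,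
      0 ≤ s → s * (c * ((n:ℝ) + 1) ^ 2 * κ ^ n) ≤ p →
      P {ω | YY σ p k n t ω ≤ 2 ∧ 2 * ε ≤ |YY σ p k (n + 1) t ω - YY σ p k n t ω|} ≤
        ENNReal.ofReal (2 * ((M:ℝ) ^ d) ^ n * exp (1 - (M:ℝ) * (8 * d * (n + 1) : ℕ)) +
        4 * exp (- s * ε + s ^ 2 * (c * ((n:ℝ) + 1) ^ 2 * κ ^ n) * (2 / p) / p ^ 2)) := by
  have hM0 : (0:ℝ) < M := by positivity
  have hM1 : (1:ℝ) < M := by exact_mod_cast hM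
  obtain ⟨e, rfl⟩ : ∃ e, d = e + 1 := ⟨d - 1, by omega⟩
  have he1 : 2 * (e + 1) - 1 = 2 * e + 1 := by omega
  rw [he1] at hlam
  set γ : ℝ := p * (M:ℝ) ^ e with hγ
  have hγ0 : 0 < γ := by positivity
  set μ := max 1 γ with hμ
  have hμ1 : 1 ≤ μ := le_max_left _ _
  set κ0 : ℝ := (p⁻¹) ^ 2 * ((M:ℝ) ^ (2 * e + 1))⁻¹ * μ with hκ0
  have hpM : 1 < p * (M:ℝ) ^ (e + 1) := by
    by_contra hcon
    push Not at hcon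
    have h1 : (p * (M:ℝ) ^ (e + 1)) ^ 2 = (p ^ 2 * (M:ℝ) ^ (2 * e + 1)) * M := by ring
    have h2 : (p * (M:ℝ) ^ (e + 1)) ^ 2 ≤ 1 := pow_le_one₀ (by positivity) hcon
    nlinarith
  have hκ01 : κ0 < 1 := by
    have : κ0 = μ / (p ^ 2 * (M:ℝ) ^ (2 * e + 1)) := by rw [hκ0]; field_simp
    rw [this, div_lt_one (by positivity)]
    refine max_lt hlam ?_
    have : p ^ 2 * (M:ℝ) ^ (2 * e + 1) = γ * (p * (M:ℝ) ^ (e + 1)) := by rw [hγ]; ring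
    rw [this]
    nlinarith
  have hκ00 : 0 < κ0 := by positivity
  set κ := max κ0 ((M:ℝ) ^ (e + 1))⁻¹ with hκ
  have hκpos : 0 < κ := lt_max_of_lt_left hκ00
  refine ⟨κ, p⁻¹ * C * (4 * C) * (M * (8 * (e + 1))) * (M:ℝ) ^ (e + 1) , hκpos, ?_, by positivity, ?_⟩
  · refine max_lt hκ01 (inv_lt_one_of_one_lt₀ (one_lt_pow₀ hM1 (by omega)))
  intro k n hk hn t ht s ε hs hsδ
  set δ := p⁻¹ * C * (4 * C) * (M * (8 * (e + 1))) * (M:ℝ) ^ (e + 1) * ((n:ℝ) + 1) ^ 2 * κ ^ n with hδ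
  set K : ℝ := (M:ℝ) * (8 * (e + 1) * (n + 1) : ℕ) with hK
  set D : ℝ := C * μ ^ (n - k) * ((M:ℝ) ^ e) ^ k with hD
  have hD0 : 0 < D := by positivity
  have hMe : (1:ℝ) ≤ (M:ℝ) ^ e := one_le_pow₀ hM1.le
  have hcount := core_count (k := k) (n := n) hσ hp0 hp1 hP hk ht hD0
    (by
      intro v hv1 hv2
      simp only [Nat.add_sub_cancel]
      calc p ^ (n - v.length) * (C * ((M:ℝ) ^ e) ^ (n - v.length)) = C * γ ^ (n - v.length) * 1 := by
            rw [hγ, mul_pow]; ring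
        _ ≤ C * μ ^ (n - k) * ((M:ℝ) ^ e) ^ k := by
            have : γ ^ (n - v.length) ≤ μ ^ (n - k) := by
              calc γ ^ (n - v.length) ≤ μ ^ (n - v.length) := by gcongr; exact le_max_right _ _
                _ ≤ _ := pow_le_pow_right₀ hμ1 (by omega)
            have h2 : (1:ℝ) ≤ ((M:ℝ) ^ e) ^ k := one_le_pow₀ hMe
            gcongr)
    (by
      simp only [Nat.add_sub_cancel]
      have e1 : n = (n - k) + k := by omega
      calc p ^ (n - k) * (C * ((M:ℝ) ^ e) ^ n) = C * γ ^ (n - k) * ((M:ℝ) ^ e) ^ k := by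
            conv_lhs => rw [e1, pow_add ((M:ℝ) ^ e)]
            rw [hγ, mul_pow]
            simp only [Nat.add_sub_cancel]
            ring
        _ ≤ _ := by
            rw [hD]
            gcongr
            exact le_max_right _ _) K
  set B := K * (4 * D * ((n:ℝ) + 1)) with hB
  have hB0 : 0 ≤ B := by positivity
  have hδb : ((p⁻¹) ^ 2) ^ (n - k) * p⁻¹ * (C * (((M:ℝ) ^ (2 * (e + 1) - 1))⁻¹) ^ (n + 1) *
      (M ^ (e + 1) * B)) ≤ δ := by
    rw [he1]
    have hκn : κ0 ^ (n - k) * (((M:ℝ) ^ (e + 1))⁻¹) ^ k ≤ κ ^ n := by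
      have e1 : n = (n - k) + k := by omega
      conv_rhs => rw [e1, pow_add]
      gcongr
      · exact le_max_left _ _
      · exact le_max_right _ _
    have e2 : ((M:ℝ) ^ (2 * e + 1))⁻¹ ^ (n + 1) ≤ ((M:ℝ) ^ (2 * e + 1))⁻¹ ^ (n - k) *
        ((M:ℝ) ^ (2 * e + 1))⁻¹ ^ k := by
      rw [← pow_add]
      refine pow_le_pow_of_le_one (by positivity) (inv_le_one_of_one_le₀ (one_le_pow₀ hM1.le)) (by omega)
    have e3 : ((M:ℝ) ^ (2 * e + 1))⁻¹ ^ k * ((M:ℝ) ^ e) ^ k = (((M:ℝ) ^ (e + 1))⁻¹) ^ k := by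
      rw [← mul_pow]
      congr 1
      have : (M:ℝ) ^ (2 * e + 1) = M ^ e * M ^ (e + 1) := by ring
      rw [this]; field_simp
    calc _ ≤ ((p⁻¹) ^ 2) ^ (n - k) * p⁻¹ * (C * (((M:ℝ) ^ (2 * e + 1))⁻¹ ^ (n - k) *
        ((M:ℝ) ^ (2 * e + 1))⁻¹ ^ k) * (M ^ (e + 1) * B)) := by gcongr
      _ = p⁻¹ * C * (4 * C) * (M * (8 * (e + 1))) * (M:ℝ) ^ (e + 1) * ((n:ℝ) + 1) ^ 2 *
          (κ0 ^ (n - k) * (((M:ℝ) ^ (2 * e + 1))⁻¹ ^ k * ((M:ℝ) ^ e) ^ k)) := by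
          rw [hB, hD, hK, hκ0]
          push_cast
          simp only [mul_pow]
          ring
      _ ≤ δ := by
          rw [e3, hδ]
          gcongr
  have hstep := core_step (ε := ε) hC.le hσ hp0 hp1 hP hk hn ht hB0 hδb (by positivity) hs hsδ
  have e5 : ENNReal.ofReal (2 * ((M:ℝ) ^ (e + 1)) ^ n * exp (1 - K) +
        4 * exp (- s * ε + s ^ 2 * δ * (2 / p) / p ^ 2)) = 2 * ((M:ℝ≥0∞) ^ (e + 1)) ^ n * ENNReal.ofReal (exp (1 - K))
        + 4 * ENNReal.ofReal (exp (- s * ε + s ^ 2 * δ * (2 / p) / p ^ 2)) := by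
    rw [ENNReal.ofReal_add (by positivity) (by positivity), ENNReal.ofReal_mul (by positivity),
      ENNReal.ofReal_mul (by positivity), ENNReal.ofReal_mul (by positivity),
      ENNReal.ofReal_pow (by positivity), ENNReal.ofReal_pow (by positivity), ENNReal.ofReal_natCast]
    simp
  rw [e5]
  refine le_trans (measure_mono ?_) ((measure_union_le _ _).trans (add_le_add hcount hstep))
  rintro ω ⟨h1, h2⟩
  by_cases h : ∀ w ∈ wd (e + 1) M n, nR σ k n t w ω ≤ B ∧ nL σ k n t w ω ≤ B
  · exact Or.inr ⟨⟨h1, h⟩, h2⟩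
  · exact Or.inl h

end


section
variable {d M : ℕ} {σ : ℝ → List (Alpha d M) → List (Alpha d M) → ℝ} {p : ℝ} {k n : ℕ} {t : ℝ}

/-- event: linked retained pairs on all nets, looking at labels above level `k` -/
def GG (σ : ℝ → List (Alpha d M) → List (Alpha d M) → ℝ) (R k : ℕ) : Set (PercSpace d M) :=
  {ω | ∀ n, k ≤ n → ∀ j : ℕ, j ≤ R ^ n → ∃ w ∈ wd d M n, ∃ w' ∈ wd d M n,
    ret k ω w ∧ ret k ω w' ∧ 0 < σ ((j:ℝ) / (R:ℝ) ^ n) w w'}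

lemma meas_GG (R k : ℕ) : MeasurableSet (GG σ R k) := by
  have : GG σ R k = ⋂ n : ℕ, ⋂ (_ : k ≤ n), ⋂ j : ℕ, ⋂ (_ : j ≤ R ^ n), ⋃ w ∈ wd d M n,
      ⋃ w' ∈ wd d M n, ({ω | ret k ω w} ∩ {ω | ret k ω w'}) ∩ {_ω | 0 < σ ((j:ℝ) / (R:ℝ) ^ n) w w'} := by
    ext ω
    simp only [GG, Set.mem_ofPred_eq, Set.mem_iInter, Set.mem_iUnion, Set.mem_inter_iff, exists_prop, and_assoc]
  rw [this]
  refine MeasurableSet.iInter fun n => MeasurableSet.iInter fun _ => MeasurableSet.iInter fun j =>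
    MeasurableSet.iInter fun _ => Finset.measurableSet_biUnion _ fun w _ =>
    Finset.measurableSet_biUnion _ fun w' _ => ?_
  exact ((meas_ret k w).inter (meas_ret k w')).inter (MeasurableSet.const _)

lemma core_summ {d M : ℕ} (hd : 1 ≤ d) (hM : 2 ≤ M) :
    Summable fun n : ℕ => ((M:ℝ) ^ (4 * d + 2)) ^ n * (2 * ((M:ℝ) ^ d) ^ n *
      exp (1 - (M:ℝ) * (8 * d * (n + 1) : ℕ))) := by
  have hg : Summable fun n : ℕ => 2 * exp 1 * (1 / 2 : ℝ) ^ n :=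
      (summable_geometric_of_lt_one (by norm_num) (by norm_num)).mul_left _
  refine Summable.of_nonneg_of_le (fun n => by positivity) (fun n => ?_) hg
  have hM0 : (0:ℝ) < M := by positivity
  have hM1 : (2:ℝ) ≤ M := by exact_mod_cast hM
  have h1 := exp_MK (M := M) (8 * d * (n + 1))
  rw [sub_eq_add_neg, exp_add, exp_neg]
  have h2 : (exp ((M:ℝ) * (8 * d * (n + 1) : ℕ)))⁻¹ ≤ ((M:ℝ) ^ (8 * d * (n + 1)))⁻¹ :=
    inv_anti₀ (by positivity) h1
  have h3 : ((M:ℝ) ^ (4 * d + 2)) ^ n * ((M:ℝ) ^ d) ^ n * 2 ^ n ≤ (M:ℝ) ^ (8 * d * (n + 1)) := by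
    calc ((M:ℝ) ^ (4 * d + 2)) ^ n * ((M:ℝ) ^ d) ^ n * 2 ^ n ≤
        ((M:ℝ) ^ (4 * d + 2)) ^ n * ((M:ℝ) ^ d) ^ n * (M:ℝ) ^ n := by gcongr
      _ = (M:ℝ) ^ ((5 * d + 3) * n) := by
        simp only [← pow_mul, ← pow_add]
        congr 1; ring
      _ ≤ _ := pow_le_pow_right₀ (by linarith) (by nlinarith)
  calc _ ≤ ((M:ℝ) ^ (4 * d + 2)) ^ n * (2 * ((M:ℝ) ^ d) ^ n *
        (exp 1 * ((M:ℝ) ^ (8 * d * (n + 1)))⁻¹)) := by gcongr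
    _ = 2 * exp 1 * (((M:ℝ) ^ (4 * d + 2)) ^ n * ((M:ℝ) ^ d) ^ n * ((M:ℝ) ^ (8 * d * (n + 1)))⁻¹) := by ring
    _ ≤ 2 * exp 1 * (1 / 2) ^ n := by
      gcongr
      rw [mul_inv_le_iff₀ (by positivity), one_div, inv_pow, inv_mul_eq_div, le_div_iff₀ (by positivity)]
      exact h3

theorem core_pos {C : ℝ} {Left : List (Alpha d M) → Prop} (hC : 0 < C) (hσ : LinkSys d M C σ Left)
    (hd : 1 ≤ d) (hM : 2 ≤ M) (hp0 : 0 < p) (hp1 : p ≤ 1) (hlam : 1 < p ^ 2 * (M:ℝ) ^ (2 * d - 1))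
    {P : Measure (PercSpace d M)} (hP : IsBernoulliPerc d M p P) :
    ∃ k, 0 < P (GG σ (M ^ (4 * d + 2)) k) := by
  have := hP.1
  have hM0 : (0:ℝ) < M := by positivity
  have hM1 : (2:ℝ) ≤ M := by exact_mod_cast hM
  obtain ⟨κ, c, hκ0, hκ1, hc, hcore⟩ := core_uniform hC hσ hd hM hp0 hp1 hlam hP
  set R : ℝ := (M:ℝ) ^ (4 * d + 2) with hR
  have hR1 : 1 ≤ R := one_le_pow₀ (by linarith)
  obtain ⟨s, ε, hs, hε, hεs, hev, hsum⟩ := consts (c := c) hκ0 hκ1 hp0 hR1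
  set β : ℕ → ℝ := fun n => 2 * ((M:ℝ) ^ d) ^ n * exp (1 - (M:ℝ) * (8 * d * (n + 1) : ℕ)) +
        4 * exp (- s n * ε n + s n ^ 2 * (c * ((n:ℝ) + 1) ^ 2 * κ ^ n) * (2 / p) / p ^ 2) with hβ
  have hβ0 : ∀ n, 0 ≤ β n := fun n => by positivity
  set b : ℕ → ℝ := fun n => 2 * R * (R ^ n * β n) with hb
  have hbs : Summable b := by
    refine Summable.mul_left _ ?_
    have := (core_summ hd hM).add (hsum.mul_left 4)
    refine this.congr fun n => ?_
    simp only [hβ]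
    ring
  have hb0 : ∀ n, 0 ≤ b n := fun n => by have := hβ0 n; positivity
  set u : ℕ → ℝ := fun n => 2 * ε n + C * (1 / M) ^ n with hu
  have hus : Summable u := (hεs.mul_left 2).add
    ((summable_geometric_of_lt_one (by positivity) (by
      rw [div_lt_one hM0]; linarith)).mul_left C)
  have hu0 : ∀ n, 0 ≤ u n := fun n => by have := hε n; positivity
  obtain ⟨k, hk1, hk2, hk3, hk4⟩ : ∃ k, ∑' i, b (i + k) < 1 ∧ ∑' i, u (i + k) < 1 / 2 ∧ 3 ≤ k ∧
      ∀ n, k ≤ n → s n * (c * ((n:ℝ) + 1) ^ 2 * κ ^ n) ≤ p := by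
    obtain ⟨N, hN⟩ := Filter.eventually_atTop.1 hev
    have := ((tendsto_sum_nat_add b).eventually (gt_mem_nhds one_pos)).and
      (((tendsto_sum_nat_add u).eventually (gt_mem_nhds (by norm_num : (0:ℝ) < 1 / 2))).and
      ((Filter.eventually_ge_atTop 3).and (Filter.eventually_ge_atTop N)))
    obtain ⟨k, h1, h2, h3, h4⟩ := this.exists
    exact ⟨k, h1, h2, h3, fun n hn => hN n (h4.trans hn)⟩
  refine ⟨k, ?_⟩
  set R' : ℕ := M ^ (4 * d + 2) with hR'
  have hRR : (R' : ℝ) = R := by rw [hR', hR]; push_cast; rfl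
  have hR0 : 0 < R := by linarith
  set Bad : ℕ → Set (PercSpace d M) := fun n => ⋃ j ∈ Finset.range (R' ^ (n + 1) + 1),
    {ω | YY σ p k n ((j:ℝ) / R ^ (n + 1)) ω ≤ 2 ∧ 2 * ε n ≤
      |YY σ p k (n + 1) ((j:ℝ) / R ^ (n + 1)) ω - YY σ p k n ((j:ℝ) / R ^ (n + 1)) ω|} with hBad
  have htm : ∀ n j : ℕ, j ≤ R' ^ n → ((j:ℝ) / R ^ n) ∈ Icc (0:ℝ) 1 := by
    intro n j hj
    refine ⟨by positivity, ?_⟩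
    rw [div_le_one (by positivity), ← hRR]
    exact_mod_cast hj
  have hBadP : ∀ n, k ≤ n → P (Bad n) ≤ ENNReal.ofReal (b n) := by
    intro n hn
    refine (measure_biUnion_finset_le _ _).trans ?_
    calc _ ≤ ∑ j ∈ Finset.range (R' ^ (n + 1) + 1), ENNReal.ofReal (β n) := by
          refine Finset.sum_le_sum fun j hj => ?_
          exact hcore k n hn (by omega) _ (htm _ _ (by rw [Finset.mem_range] at hj; omega)) (s n) (ε n)
            (hs n) (hk4 n hn)
      _ = ENNReal.ofReal ((R ^ (n + 1) + 1) * β n) := by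
          rw [Finset.sum_const, Finset.card_range, nsmul_eq_mul, ENNReal.ofReal_mul (by positivity)]
          congr 1
          rw [← hRR]
          norm_cast
      _ ≤ ENNReal.ofReal (b n) := by
          apply ENNReal.ofReal_le_ofReal
          simp only [hb]
          have : 1 ≤ R ^ (n + 1) := one_le_pow₀ hR1
          have h2 := hβ0 n
          calc (R ^ (n + 1) + 1) * β n ≤ (R ^ (n + 1) + R ^ (n + 1)) * β n := by gcongr
            _ = _ := by ring
  have hS : ∀ n, ∑ i ∈ Finset.Ico k n, u i ≤ 1 / 2 := by
    intro n
    rw [Finset.sum_Ico_eq_sum_range]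
    have : ∀ i, u (k + i) = u (i + k) := fun i => by rw [add_comm]
    simp_rw [this]
    exact (Summable.sum_le_tsum _ (fun i _ => hu0 _) ((summable_nat_add_iff k).2 hus)).trans hk2.le
  have hpM : ((M:ℝ) ^ d)⁻¹ ≤ p := by
    rw [inv_le_iff_one_le_mul₀ (by positivity)]
    by_contra hcon
    push Not at hcon
    have e1 : (p * (M:ℝ) ^ d) ^ 2 = (p ^ 2 * (M:ℝ) ^ (2 * d - 1)) * M := by
      rw [mul_pow, mul_assoc, ← pow_succ, ← pow_mul]
      congr 2; omega
    have e2 : (p * (M:ℝ) ^ d) ^ 2 ≤ 1 := pow_le_one₀ (by positivity) hcon.le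
    nlinarith
  have hcover : (univ : Set (PercSpace d M)) ⊆ (⋃ i, Bad (i + k)) ∪ GG σ R' k := by
    intro ω _
    by_cases hω : ω ∈ ⋃ i, Bad (i + k)
    · exact Or.inl hω
    right
    have hgood : ∀ n, k ≤ n → ∀ j : ℕ, j ≤ R' ^ (n + 1) → YY σ p k n ((j:ℝ) / R ^ (n + 1)) ω ≤ 2 →
        |YY σ p k (n + 1) ((j:ℝ) / R ^ (n + 1)) ω - YY σ p k n ((j:ℝ) / R ^ (n + 1)) ω| < 2 * ε n := by
      intro n hn j hj h2
      by_contra hcon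
      apply hω
      rw [Set.mem_iUnion]
      refine ⟨n - k, ?_⟩
      rw [Nat.sub_add_cancel hn]
      simp only [hBad, Set.mem_iUnion]
      exact ⟨j, by rw [Finset.mem_range]; omega, h2, not_lt.1 hcon⟩
    have hind : ∀ n, k ≤ n → ∀ j : ℕ, j ≤ R' ^ n → |YY σ p k n ((j:ℝ) / R ^ n) ω - 1| ≤
        ∑ i ∈ Finset.Ico k n, u i := by
      intro n hn
      induction n, hn using Nat.le_induction with
      | base =>
        intro j hj
        rw [YY_init hσ (htm _ _ hj)]; simp
      | succ n hn ih =>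
        intro j hj
        have hR'0 : 0 < R' := by positivity
        set j' := j / R' with hj'
        have hj'1 : j' ≤ R' ^ n := by
          rw [hj']
          apply Nat.div_le_of_le_mul
          rwa [← pow_succ']
        have hdist : |(j:ℝ) / R ^ (n + 1) - (j':ℝ) / R ^ n| ≤ 1 / R ^ n := by
          have h1 : j' * R' ≤ j := Nat.div_mul_le_self _ _
          have h2 : j ≤ j' * R' + R' := by
            have := Nat.div_add_mod j R'
            have h3 := Nat.mod_lt j hR'0
            rw [← hj'] at this
            nlinarith
          have h1' : (j':ℝ) * R ≤ j := by rw [← hRR]; exact_mod_cast h1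
          have h2' : (j:ℝ) ≤ j' * R + R := by rw [← hRR]; exact_mod_cast h2
          have e : (j:ℝ) / R ^ (n + 1) - (j':ℝ) / R ^ n = (j - j' * R) / R / R ^ n := by
            field_simp
            ring
          rw [e, abs_of_nonneg (by
            have : 0 ≤ (j:ℝ) - j' * R := by linarith
            positivity)]
          gcongr
          rw [div_le_one hR0]; linarith
        have hlip := YY_lip (k := k) (n := n) hσ hp0 hpM (by omega) (htm _ _ hj) (htm _ _ hj'1) ω
        have hlip2 : |YY σ p k n ((j:ℝ) / R ^ (n + 1)) ω - YY σ p k n ((j':ℝ) / R ^ n) ω| ≤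
            C * (1 / M) ^ n := by
          refine hlip.trans ?_
          calc _ ≤ C * ((M:ℝ) ^ (4 * d + 1)) ^ n * (1 / R ^ n) := by gcongr
            _ = C * (1 / M) ^ n := by
              have : R = (M:ℝ) ^ (4 * d + 1) * M := by rw [hR]; ring
              rw [this, mul_pow, div_pow]
              field_simp
              simp
        have hih := ih j' hj'1
        have hS' := hS (n + 1)
        rw [Finset.sum_Ico_succ_top hn] at hS' ⊢
        have hun : u n = 2 * ε n + C * (1 / M) ^ n := rfl
        have h1 : |YY σ p k n ((j:ℝ) / R ^ (n + 1)) ω - 1| ≤ ∑ i ∈ Finset.Ico k n, u i + C * (1 / M) ^ n := by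
          have := abs_sub_le (YY σ p k n ((j:ℝ) / R ^ (n + 1)) ω) (YY σ p k n ((j':ℝ) / R ^ n) ω) 1
          linarith
        have h2 := hgood n hn j hj (by
          have := (abs_le.1 h1).2
          have := hε n
          linarith)
        have := abs_sub_le (YY σ p k (n + 1) ((j:ℝ) / R ^ (n + 1)) ω) (YY σ p k n ((j:ℝ) / R ^ (n + 1)) ω) 1
        linarith
    intro n hn j hj
    rw [hRR]
    by_contra hcon
    have h0 : YY σ p k n ((j:ℝ) / R ^ n) ω = 0 := by
      unfold YY
      rw [Finset.sum_eq_zero, mul_zero]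
      intro w hw
      refine Finset.sum_eq_zero fun w' hw' => ?_
      by_contra hne
      apply hcon
      refine ⟨w, hw, w', hw', ?_, ?_, ?_⟩
      · by_contra h
        apply hne; unfold rr; rw [if_neg h]; ring
      · by_contra h
        apply hne; unfold rr; rw [if_neg h]; ring
      · refine lt_of_le_of_ne (hσ.nonneg _ _ _) fun h => hne ?_
        rw [← h]; ring
    have := (hind n hn j hj).trans (hS n)
    rw [h0] at this
    norm_num at this
  by_contra hcon
  have h0 : P (GG σ R' k) = 0 := by simpa using hcon
  have h1 : (1:ℝ≥0∞) ≤ P (⋃ i, Bad (i + k)) := by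
    have := (measure_mono hcover).trans (measure_union_le (μ := P) _ _)
    rwa [measure_univ, h0, add_zero] at this
  have h2 : P (⋃ i, Bad (i + k)) ≤ ENNReal.ofReal (∑' i, b (i + k)) := by
    refine (measure_iUnion_le _).trans ?_
    rw [ENNReal.ofReal_tsum_of_nonneg (fun i => hb0 _) ((summable_nat_add_iff k).2 hbs)]
    exact ENNReal.tsum_le_tsum fun i => hBadP _ (by omega)
  have h3 : ENNReal.ofReal (∑' i, b (i + k)) < 1 := by
    rw [ENNReal.ofReal_lt_one]; exact hk1
  exact absurd (h1.trans h2) (not_le.2 h3)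

/-- event: linked retained pairs on all nets -/
def G0 (σ : ℝ → List (Alpha d M) → List (Alpha d M) → ℝ) (R k : ℕ) : Set (PercSpace d M) :=
  {ω | ∀ n, k ≤ n → ∀ j : ℕ, j ≤ R ^ n → ∃ w ∈ wd d M n, ∃ w' ∈ wd d M n,
    Retained d M ω w ∧ Retained d M ω w' ∧ 0 < σ ((j:ℝ) / (R:ℝ) ^ n) w w'}

lemma retained_iff {ω : PercSpace d M} {w : List (Alpha d M)} : Retained d M ω w ↔ ret 0 ω w := by
  unfold Retained ret
  refine forall₃_congr fun u hu hp => ?_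
  have : 0 < u.length := List.length_pos_iff.2 hu
  simp [this]

lemma meas_retained (w : List (Alpha d M)) : MeasurableSet {ω : PercSpace d M | Retained d M ω w} := by
  have := meas_ret (d := d) (M := M) 0 w
  simpa only [← retained_iff] using this

lemma meas_G0 (R k : ℕ) : MeasurableSet (G0 σ R k) := by
  have : G0 σ R k = ⋂ n : ℕ, ⋂ (_ : k ≤ n), ⋂ j : ℕ, ⋂ (_ : j ≤ R ^ n), ⋃ w ∈ wd d M n,
      ⋃ w' ∈ wd d M n, ({ω | Retained d M ω w} ∩ {ω | Retained d M ω w'}) ∩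
        {_ω | 0 < σ ((j:ℝ) / (R:ℝ) ^ n) w w'} := by
    ext ω
    simp only [G0, Set.mem_ofPred_eq, Set.mem_iInter, Set.mem_iUnion, Set.mem_inter_iff, exists_prop, and_assoc]
  rw [this]
  refine MeasurableSet.iInter fun n => MeasurableSet.iInter fun _ => MeasurableSet.iInter fun j =>
    MeasurableSet.iInter fun _ => Finset.measurableSet_biUnion _ fun w _ =>
    Finset.measurableSet_biUnion _ fun w' _ => ?_
  exact ((meas_retained w).inter (meas_retained w')).inter (MeasurableSet.const _)

theorem G0_pos (hp0 : 0 < p) (hp1 : p ≤ 1) {P : Measure (PercSpace d M)} (hP : IsBernoulliPerc d M p P)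
    {R : ℕ} (h : 0 < P (GG σ R k)) : 0 < P (G0 σ R k) := by
  classical
  have hfin : Set.Finite {w : Word d M | w.1.length ≤ k} := by
    have := List.finite_length_le (Alpha d M) k
    exact Set.Finite.preimage Subtype.val_injective.injOn this
  set S := hfin.toFinset with hS
  have hmem : ∀ w, w ∈ S ↔ w.1.length ≤ k := by intro w; simp [hS]
  have hinv : ∀ i ∈ S, ∀ b ω, Function.update ω i b ∈ GG σ R k ↔ ω ∈ GG σ R k := by
    intro i hi b ω
    rw [hmem] at hi
    simp only [GG, Set.mem_ofPred_eq, ret_upd_low hi]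
  have key := prodsite hp0.le hp1 hP S (fun w => w) (fun _ _ _ _ h => h) ((GG σ R k).indicator 1)
    (measurable_one.indicator (meas_GG R k))
    (by
      intro i hi b ω
      by_cases hω : ω ∈ GG σ R k
      · rw [Set.indicator_of_mem hω, Set.indicator_of_mem ((hinv i hi b ω).2 hω)]; rfl
      · rw [Set.indicator_of_notMem hω, Set.indicator_of_notMem (fun h => hω ((hinv i hi b ω).1 h))])
    (fun _ b _ => if b then 1 else 0) (by intro i b; exact measurable_const) (by intros; rfl)
  have e1 : ∀ ω : PercSpace d M, (GG σ R k).indicator (1 : PercSpace d M → ℝ≥0∞) ω *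
      ∏ i ∈ S, (if ω i then (1:ℝ≥0∞) else 0) ≤ (G0 σ R k).indicator 1 ω := by
    intro ω
    by_cases hω : ω ∈ GG σ R k
    · by_cases hall : ∀ i ∈ S, ω i = true
      · rw [Set.indicator_of_mem hω, Set.indicator_of_mem]
        · rw [Finset.prod_congr rfl (fun i hi => by rw [if_pos (hall i hi)])]
          simp
        · intro n hn j hj
          obtain ⟨w, hw, w', hw', h1, h2, h3⟩ := hω n hn j hj
          have : ∀ w, ret k ω w → Retained d M ω w := by
            intro w hw u hu hp
            by_cases hl : u.length ≤ k
            · exact hall ⟨u, hu⟩ ((hmem _).2 hl)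
            · exact hw u hu hp (by omega)
          exact ⟨w, hw, w', hw', this w h1, this w' h2, h3⟩
      · push Not at hall
        obtain ⟨i, hi, h⟩ := hall
        rw [Finset.prod_eq_zero hi (by rw [if_neg h]), mul_zero]
        exact zero_le
    · rw [Set.indicator_of_notMem hω, zero_mul]; exact zero_le
  have e2 : ∫⁻ ω, (GG σ R k).indicator (1 : PercSpace d M → ℝ≥0∞) ω *
      ∏ i ∈ S, (if ω i then (1:ℝ≥0∞) else 0) ∂P ≤ P (G0 σ R k) := by
    rw [← lintegral_indicator_one (meas_G0 R k)]
    exact lintegral_mono e1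
  refine lt_of_lt_of_le ?_ e2
  rw [key]
  simp only [if_true, mul_one, Bool.false_eq_true, if_false, mul_zero, add_zero, Finset.prod_const]
  rw [lintegral_mul_const _ (measurable_one.indicator (meas_GG R k)),
    lintegral_indicator_one (meas_GG R k)]
  refine ENNReal.mul_pos h.ne' ?_
  exact pow_ne_zero _ (by simpa using hp0)

end


section words
variable {d M : ℕ}

lemma wordBase_nil (i : Fin d) : wordBase d M [] i = 0 := by simp [wordBase]

lemma wordBase_cons (hM : 2 ≤ M) (c : Alpha d M) (w : List (Alpha d M)) (i : Fin d) :
    wordBase d M (c :: w) i = (((c i : ℕ) : ℝ) + wordBase d M w i) / M := by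
  have hM0 : (M:ℝ) ≠ 0 := by positivity
  unfold wordBase
  have : ∑ j : Fin (c :: w).length, (((c :: w).get j) i : ℝ) * (M : ℝ) ^ (-(j : ℤ) - 1)
    = ∑ j : Fin (w.length + 1), (((c :: w).get j) i : ℝ) * (M : ℝ) ^ (-(j : ℤ) - 1) := rfl
  rw [this, Fin.sum_univ_succ, add_div, Finset.sum_div]
  congr 1
  · simp [zpow_neg]
    rfl
  · refine Finset.sum_congr rfl fun j _ => ?_
    have e : -((j.succ : Fin (w.length + 1)) : ℤ) - 1 = (-(j:ℤ) - 1) - 1 := by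
      simp; ring
    rw [e, zpow_sub_one₀ hM0]
    simp [div_eq_mul_inv, mul_assoc]

/-- integer numerator of the base point -/
def num (w : List (Alpha d M)) (i : Fin d) : ℕ := w.foldl (fun a c => a * M + (c i : ℕ)) 0

lemma num_nil (i : Fin d) : num ([] : List (Alpha d M)) i = 0 := rfl

lemma num_snoc (w : List (Alpha d M)) (c : Alpha d M) (i : Fin d) :
    num (w ++ [c]) i = num w i * M + (c i : ℕ) := by simp [num]

lemma wordBase_snoc (hM : 2 ≤ M) (w : List (Alpha d M)) (c : Alpha d M) (i : Fin d) :
    wordBase d M (w ++ [c]) i = wordBase d M w i + ((c i : ℕ) : ℝ) / (M:ℝ) ^ (w.length + 1) := by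
  have hM0 : (M:ℝ) ≠ 0 := by positivity
  induction w with
  | nil => simp [wordBase_cons hM, wordBase_nil]
  | cons a w ih =>
    rw [List.cons_append, wordBase_cons hM, wordBase_cons hM, ih]
    simp only [List.length_cons]
    field_simp
    ring

lemma wordBase_eq (hM : 2 ≤ M) (w : List (Alpha d M)) (i : Fin d) :
    wordBase d M w i = (num w i : ℝ) / (M:ℝ) ^ w.length := by
  have hM0 : (M:ℝ) ≠ 0 := by positivity
  induction w using List.reverseRecOn with
  | nil => simp [wordBase_nil, num_nil]
  | append_singleton w c ih =>
    rw [wordBase_snoc hM, ih, num_snoc]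
    simp only [List.length_append, List.length_singleton]
    push_cast
    field_simp
    ring

lemma num_inj {w w' : List (Alpha d M)} (hl : w.length = w'.length)
    (h : ∀ i, num w i = num w' i) : w = w' := by
  induction w using List.reverseRecOn generalizing w' with
  | nil => exact (List.eq_nil_of_length_eq_zero hl.symm).symm
  | append_singleton w c ih =>
    rcases List.eq_nil_or_concat w' with rfl | ⟨w', c', rfl⟩
    · simp at hl
    · simp only [List.concat_eq_append] at *
      simp only [List.length_append, List.length_singleton, Nat.add_right_cancel_iff] at hl
      have h1 : ∀ i, num w i = num w' i ∧ (c i : ℕ) = c' i := by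
        intro i
        have := h i
        rw [num_snoc, num_snoc] at this
        have hc := (c i).2
        have hc' := (c' i).2
        have hM0 : 0 < M := by omega
        constructor
        · have := congrArg (· / M) this
          simpa [Nat.mul_add_div, mul_comm _ M, hM0, Nat.div_eq_of_lt hc, Nat.div_eq_of_lt hc'] using this
        · have := congrArg (· % M) this
          simpa [Nat.mul_add_mod, mul_comm _ M, Nat.mod_eq_of_lt hc, Nat.mod_eq_of_lt hc'] using this
      rw [ih hl fun i => (h1 i).1]
      congr 2
      funext i
      exact Fin.ext (h1 i).2

/-- half-open cell -/
def cell (w : List (Alpha d M)) (y : Fin d → ℝ) : Prop :=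
  ∀ i, (num w i : ℝ) ≤ (M:ℝ) ^ w.length * y i ∧ (M:ℝ) ^ w.length * y i < num w i + 1

lemma cell_nil (y : Fin d → ℝ) : cell ([] : List (Alpha d M)) y ↔ ∀ i, 0 ≤ y i ∧ y i < 1 := by
  simp [cell, num_nil]

lemma cell_parent (hM : 2 ≤ M) {w : List (Alpha d M)} {c : Alpha d M} {y : Fin d → ℝ}
    (h : cell (w ++ [c]) y) : cell w y := by
  intro i
  have h1 := h i
  rw [num_snoc] at h1
  simp only [List.length_append, List.length_singleton] at h1
  push_cast at h1
  rw [pow_succ] at h1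
  have hM0 : (0:ℝ) < M := by positivity
  have hc : ((c i : ℕ) : ℝ) + 1 ≤ M := by exact_mod_cast (c i).2
  have hc0 : (0:ℝ) ≤ ((c i : ℕ) : ℝ) := by positivity
  constructor <;> nlinarith

lemma cell_uniq {w : List (Alpha d M)} {c c' : Alpha d M} {y : Fin d → ℝ}
    (h : cell (w ++ [c]) y) (h' : cell (w ++ [c']) y) : c = c' := by
  funext i
  have h1 := h i
  have h2 := h' i
  rw [num_snoc] at h1 h2
  simp only [List.length_append, List.length_singleton] at h1 h2
  push_cast at h1 h2
  have e1 : ((c i : ℕ) : ℝ) < (c' i : ℕ) + 1 := by linarith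
  have e2 : ((c' i : ℕ) : ℝ) < (c i : ℕ) + 1 := by linarith
  have e1' : (c i : ℕ) < (c' i : ℕ) + 1 := by exact_mod_cast e1
  have e2' : (c' i : ℕ) < (c i : ℕ) + 1 := by exact_mod_cast e2
  exact Fin.ext (by omega)

lemma cell_child (hM : 2 ≤ M) {w : List (Alpha d M)} {y : Fin d → ℝ} (h : cell w y) :
    ∃ c, cell (w ++ [c]) y := by
  have hM0 : (0:ℝ) < M := by positivity
  have : ∀ i, ∃ c : Fin M, ((num w i * M + (c : ℕ) : ℕ) : ℝ) ≤ (M:ℝ) ^ (w.length + 1) * y i ∧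
      (M:ℝ) ^ (w.length + 1) * y i < ((num w i * M + (c : ℕ) : ℕ) : ℝ) + 1 := by
    intro i
    have h1 := h i
    set X := (M:ℝ) ^ (w.length + 1) * y i with hX
    have hX' : X = ((M:ℝ) ^ w.length * y i) * M := by rw [hX]; ring
    have hl : ((num w i * M : ℕ) : ℝ) ≤ X := by
      rw [hX']; push_cast; nlinarith
    have hu : X < ((num w i * M + M : ℕ) : ℝ) := by
      rw [hX']; push_cast; nlinarith
    have hX0 : 0 ≤ X := le_trans (by positivity) hl
    have f1 : num w i * M ≤ ⌊X⌋₊ := Nat.le_floor hl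
    have f2 : ⌊X⌋₊ < num w i * M + M := (Nat.floor_lt hX0).2 hu
    refine ⟨⟨⌊X⌋₊ - num w i * M, by omega⟩, ?_⟩
    have e : num w i * M + (⌊X⌋₊ - num w i * M) = ⌊X⌋₊ := by omega
    simp only [e]
    exact ⟨Nat.floor_le hX0, Nat.lt_floor_add_one X⟩
  choose c hc using this
  refine ⟨c, fun i => ?_⟩
  rw [num_snoc]
  simpa using hc i

lemma cell_cube (hM : 2 ≤ M) {w : List (Alpha d M)} {y : Fin d → ℝ} (h : cell w y) :
    (WithLp.toLp 2 y : EuclideanSpace ℝ (Fin d)) ∈ wordCube d M w := by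
  have hM0 : (0:ℝ) < M := by positivity
  intro i
  have h1 := h i
  rw [wordBase_eq hM, zpow_neg, zpow_natCast]
  simp only
  have hP : (0:ℝ) < (M:ℝ) ^ w.length := by positivity
  constructor
  · rw [div_le_iff₀ hP]; linarith
  · rw [← one_div, ← add_div, le_div_iff₀ hP]; linarith

lemma num_map {e : ℕ} {w w' : List (Alpha (e + 1) M)} (h : w.map Fin.tail = w'.map Fin.tail)
    (i : Fin e) : num w i.succ = num w' i.succ := by
  have : ∀ w : List (Alpha (e + 1) M), num w i.succ = (w.map Fin.tail).foldl (fun a (c : Alpha e M) => a * M + (c i : ℕ)) 0 := by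
    intro w
    rw [List.foldl_map]
    rfl
  rw [this, this, h]

lemma cnt_le {e n : ℕ} (L : List (Alpha (e + 1) M) → Prop) (v : List (Alpha (e + 1) M))
    (h : ∀ w ∈ wd (e + 1) M n, ∀ w' ∈ wd (e + 1) M n, L w → L w' →
      (∀ i : Fin e, num w i.succ = num w' i.succ) → num w 0 < num w' 0 + 4) :
    cnt n L v ≤ 4 * ((M:ℝ) ^ e) ^ (n - v.length) := by
  classical
  unfold cnt
  rw [Finset.sum_boole]
  have : ((wd (e + 1) M n).filter fun w => v <+: w ∧ L w).card ≤
      ((Finset.range 4) ×ˢ wd e M (n - v.length)).card := by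
    refine Finset.card_le_card_of_injOn
      (fun w => (num w 0 % 4, (w.drop v.length).map Fin.tail)) ?_ ?_
    · intro w hw
      rw [Finset.mem_coe, Finset.mem_filter, mem_wd] at hw
      simp only [Finset.coe_product, Set.mem_prod, Finset.mem_coe, Finset.mem_range, mem_wd,
        List.length_map, List.length_drop]
      exact ⟨Nat.mod_lt _ (by norm_num), by rw [hw.1]⟩
    · intro w hw w' hw' heq
      rw [Finset.mem_coe, Finset.mem_filter] at hw hw'
      simp only [Prod.mk.injEq] at heq
      obtain ⟨s, rfl⟩ := hw.2.1
      obtain ⟨s', rfl⟩ := hw'.2.1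
      have hm : (v ++ s).map Fin.tail = (v ++ s').map Fin.tail := by
        have := heq.2
        simp only [List.drop_left] at this
        rw [List.map_append, List.map_append, this]
      have hn := fun i => num_map hm i
      have h1 := h _ hw.1 _ hw'.1 hw.2.2 hw'.2.2 hn
      have h2 := h _ hw'.1 _ hw.1 hw'.2.2 hw.2.2 fun i => (hn i).symm
      refine num_inj (by rw [mem_wd.1 hw.1, mem_wd.1 hw'.1]) fun i => ?_
      refine Fin.cases ?_ (fun i => hn i) i
      have := heq.1
      omega
  rw [Finset.card_product, Finset.card_range, card_wd] at this
  exact_mod_cast this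

end words


section geo
variable {e M : ℕ}

/-- parameter space -/
abbrev Zs (e : ℕ) : Type := ℝ × ((Fin e → ℝ) × (Fin e → ℝ))

/-- box side -/
def rad (e : ℕ) : ℝ := 1 / (8 * ((e:ℝ) + 1))

lemma rad_pos (e : ℕ) : 0 < rad e := by unfold rad; positivity

lemma rad_le (e : ℕ) : rad e ≤ 1 / 8 := by
  unfold rad
  apply one_div_le_one_div_of_le (by norm_num)
  have : (0:ℝ) ≤ e := by positivity
  linarith

lemma rad_mul (e : ℕ) : e * rad e ≤ 1 / 8 := by
  unfold rad
  rw [mul_one_div, div_le_div_iff₀ (by positivity) (by norm_num)]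
  linarith

/-- distance for the parameter `t` -/
def TT (t : ℝ) : ℝ := 1 / 2 + t / 4

/-- squared displacement -/
def qq (v : (Fin e → ℝ) × (Fin e → ℝ)) : ℝ := ∑ i, (v.2 i - v.1 i) ^ 2

/-- first-coordinate displacement -/
def hh (t : ℝ) (v : (Fin e → ℝ) × (Fin e → ℝ)) : ℝ := √(TT t ^ 2 - qq v)

/-- left point -/
def yv (z : Zs e) : Fin (e + 1) → ℝ := Fin.cons z.1 z.2.1

/-- right point -/
def xv (t : ℝ) (z : Zs e) : Fin (e + 1) → ℝ := Fin.cons (z.1 + hh t z.2) z.2.2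

/-- the box -/
def Bx (e : ℕ) : Set (Zs e) :=
  {z | z.1 ∈ Ico 0 (rad e) ∧ (∀ i, z.2.1 i ∈ Ico 0 (rad e)) ∧ ∀ i, z.2.2 i ∈ Ico 0 (rad e)}

lemma qq_le {z : Zs e} (hz : z ∈ Bx e) : qq z.2 ≤ 1 / 64 := by
  have h1 : ∀ i ∈ (Finset.univ : Finset (Fin e)), (z.2.2 i - z.2.1 i) ^ 2 ≤ rad e * (1 / 8) := by
    intro i _
    have a := hz.2.1 i
    have b := hz.2.2 i
    have c := rad_le e
    have hr := rad_pos e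
    rw [Set.mem_Ico] at a b
    have : |z.2.2 i - z.2.1 i| ≤ rad e := by rw [abs_le]; constructor <;> linarith
    rw [← sq_abs]
    nlinarith [abs_nonneg (z.2.2 i - z.2.1 i)]
  have := Finset.sum_le_card_nsmul _ _ _ h1
  simp only [Finset.card_univ, Fintype.card_fin, nsmul_eq_mul] at this
  have h2 := rad_mul e
  unfold qq
  linarith

lemma TT_mem {t : ℝ} (ht : t ∈ Icc (0:ℝ) 1) : 1 / 2 ≤ TT t ∧ TT t ≤ 3 / 4 := by
  unfold TT
  constructor <;> linarith [ht.1, ht.2]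

lemma hh_sq {t : ℝ} (ht : t ∈ Icc (0:ℝ) 1) {z : Zs e} (hz : z ∈ Bx e) :
    hh t z.2 ^ 2 = TT t ^ 2 - qq z.2 := by
  unfold hh
  rw [sq_sqrt]
  have := qq_le hz
  have := (TT_mem ht).1
  nlinarith

lemma hh_ge {t : ℝ} (ht : t ∈ Icc (0:ℝ) 1) {z : Zs e} (hz : z ∈ Bx e) : 1 / 4 ≤ hh t z.2 := by
  unfold hh
  apply le_sqrt_of_sq_le
  have := qq_le hz
  have := (TT_mem ht).1
  nlinarith

lemma qq_nonneg (v : (Fin e → ℝ) × (Fin e → ℝ)) : 0 ≤ qq v := Finset.sum_nonneg fun _ _ => sq_nonneg _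

lemma hh_le {t : ℝ} (ht : t ∈ Icc (0:ℝ) 1) {z : Zs e} (hz : z ∈ Bx e) : hh t z.2 ≤ 3 / 4 := by
  have h1 := hh_sq ht hz
  have h2 := qq_nonneg z.2
  have h3 := TT_mem ht
  have h4 := hh_ge ht hz
  by_contra hcon
  push Not at hcon
  nlinarith

lemma hh_lip {t s : ℝ} (ht : t ∈ Icc (0:ℝ) 1) (hs : s ∈ Icc (0:ℝ) 1) {z : Zs e} (hz : z ∈ Bx e) :
    |hh t z.2 - hh s z.2| ≤ |t - s| := by
  have h1 := hh_sq ht hz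
  have h2 := hh_sq hs hz
  have h3 := hh_ge ht hz
  have h4 := hh_ge hs hz
  have h5 := TT_mem ht
  have h6 := TT_mem hs
  have h7 : (hh t z.2 - hh s z.2) * (hh t z.2 + hh s z.2) = (TT t - TT s) * (TT t + TT s) := by
    linear_combination h1 - h2
  have h8 : TT t - TT s = (t - s) / 4 := by unfold TT; ring
  have h9 := congrArg abs h7
  rw [abs_mul, abs_mul, abs_of_pos (by linarith : 0 < hh t z.2 + hh s z.2),
    abs_of_pos (by linarith : 0 < TT t + TT s), h8, abs_div, abs_of_pos (by norm_num : (0:ℝ) < 4)] at h9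
  have h10 := abs_nonneg (hh t z.2 - hh s z.2)
  have h11 := abs_nonneg (t - s)
  nlinarith

lemma hh_close {t η : ℝ} (hη : 0 ≤ η) (ht : t ∈ Icc (0:ℝ) 1) {z z' : Zs e} (hz : z ∈ Bx e) (hz' : z' ∈ Bx e)
    (h1 : ∀ i, |z.2.1 i - z'.2.1 i| ≤ η) (h2 : ∀ i, |z.2.2 i - z'.2.2 i| ≤ η) :
    |hh t z.2 - hh t z'.2| ≤ η := by
  have e1 := hh_sq ht hz
  have e2 := hh_sq ht hz'
  have e3 := hh_ge ht hz
  have e4 := hh_ge ht hz'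
  have hr := rad_pos e
  have hq : |qq z.2 - qq z'.2| ≤ e * (2 * η * (2 * rad e)) := by
    unfold qq
    rw [← Finset.sum_sub_distrib]
    refine (Finset.abs_sum_le_sum_abs _ _).trans ?_
    have : ∀ i ∈ (Finset.univ : Finset (Fin e)), |(z.2.2 i - z.2.1 i) ^ 2 - (z'.2.2 i - z'.2.1 i) ^ 2| ≤
        2 * η * (2 * rad e) := by
      intro i _
      have a := hz.2.1 i
      have b := hz.2.2 i
      have a' := hz'.2.1 i
      have b' := hz'.2.2 i
      have c1 := abs_le.1 (h1 i)
      have c2 := abs_le.1 (h2 i)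
      rw [Set.mem_Ico] at a b a' b'
      have : (z.2.2 i - z.2.1 i) ^ 2 - (z'.2.2 i - z'.2.1 i) ^ 2 =
        ((z.2.2 i - z'.2.2 i) - (z.2.1 i - z'.2.1 i)) *
          ((z.2.2 i - z.2.1 i) + (z'.2.2 i - z'.2.1 i)) := by ring
      rw [this, abs_mul]
      refine mul_le_mul ?_ ?_ (abs_nonneg _) (by positivity)
      · rw [abs_le]; constructor <;> linarith
      · rw [abs_le]; constructor <;> linarith
    have := Finset.sum_le_card_nsmul _ _ _ this
    simpa using this
  have h7 : (hh t z.2 - hh t z'.2) * (hh t z.2 + hh t z'.2) = -(qq z.2 - qq z'.2) := by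
    linear_combination e1 - e2
  have h9 := congrArg abs h7
  rw [abs_mul, abs_neg, abs_of_pos (by linarith : 0 < hh t z.2 + hh t z'.2)] at h9
  have h10 := abs_nonneg (hh t z.2 - hh t z'.2)
  have h11 := rad_mul e
  have h12 : e * (2 * η * (2 * rad e)) ≤ η / 2 := by
    calc e * (2 * η * (2 * rad e)) = 4 * η * (e * rad e) := by ring
      _ ≤ 4 * η * (1 / 8) := by gcongr
      _ = η / 2 := by ring
  nlinarith

lemma dist_xy {t : ℝ} (ht : t ∈ Icc (0:ℝ) 1) {z : Zs e} (hz : z ∈ Bx e) :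
    dist (WithLp.toLp 2 (xv t z) : EuclideanSpace ℝ (Fin (e + 1))) (WithLp.toLp 2 (yv z)) = TT t := by
  rw [EuclideanSpace.dist_eq, Fin.sum_univ_succ]
  simp only [xv, yv, Fin.cons_zero, Fin.cons_succ, dist_eq_norm, norm_eq_abs, sq_abs]
  have h1 := hh_sq ht hz
  have : (z.1 + hh t z.2 - z.1) ^ 2 + ∑ i, (z.2.2 i - z.2.1 i) ^ 2 = TT t ^ 2 := by
    have : ∑ i, (z.2.2 i - z.2.1 i) ^ 2 = qq z.2 := rfl
    rw [this]
    linear_combination h1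
  rw [this, sqrt_sq]
  linarith [(TT_mem ht).1]

lemma cont_hh (t : ℝ) : Continuous (hh (e := e) t) := by
  unfold hh qq
  fun_prop

lemma meas_yv : Measurable (yv (e := e)) := by
  unfold yv
  refine measurable_pi_iff.2 fun i => ?_
  refine Fin.cases ?_ (fun i => ?_) i
  · simpa using measurable_fst
  · simp only [Fin.cons_succ]; fun_prop

lemma meas_xv (t : ℝ) : Measurable (xv (e := e) t) := by
  have := (cont_hh (e := e) t).measurable
  unfold xv
  refine measurable_pi_iff.2 fun i => ?_
  refine Fin.cases ?_ (fun i => ?_) i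
  · simp only [Fin.cons_zero]; fun_prop
  · simp only [Fin.cons_succ]; fun_prop

lemma meas_cell {d : ℕ} (w : List (Alpha d M)) : MeasurableSet {y : Fin d → ℝ | cell w y} := by
  have : {y : Fin d → ℝ | cell w y} = ⋂ i, ({y | (num w i : ℝ) ≤ (M:ℝ) ^ w.length * y i} ∩
      {y | (M:ℝ) ^ w.length * y i < num w i + 1}) := by
    ext y; simp [cell]
  rw [this]
  refine MeasurableSet.iInter fun i => ?_
  exact (measurableSet_le (by fun_prop) (by fun_prop)).inter (measurableSet_lt (by fun_prop) (by fun_prop))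

lemma meas_Bx : MeasurableSet (Bx e) := by
  have : Bx e = (Prod.fst ⁻¹' (Ico 0 (rad e))) ∩ ((⋂ i, (fun z : Zs e => z.2.1 i) ⁻¹' (Ico 0 (rad e))) ∩
     ⋂ i, (fun z : Zs e => z.2.2 i) ⁻¹' (Ico 0 (rad e))) := by
    ext z; simp only [Bx, Set.mem_ofPred_eq, Set.mem_inter_iff, Set.mem_iInter, Set.mem_preimage]
  rw [this]
  refine (measurable_fst measurableSet_Ico).inter (MeasurableSet.inter ?_ ?_)
  · exact MeasurableSet.iInter fun i => measurableSet_Ico.preimage (by fun_prop)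
  · exact MeasurableSet.iInter fun i => measurableSet_Ico.preimage (by fun_prop)

/-- uniform measure on `[0, r)` -/
def Um (e : ℕ) : Measure ℝ := (ENNReal.ofReal (rad e))⁻¹ • volume.restrict (Ico 0 (rad e))

lemma Um_box : Um e (Ico 0 (rad e)) = 1 := by
  have : ENNReal.ofReal (rad e) ≠ 0 := by simpa using rad_pos e
  simp [Um, ENNReal.inv_mul_cancel this]

instance : IsProbabilityMeasure (Um e) := by
  constructor
  have : ENNReal.ofReal (rad e) ≠ 0 := by simpa using rad_pos e
  simp [Um, ENNReal.inv_mul_cancel this]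

lemma Um_le (a b : ℝ) : Um e (Ico a b) ≤ ENNReal.ofReal ((rad e)⁻¹ * (b - a)) := by
  have h0 := rad_pos e
  rw [ENNReal.ofReal_mul (by positivity), ENNReal.ofReal_inv_of_pos h0]
  simp only [Um, Measure.smul_apply, smul_eq_mul]
  gcongr
  refine (Measure.restrict_apply_le _ _).trans ?_
  simp

/-- measure on the parameter space -/
def tau (e : ℕ) : Measure (Zs e) := (Um e).prod ((Measure.pi fun _ => Um e).prod (Measure.pi fun _ => Um e))

instance : IsProbabilityMeasure (tau e) := by unfold tau; infer_instance

lemma tau_prod (I : Set ℝ) (J K : Fin e → Set ℝ) :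
    tau e {z | z.1 ∈ I ∧ (∀ i, z.2.1 i ∈ J i) ∧ ∀ i, z.2.2 i ∈ K i} =
      Um e I * ((∏ i, Um e (J i)) * ∏ i, Um e (K i)) := by
  have : {z : Zs e | z.1 ∈ I ∧ (∀ i, z.2.1 i ∈ J i) ∧ ∀ i, z.2.2 i ∈ K i} =
      I ×ˢ ((Set.univ.pi J) ×ˢ (Set.univ.pi K)) := by
    ext z
    simp
  rw [this, tau, Measure.prod_prod, Measure.prod_prod, Measure.pi_pi, Measure.pi_pi]

lemma tau_Bx : tau e (Bx e) = 1 := by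
  unfold Bx
  rw [tau_prod]
  simp [Um_box]

/-- set of linked parameters -/
def As (t : ℝ) (w w' : List (Alpha (e + 1) M)) : Set (Zs e) :=
  {z | z ∈ Bx e ∧ cell w (yv z) ∧ cell w' (xv t z)}

lemma meas_As (t : ℝ) (w w' : List (Alpha (e + 1) M)) : MeasurableSet (As t w w') :=
  meas_Bx.inter ((meas_yv (meas_cell w)).inter (meas_xv t (meas_cell w')))

def sg (e M : ℕ) (t : ℝ) (w w' : List (Alpha (e + 1) M)) : ℝ := (tau e).real (As t w w')

lemma sg_add (hM : 2 ≤ M) (t : ℝ) (w w' : List (Alpha (e + 1) M)) :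
    sg e M t w w' = ∑ c, ∑ c', sg e M t (w ++ [c]) (w' ++ [c']) := by
  have h : As t w w' = ⋃ x ∈ (Finset.univ : Finset (Alpha (e + 1) M × Alpha (e + 1) M)),
      As t (w ++ [x.1]) (w' ++ [x.2]) := by
    ext z
    simp only [Set.mem_iUnion, As, Set.mem_ofPred_eq]
    constructor
    · rintro ⟨hz, h1, h2⟩
      obtain ⟨c, hc⟩ := cell_child hM h1
      obtain ⟨c', hc'⟩ := cell_child hM h2
      exact ⟨(c, c'), by simp, hz, hc, hc'⟩
    · rintro ⟨x, -, hz, h1, h2⟩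
      exact ⟨hz, cell_parent hM h1, cell_parent hM h2⟩
  unfold sg
  rw [h, measureReal_biUnion_finset, Fintype.sum_prod_type]
  · intro x _ y _ hxy
    rw [Function.onFun, Set.disjoint_left]
    rintro z ⟨_, h1, h2⟩ ⟨_, h3, h4⟩
    exact hxy (Prod.ext (cell_uniq h1 h3) (cell_uniq h2 h4))
  · intro x _
    exact meas_As _ _ _

lemma sg_pos {t : ℝ} {w w' : List (Alpha (e + 1) M)} (h : 0 < sg e M t w w') :
    ∃ z, z ∈ As t w w' := by
  by_contra hcon
  push Not at hcon
  have : As t w w' = ∅ := Set.eq_empty_iff_forall_notMem.2 hcon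
  unfold sg at h
  rw [this] at h
  simp at h

lemma cell_Ico (hM : 2 ≤ M) {d : ℕ} {w : List (Alpha d M)} {y : Fin d → ℝ} (h : cell w y) (i : Fin d) :
    y i ∈ Ico ((num w i : ℝ) / (M:ℝ) ^ w.length) (((num w i : ℝ) + 1) / (M:ℝ) ^ w.length) := by
  have hP : (0:ℝ) < (M:ℝ) ^ w.length := by positivity
  have := h i
  rw [Set.mem_Ico, div_le_iff₀ hP, lt_div_iff₀ hP]
  constructor <;> linarith

lemma sg_bound (hM : 2 ≤ M) (n : ℕ) (t : ℝ) (w : List (Alpha (e + 1) M)) (hw : w ∈ wd (e + 1) M n)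
    (w' : List (Alpha (e + 1) M)) (hw' : w' ∈ wd (e + 1) M n) :
    sg e M t w w' ≤ ((rad e)⁻¹) ^ (2 * e + 1) * (((M:ℝ) ^ (2 * e + 1))⁻¹) ^ n := by
  rw [mem_wd] at hw hw'
  have hr := rad_pos e
  have hU : ∀ a : ℝ, Um e (Ico (a / (M:ℝ) ^ n) ((a + 1) / (M:ℝ) ^ n)) ≤
      ENNReal.ofReal ((rad e)⁻¹ * ((M:ℝ) ^ n)⁻¹) := by
    intro a
    refine (Um_le _ _).trans (le_of_eq ?_)
    congr 2
    field_simp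
    ring
  have h1 : tau e (As t w w') ≤ ENNReal.ofReal (((rad e)⁻¹ * ((M:ℝ) ^ n)⁻¹) ^ (2 * e + 1)) := by
    calc tau e (As t w w') ≤ _ := measure_mono (t := {z : Zs e |
          z.1 ∈ Ico ((num w 0 : ℝ) / (M:ℝ) ^ n) (((num w 0 : ℝ) + 1) / (M:ℝ) ^ n) ∧
          (∀ i, z.2.1 i ∈ (fun i : Fin e => Ico ((num w i.succ : ℝ) / (M:ℝ) ^ n) (((num w i.succ : ℝ) + 1) / (M:ℝ) ^ n)) i) ∧
          (∀ i, z.2.2 i ∈ (fun i : Fin e => Ico ((num w' i.succ : ℝ) / (M:ℝ) ^ n) (((num w' i.succ : ℝ) + 1) / (M:ℝ) ^ n)) i)}) (by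
            rintro z ⟨_, h1, h2⟩
            refine ⟨?_, fun i => ?_, fun i => ?_⟩
            · have := cell_Ico hM h1 0; rwa [hw] at this
            · have := cell_Ico hM h1 i.succ; rwa [hw] at this
            · have := cell_Ico hM h2 i.succ; rwa [hw'] at this)
      _ = _ := tau_prod _ _ _
      _ ≤ ENNReal.ofReal ((rad e)⁻¹ * ((M:ℝ) ^ n)⁻¹) * ((∏ _i : Fin e, ENNReal.ofReal ((rad e)⁻¹ * ((M:ℝ) ^ n)⁻¹))
          * ∏ _i : Fin e, ENNReal.ofReal ((rad e)⁻¹ * ((M:ℝ) ^ n)⁻¹)) := by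
          refine mul_le_mul' (hU _) (mul_le_mul' (Finset.prod_le_prod' fun i _ => hU _)
            (Finset.prod_le_prod' fun i _ => hU _))
      _ = _ := by
          rw [Finset.prod_const, Finset.card_univ, Fintype.card_fin, ENNReal.ofReal_pow (by positivity)]
          ring
  have h2 : sg e M t w w' ≤ ((rad e)⁻¹ * ((M:ℝ) ^ n)⁻¹) ^ (2 * e + 1) := by
    unfold sg
    exact ENNReal.toReal_le_of_le_ofReal (by positivity) h1
  refine h2.trans (le_of_eq ?_)
  rw [mul_pow, inv_pow ((M:ℝ) ^ n), inv_pow ((M:ℝ) ^ _), ← pow_mul, ← pow_mul, mul_comm n]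

lemma num_close (hM : 2 ≤ M) {d n : ℕ} {w w' : List (Alpha d M)} (hw : w.length = n) (hw' : w'.length = n)
    {y y' : Fin d → ℝ} (h : cell w y) (h' : cell w' y') (i : Fin d) (hn : num w i = num w' i) :
    |y i - y' i| ≤ ((M:ℝ) ^ n)⁻¹ := by
  have hP : (0:ℝ) < (M:ℝ) ^ n := by positivity
  have h1 := h i
  have h2 := h' i
  rw [hw, hn] at h1
  rw [hw'] at h2
  have : |(M:ℝ) ^ n * (y i - y' i)| ≤ 1 := by
    rw [abs_le]; constructor <;> linarith
  rw [abs_mul, abs_of_pos hP] at this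
  rwa [← one_div, le_div_iff₀' hP]

lemma num_far {d n : ℕ} (hM : 2 ≤ M) {w w' : List (Alpha d M)} (hw : w.length = n) (hw' : w'.length = n)
    {y y' : Fin d → ℝ} (h : cell w y) (h' : cell w' y') (i : Fin d)
    (hn : |y i - y' i| ≤ 2 * ((M:ℝ) ^ n)⁻¹) : num w i < num w' i + 4 := by
  have hP : (0:ℝ) < (M:ℝ) ^ n := by positivity
  have h1 := h i
  have h2 := h' i
  rw [hw] at h1
  rw [hw'] at h2
  have : |(M:ℝ) ^ n * (y i - y' i)| ≤ 2 := by
    rw [abs_mul, abs_of_pos hP]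
    calc _ ≤ (M:ℝ) ^ n * (2 * ((M:ℝ) ^ n)⁻¹) := by gcongr
      _ = 2 := by field_simp
  have h3 := abs_le.1 this
  have : (num w i : ℝ) < num w' i + 4 := by linarith
  exact_mod_cast this

lemma sg_cntR (hM : 2 ≤ M) (n : ℕ) {t : ℝ} (ht : t ∈ Icc (0:ℝ) 1) (w : List (Alpha (e + 1) M))
    (hw : w ∈ wd (e + 1) M n) (v : List (Alpha (e + 1) M)) :
    cnt n (fun w' => 0 < sg e M t w w') v ≤ 4 * ((M:ℝ) ^ e) ^ (n - v.length) := by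
  refine cnt_le _ _ fun u hu u' hu' h1 h2 hn => ?_
  rw [mem_wd] at hw hu hu'
  obtain ⟨z, hz, hz1, hz2⟩ := sg_pos h1
  obtain ⟨z', hz', hz1', hz2'⟩ := sg_pos h2
  refine num_far hM hu hu' hz2 hz2' 0 ?_
  have hc := hh_close (t := t) (η := ((M:ℝ) ^ n)⁻¹) (by positivity) ht hz hz'
    (fun i => num_close hM hw hw hz1 hz1' i.succ rfl) (fun i => num_close hM hu hu' hz2 hz2' i.succ (hn i))
  have h0 : |z.1 - z'.1| ≤ _ := num_close hM hw hw hz1 hz1' 0 rfl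
  simp only [xv, Fin.cons_zero]
  rw [abs_le] at *
  constructor <;> linarith [hc.1, hc.2, h0.1, h0.2]

lemma sg_cntL (hM : 2 ≤ M) (n : ℕ) {t : ℝ} (ht : t ∈ Icc (0:ℝ) 1) (w : List (Alpha (e + 1) M))
    (hw : w ∈ wd (e + 1) M n) (v : List (Alpha (e + 1) M)) :
    cnt n (fun w' => 0 < sg e M t w' w) v ≤ 4 * ((M:ℝ) ^ e) ^ (n - v.length) := by
  refine cnt_le _ _ fun u hu u' hu' h1 h2 hn => ?_
  rw [mem_wd] at hw hu hu'
  obtain ⟨z, hz, hz1, hz2⟩ := sg_pos h1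
  obtain ⟨z', hz', hz1', hz2'⟩ := sg_pos h2
  refine num_far hM hu hu' hz1 hz1' 0 ?_
  have hc := hh_close (t := t) (η := ((M:ℝ) ^ n)⁻¹) (by positivity) ht hz hz'
    (fun i => num_close hM hu hu' hz1 hz1' i.succ (hn i)) (fun i => num_close hM hw hw hz2 hz2' i.succ rfl)
  have h0 : |(z.1 + hh t z.2) - (z'.1 + hh t z'.2)| ≤ _ := num_close hM hw hw hz2 hz2' 0 rfl
  simp only [yv, Fin.cons_zero]
  rw [abs_le] at *
  constructor <;> linarith [hc.1, hc.2, h0.1, h0.2]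

lemma sg_left (hM : 2 ≤ M) (n : ℕ) (h3 : 3 ≤ n) {t : ℝ} (ht : t ∈ Icc (0:ℝ) 1) (w : List (Alpha (e + 1) M))
    (w' : List (Alpha (e + 1) M)) (hw' : w' ∈ wd (e + 1) M n) (h : 0 < sg e M t w w') :
    wordBase (e + 1) M w 0 < rad e ∧ ¬ wordBase (e + 1) M w' 0 < rad e := by
  obtain ⟨z, hz, hz1, hz2⟩ := sg_pos h
  rw [mem_wd] at hw'
  rw [wordBase_eq hM, wordBase_eq hM]
  constructor
  · have := (cell_Ico hM hz1 0).1
    exact lt_of_le_of_lt this hz.1.2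
  · have h1 := (cell_Ico hM hz2 0).2
    have h2 : xv t z 0 = z.1 + hh t z.2 := rfl
    have h4 := hh_ge ht hz
    have h5 := hz.1.1
    have hP : (8:ℝ) ≤ (M:ℝ) ^ w'.length := by
      rw [hw']
      calc (8:ℝ) = 2 ^ 3 := by norm_num
        _ ≤ 2 ^ n := pow_le_pow_right₀ (by norm_num) h3
        _ ≤ (M:ℝ) ^ n := by gcongr; exact_mod_cast hM
    have h6 : 1 / (M:ℝ) ^ w'.length ≤ 1 / 8 := one_div_le_one_div_of_le (by norm_num) hP
    rw [add_div] at h1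
    have := rad_le e
    rw [not_lt]
    linarith

end geo


section geo2
variable {e M : ℕ}

lemma As_diff (hM : 2 ≤ M) {t s : ℝ} (ht : t ∈ Icc (0:ℝ) 1) (hs : s ∈ Icc (0:ℝ) 1)
    (w w' : List (Alpha (e + 1) M)) :
    tau e (As t w w' \ As s w w') ≤ ENNReal.ofReal (2 * (rad e)⁻¹ * |t - s|) := by
  have hr := rad_pos e
  have hmeas : MeasurableSet (As t w w' \ As s w w') := (meas_As _ _ _).diff (meas_As _ _ _)
  unfold tau
  rw [Measure.prod_apply_symm hmeas]
  have key : ∀ v, Um e ((fun x => (x, v)) ⁻¹' (As t w w' \ As s w w')) ≤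
      ENNReal.ofReal (2 * (rad e)⁻¹ * |t - s|) := by
    intro v
    by_cases hv : ∃ x, (x, v) ∈ As t w w' \ As s w w'
    swap
    · have : (fun x => (x, v)) ⁻¹' (As t w w' \ As s w w') = ∅ := by
        rw [Set.eq_empty_iff_forall_notMem]
        intro x hx
        exact hv ⟨x, hx⟩
      rw [this]; simp
    obtain ⟨x0, hx0⟩ := hv
    have hl := hh_lip ht hs hx0.1.1
    simp only at hl
    set a : ℝ := (num w' 0 : ℝ) / (M:ℝ) ^ w'.length with ha
    set b : ℝ := ((num w' 0 : ℝ) + 1) / (M:ℝ) ^ w'.length with hb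
    have hPp : (0:ℝ) < (M:ℝ) ^ w'.length := by positivity
    have hsub : (fun x => (x, v)) ⁻¹' (As t w w' \ As s w w') ⊆
        Ico (a - hh t v) (a - hh s v) ∪ Ico (b - hh s v) (b - hh t v) := by
      rintro x ⟨⟨h1, h2, h3⟩, h4⟩
      have h5 := cell_Ico hM h3 0
      have h6 : xv t (x, v) 0 = x + hh t v := rfl
      rw [h6, ← ha, ← hb] at h5
      have h7 : ¬ (x + hh s v ∈ Ico a b) := by
        intro h7
        refine h4 ⟨h1, h2, fun i => ?_⟩
        refine Fin.cases ?_ (fun i => ?_) i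
        · have h8 : xv s (x, v) 0 = x + hh s v := rfl
          rw [h8]
          have h9 := h7.1
          have h10 := h7.2
          rw [ha, div_le_iff₀ hPp] at h9
          rw [hb, lt_div_iff₀ hPp] at h10
          constructor <;> linarith
        · exact h3 i.succ
      by_cases h8 : x + hh s v < a
      · left; constructor <;> linarith [h5.1]
      · right
        have : b ≤ x + hh s v := by
          by_contra h9
          exact h7 ⟨not_lt.1 h8, not_le.1 h9⟩
        constructor <;> linarith [h5.2]
    have hl2 := abs_le.1 hl
    calc _ ≤ Um e (Ico (a - hh t v) (a - hh s v) ∪ Ico (b - hh s v) (b - hh t v)) := measure_mono hsub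
      _ ≤ _ + _ := measure_union_le _ _
      _ ≤ ENNReal.ofReal ((rad e)⁻¹ * |t - s|) + ENNReal.ofReal ((rad e)⁻¹ * |t - s|) := by
          gcongr
          · refine (Um_le _ _).trans (ENNReal.ofReal_le_ofReal ?_)
            gcongr; linarith
          · refine (Um_le _ _).trans (ENNReal.ofReal_le_ofReal ?_)
            gcongr; linarith
      _ = _ := by
          rw [← ENNReal.ofReal_add (by positivity) (by positivity)]
          congr 1; ring
  refine (lintegral_mono key).trans ?_
  simp

lemma sg_lip1 (hM : 2 ≤ M) {t s : ℝ} (ht : t ∈ Icc (0:ℝ) 1) (hs : s ∈ Icc (0:ℝ) 1)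
    (w w' : List (Alpha (e + 1) M)) :
    sg e M t w w' - sg e M s w w' ≤ 2 * (rad e)⁻¹ * |t - s| := by
  have hr := rad_pos e
  have h1 : (tau e).real (As t w w' \ As s w w') ≤ 2 * (rad e)⁻¹ * |t - s| :=
    ENNReal.toReal_le_of_le_ofReal (by positivity) (As_diff hM ht hs w w')
  have h2 : (tau e).real (As t w w') ≤ (tau e).real (As s w w') + (tau e).real (As t w w' \ As s w w') := by
    refine (measureReal_mono (fun x hx => ?_)).trans (measureReal_union_le _ _)
    by_cases h : x ∈ As s w w'
    · exact Or.inl h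
    · exact Or.inr ⟨hx, h⟩
  unfold sg
  linarith

lemma sg_tot (t : ℝ) (ht : t ∈ Icc (0:ℝ) 1) : sg e M t [] [] = 1 := by
  have : As (M := M) t [] [] = Bx e := by
    ext z
    simp only [As, Set.mem_ofPred_eq, cell_nil]
    refine ⟨fun h => h.1, fun h => ⟨h, fun i => ?_, fun i => ?_⟩⟩
    · have hr := rad_le e
      refine Fin.cases ?_ (fun i => ?_) i
      · have := h.1; simp only [yv, Fin.cons_zero]; constructor <;> linarith [this.1, this.2]
      · have := h.2.1 i; simp only [yv, Fin.cons_succ]; constructor <;> linarith [this.1, this.2]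
    · have hr := rad_le e
      have h1 := hh_ge ht h
      have h2 := hh_le ht h
      refine Fin.cases ?_ (fun i => ?_) i
      · have := h.1; simp only [xv, Fin.cons_zero]; constructor <;> linarith [this.1, this.2]
      · have := h.2.2 i; simp only [xv, Fin.cons_succ]; constructor <;> linarith [this.1, this.2]
  unfold sg
  rw [this, measureReal_def, tau_Bx]
  simp

/-- the constant -/
def CC (e : ℕ) : ℝ := ((rad e)⁻¹) ^ (2 * e + 1) + 4 + 2 * (rad e)⁻¹

lemma CC_pos (e : ℕ) : 0 < CC e := by
  have := rad_pos e
  unfold CC; positivity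

lemma sg_link (hM : 2 ≤ M) :
    LinkSys (e + 1) M (CC e) (sg e M) (fun w => wordBase (e + 1) M w 0 < rad e) := by
  have hr := rad_pos e
  have hr' : 0 < (rad e)⁻¹ := by positivity
  have hp' : 0 < ((rad e)⁻¹) ^ (2 * e + 1) := by positivity
  have h1 : ((rad e)⁻¹) ^ (2 * e + 1) ≤ CC e := by unfold CC; linarith
  have h2 : 4 ≤ CC e := by unfold CC; linarith
  have h3 : 2 * (rad e)⁻¹ ≤ CC e := by unfold CC; linarith
  have hM1 : (1:ℝ) ≤ M := by exact_mod_cast (by omega : 1 ≤ M)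
  refine ⟨fun _ _ _ => measureReal_nonneg, fun n t w _ w' _ => sg_add hM t w w', ?_, ?_, ?_, ?_, ?_, sg_tot⟩
  · intro n t _ w hw w' hw'
    refine (sg_bound hM n t w hw w' hw').trans ?_
    have : 2 * (e + 1) - 1 = 2 * e + 1 := by omega
    rw [this]
    gcongr
  · intro n hn t ht w _ w' hw' h
    exact sg_left hM n hn ht w w' hw' h
  · intro n t ht w hw v _
    refine (sg_cntR hM n ht w hw v).trans ?_
    rw [Nat.add_sub_cancel]
    gcongr
  · intro n t ht w hw v _
    refine (sg_cntL hM n ht w hw v).trans ?_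
    rw [Nat.add_sub_cancel]
    gcongr
  · intro n t ht s hs w _ w' _
    have a1 := sg_lip1 hM ht hs w w'
    have a2 := sg_lip1 hM hs ht w w'
    rw [abs_sub_comm s t] at a2
    have : |sg e M t w w' - sg e M s w w'| ≤ 2 * (rad e)⁻¹ * |t - s| := by
      rw [abs_le]; constructor <;> linarith
    refine this.trans (mul_le_mul_of_nonneg_right ?_ (abs_nonneg _))
    calc 2 * (rad e)⁻¹ = 2 * (rad e)⁻¹ * 1 := by ring
      _ ≤ CC e * (M:ℝ) ^ n := by
        gcongr
        exact one_le_pow₀ hM1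

end geo2


section det
variable {d M : ℕ}

lemma cube_closed (w : List (Alpha d M)) : IsClosed (wordCube d M w) := by
  have : wordCube d M w = ⋂ i, ({x | wordBase d M w i ≤ x i} ∩
      {x | x i ≤ wordBase d M w i + (M : ℝ) ^ (-(w.length : ℤ))}) := by
    ext x; simp [wordCube]
  rw [this]
  refine isClosed_iInter fun i => ?_
  exact (isClosed_le (by fun_prop) (by fun_prop)).inter (isClosed_le (by fun_prop) (by fun_prop))

lemma approx_closed (ω : PercSpace d M) (n : ℕ) : IsClosed (approx d M ω n) := by
  unfold approx
  refine Set.Finite.isClosed_biUnion ?_ fun w _ => cube_closed w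
  refine (wd d M n).finite_toSet.subset ?_
  rintro w ⟨h, _⟩
  rw [Finset.mem_coe, mem_wd]; exact h

lemma cube_snoc (hM : 2 ≤ M) (w : List (Alpha d M)) (c : Alpha d M) :
    wordCube d M (w ++ [c]) ⊆ wordCube d M w := by
  intro x hx i
  have h := hx i
  have hP : (0:ℝ) < (M:ℝ) ^ (w.length + 1) := by positivity
  have hc : (((c i : ℕ) : ℝ)) + 1 ≤ M := by exact_mod_cast (c i).2
  rw [wordBase_snoc hM] at h
  have h1 : (M : ℝ) ^ (-((w ++ [c]).length : ℤ)) = 1 / (M:ℝ) ^ (w.length + 1) := by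
    rw [zpow_neg, one_div, zpow_natCast]; simp
  have h2 : (M : ℝ) ^ (-(w.length : ℤ)) = M / (M:ℝ) ^ (w.length + 1) := by
    rw [zpow_neg, zpow_natCast, pow_succ]
    have : (M:ℝ) ≠ 0 := by positivity
    field_simp
  rw [h1] at h
  rw [h2]
  have h3 : 0 ≤ ((c i : ℕ) : ℝ) / (M:ℝ) ^ (w.length + 1) := by positivity
  have h4 : ((c i : ℕ) : ℝ) / (M:ℝ) ^ (w.length + 1) + 1 / (M:ℝ) ^ (w.length + 1) ≤
      M / (M:ℝ) ^ (w.length + 1) := by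
    rw [← add_div]; gcongr
  constructor <;> linarith [h.1, h.2]

lemma cube_bdd (hM : 2 ≤ M) (w : List (Alpha d M)) : wordCube d M w ⊆ wordCube d M [] := by
  induction w using List.reverseRecOn with
  | nil => exact subset_rfl
  | append_singleton w c ih => exact (cube_snoc hM w c).trans ih

lemma cube_compact : IsCompact (wordCube d M []) := by
  have h : IsCompact (Set.univ.pi fun _ : Fin d => Icc (0:ℝ) 1) :=
    isCompact_univ_pi fun _ => isCompact_Icc
  have h2 := h.image (PiLp.continuous_toLp 2 (fun _ : Fin d => ℝ))
  convert h2 using 1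
  ext x
  simp only [wordCube, wordBase_nil, Set.mem_ofPred_eq, Set.mem_image, Set.mem_univ_pi]
  constructor
  · intro hx
    exact ⟨x.ofLp, fun i => ⟨(hx i).1, by simpa using (hx i).2⟩, rfl⟩
  · rintro ⟨y, hy, rfl⟩ i
    exact ⟨(hy i).1, by simpa using (hy i).2⟩

lemma ret_pref {ω : PercSpace d M} {u w : List (Alpha d M)} (h : Retained d M ω w) (hu : u <+: w) :
    Retained d M ω u := fun v hv hvu => h v hv (hvu.trans hu)

lemma approx_succ (hM : 2 ≤ M) (ω : PercSpace d M) (n : ℕ) : approx d M ω (n + 1) ⊆ approx d M ω n := by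
  intro x hx
  simp only [approx, Set.mem_iUnion, Set.mem_ofPred_eq] at hx ⊢
  obtain ⟨w, ⟨hl, hr⟩, hx⟩ := hx
  rcases List.eq_nil_or_concat w with rfl | ⟨v, c, rfl⟩
  · simp at hl
  · simp only [List.concat_eq_append] at *
    exact ⟨v, ⟨by simpa using hl, ret_pref hr (List.prefix_append _ _)⟩, cube_snoc hM v c hx⟩

lemma approx_anti (hM : 2 ≤ M) (ω : PercSpace d M) : Antitone (approx d M ω) :=
  antitone_nat_of_succ_le fun n => approx_succ hM ω n

/-- the distance set contains an interval -/
def DI (ω : PercSpace d M) : Prop := ∃ a b : ℝ, a < b ∧ Set.Ioo a b ⊆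
        {r | ∃ x ∈ percLimit d M ω, ∃ y ∈ percLimit d M ω, r = dist x y}

lemma G0_DI {e R k : ℕ} (hM : 2 ≤ M) (hR : 2 ≤ R) {ω : PercSpace (e + 1) M}
    (h : ω ∈ G0 (sg e M) R k) : DI ω := by
  refine ⟨1 / 2, 3 / 4, by norm_num, fun r hr => ?_⟩
  set t : ℝ := 4 * (r - 1 / 2) with htd
  have ht : t ∈ Icc (0:ℝ) 1 := by constructor <;> linarith [hr.1, hr.2]
  have hrt : r = TT t := by unfold TT; linarith
  have hR1 : (1:ℝ) < R := by exact_mod_cast (by omega : 1 < R)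
  have hRp : ∀ n : ℕ, (0:ℝ) < (R:ℝ) ^ n := fun n => by positivity
  let ts : ℕ → ℝ := fun n => (⌊t * (R:ℝ) ^ n⌋₊ : ℝ) / (R:ℝ) ^ n
  have hts : Filter.Tendsto ts Filter.atTop (nhds t) :=
    (tendsto_nat_floor_mul_div_atTop ht.1).comp (tendsto_pow_atTop_atTop_of_one_lt hR1)
  have hle : ∀ n : ℕ, ⌊t * (R:ℝ) ^ n⌋₊ ≤ R ^ n := by
    intro n
    have : t * (R:ℝ) ^ n ≤ ((R ^ n : ℕ) : ℝ) := by
      push_cast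
      nlinarith [ht.2, hRp n]
    exact Nat.floor_le_of_le this
  have htm : ∀ n, ts n ∈ Icc (0:ℝ) 1 := by
    intro n
    refine ⟨by positivity, ?_⟩
    rw [div_le_one (hRp n)]
    exact_mod_cast hle n
  have hex : ∀ n, ∃ q : EuclideanSpace ℝ (Fin (e + 1)) × EuclideanSpace ℝ (Fin (e + 1)),
      q.1 ∈ approx (e + 1) M ω (n + k) ∧ q.2 ∈ approx (e + 1) M ω (n + k) ∧ dist q.1 q.2 = TT (ts (n + k)) := by
    intro n
    obtain ⟨w, hw, w', hw', hr1, hr2, hs⟩ := h (n + k) (by omega) _ (hle (n + k))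
    obtain ⟨z, hz, hz1, hz2⟩ := sg_pos hs
    rw [mem_wd] at hw hw'
    refine ⟨(WithLp.toLp 2 (xv (ts (n + k)) z), WithLp.toLp 2 (yv z)), ?_, ?_, dist_xy (htm _) hz⟩
    · simp only [approx, Set.mem_iUnion, Set.mem_ofPred_eq]
      exact ⟨w', ⟨hw', hr2⟩, cell_cube hM hz2⟩
    · simp only [approx, Set.mem_iUnion, Set.mem_ofPred_eq]
      exact ⟨w, ⟨hw, hr1⟩, cell_cube hM hz1⟩
  choose q hq1 hq2 hq3 using hex
  have hK : IsCompact (wordCube (e + 1) M [] ×ˢ wordCube (e + 1) M []) := cube_compact.prod cube_compact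
  have hsub : ∀ n, approx (e + 1) M ω n ⊆ wordCube (e + 1) M [] := by
    intro n
    exact Set.iUnion₂_subset fun w _ => cube_bdd hM w
  obtain ⟨⟨x, y⟩, -, φ, hφ, hlim⟩ := hK.tendsto_subseq (x := q)
    (fun n => ⟨hsub _ (hq1 n), hsub _ (hq2 n)⟩)
  have hx := (continuous_fst.tendsto _).comp hlim
  have hy := (continuous_snd.tendsto _).comp hlim
  have hin : ∀ (m n : ℕ), m ≤ n → approx (e + 1) M ω (φ n + k) ⊆ approx (e + 1) M ω m := by
    intro m n hmn
    apply approx_anti hM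
    have := hφ.id_le n
    simp only [id] at this
    omega
  refine ⟨x, ?_, y, ?_, ?_⟩
  · refine Set.mem_iInter₂.2 fun m _ => ?_
    refine (approx_closed ω m).mem_of_tendsto hx ?_
    filter_upwards [Filter.eventually_ge_atTop m] with n hn
    exact hin m n hn (hq1 _)
  · refine Set.mem_iInter₂.2 fun m _ => ?_
    refine (approx_closed ω m).mem_of_tendsto hy ?_
    filter_upwards [Filter.eventually_ge_atTop m] with n hn
    exact hin m n hn (hq2 _)
  · have h1 : Filter.Tendsto (fun n => dist (q (φ n)).1 (q (φ n)).2) Filter.atTop (nhds (dist x y)) :=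
      hx.dist hy
    have h2 : Filter.Tendsto (fun n => TT (ts (φ n + k))) Filter.atTop (nhds (TT t)) := by
      have hc : Continuous TT := by unfold TT; fun_prop
      refine (hc.tendsto t).comp (hts.comp ?_)
      exact (Filter.tendsto_add_atTop_nat k).comp hφ.tendsto_atTop
    simp_rw [hq3] at h1
    rw [hrt]
    exact tendsto_nhds_unique h2 h1

/-- one-letter shift -/
def sh (c : Alpha d M) (ω : PercSpace d M) : PercSpace d M := fun w => ω ⟨c :: w.1, by simp⟩

lemma ret_sh (c : Alpha d M) (ω : PercSpace d M) (w : List (Alpha d M)) :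
    Retained d M ω (c :: w) ↔ ω ⟨[c], by simp⟩ = true ∧ Retained d M (sh c ω) w := by
  constructor
  · intro h
    refine ⟨h [c] (by simp) (by simp), fun u hu huw => ?_⟩
    exact h (c :: u) (by simp) (by simpa using huw)
  · rintro ⟨h1, h2⟩ u hu huw
    cases u with
    | nil => exact absurd rfl hu
    | cons a u =>
      rw [List.cons_prefix_cons] at huw
      obtain ⟨rfl, huw⟩ := huw
      by_cases hu0 : u = []
      · subst hu0; exact h1
      · exact h2 u hu0 huw

/-- contraction -/
def ctr (c : Alpha d M) (x : EuclideanSpace ℝ (Fin d)) : EuclideanSpace ℝ (Fin d) :=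
  WithLp.toLp 2 fun i => (((c i : ℕ) : ℝ) + x i) / M

lemma ctr_cube (hM : 2 ≤ M) (c : Alpha d M) (w : List (Alpha d M)) {x : EuclideanSpace ℝ (Fin d)}
    (hx : x ∈ wordCube d M w) : ctr c x ∈ wordCube d M (c :: w) := by
  intro i
  have h := hx i
  have hM0 : (0:ℝ) < M := by positivity
  rw [wordBase_cons hM]
  have h1 : (M:ℝ) ^ (-((c :: w).length : ℤ)) = (M:ℝ) ^ (-(w.length : ℤ)) / M := by
    rw [zpow_neg, zpow_neg, zpow_natCast, zpow_natCast, List.length_cons, pow_succ]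
    field_simp
  rw [h1, ← add_div]
  simp only [ctr]
  constructor
  · gcongr; exact h.1
  · exact div_le_div_of_nonneg_right (by linarith [h.2]) hM0.le

lemma ctr_lim (hM : 2 ≤ M) (c : Alpha d M) {ω : PercSpace d M} (hc : ω ⟨[c], by simp⟩ = true)
    {x : EuclideanSpace ℝ (Fin d)} (hx : x ∈ percLimit d M (sh c ω)) : ctr c x ∈ percLimit d M ω := by
  have hx' : ∀ m, x ∈ approx d M (sh c ω) m := by
    intro m
    have := Set.mem_iInter₂.1 hx (m + 1) (by simp)
    exact approx_succ hM _ _ this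
  refine Set.mem_iInter₂.2 fun n hn => ?_
  obtain ⟨m, rfl⟩ : ∃ m, n = m + 1 := ⟨n - 1, by have : 1 ≤ n := hn; omega⟩
  have := hx' m
  simp only [approx, Set.mem_iUnion, Set.mem_ofPred_eq] at this ⊢
  obtain ⟨w, ⟨hl, hr⟩, hw⟩ := this
  exact ⟨c :: w, ⟨by simp [hl], (ret_sh c ω w).2 ⟨hc, hr⟩⟩, ctr_cube hM c w hw⟩

lemma ctr_dist (hM : 2 ≤ M) (c : Alpha d M) (x y : EuclideanSpace ℝ (Fin d)) :
    dist (ctr c x) (ctr c y) = dist x y / M := by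
  have hM0 : (0:ℝ) < M := by positivity
  have : ctr c x - ctr c y = (M:ℝ)⁻¹ • (x - y) := by
    ext i
    simp only [ctr, PiLp.sub_apply, PiLp.smul_apply, smul_eq_mul]
    field_simp
    ring
  rw [dist_eq_norm, this, norm_smul, dist_eq_norm, norm_inv, norm_eq_abs, abs_of_pos hM0]
  field_simp

lemma DI_sh (hM : 2 ≤ M) (c : Alpha d M) {ω : PercSpace d M} (hc : ω ⟨[c], by simp⟩ = true)
    (h : DI (sh c ω)) : DI ω := by
  have hM0 : (0:ℝ) < M := by positivity
  obtain ⟨a, b, hab, hs⟩ := h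
  refine ⟨a / M, b / M, by gcongr, fun r hr => ?_⟩
  have hr1 := hr.1
  have hr2 := hr.2
  rw [div_lt_iff₀ hM0] at hr1
  rw [lt_div_iff₀ hM0] at hr2
  obtain ⟨x, hx, y, hy, hxy⟩ := hs ⟨hr1, hr2⟩
  refine ⟨ctr c x, ctr_lim hM c hc hx, ctr c y, ctr_lim hM c hc hy, ?_⟩
  rw [ctr_dist hM, ← hxy]
  field_simp

/-- word shift -/
def shw : List (Alpha d M) → PercSpace d M → PercSpace d M
  | [], ω => ω
  | c :: u, ω => shw u (sh c ω)

lemma DI_shw (hM : 2 ≤ M) (u : List (Alpha d M)) {ω : PercSpace d M} (hu : Retained d M ω u)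
    (h : DI (shw u ω)) : DI ω := by
  induction u generalizing ω with
  | nil => exact h
  | cons c u ih =>
    rw [ret_sh] at hu
    exact DI_sh hM c hu.1 (ih hu.2 h)

end det


section zo
variable {d M : ℕ}

/-- Bernoulli measure -/
def bern (p : ℝ) : Measure Bool :=
  ENNReal.ofReal p • Measure.dirac true + ENNReal.ofReal (1 - p) • Measure.dirac false

lemma bern_apply (p : ℝ) (s : Set Bool) : bern p s =
    ENNReal.ofReal p * s.indicator 1 true + ENNReal.ofReal (1 - p) * s.indicator 1 false := by
  simp [bern]

lemma bern_prob {p : ℝ} (hp0 : 0 ≤ p) (hp1 : p ≤ 1) : IsProbabilityMeasure (bern p) := by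
  constructor
  rw [bern_apply]
  simp only [Set.indicator_univ, Pi.one_apply, mul_one]
  rw [← ENNReal.ofReal_add hp0 (by linarith)]
  simp

/-- assembling a labeling from its first-level pieces -/
def Phi (g : Alpha d M → Bool × PercSpace d M) : PercSpace d M := fun w =>
  match w with
  | ⟨[], _⟩ => false
  | ⟨[c], _⟩ => (g c).1
  | ⟨c :: a :: u, _⟩ => (g c).2 ⟨a :: u, by simp⟩

lemma Phi_one (g : Alpha d M → Bool × PercSpace d M) (c : Alpha d M) :
    Phi g ⟨[c], by simp⟩ = (g c).1 := rfl

lemma Phi_sh (g : Alpha d M → Bool × PercSpace d M) (c : Alpha d M) : sh c (Phi g) = (g c).2 := by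
  funext w
  obtain ⟨w, hw⟩ := w
  cases w with
  | nil => exact absurd rfl hw
  | cons a u => rfl

lemma meas_Phi : Measurable (Phi (d := d) (M := M)) := by
  refine measurable_pi_iff.2 fun w => ?_
  obtain ⟨w, hw⟩ := w
  match w, hw with
  | [], h => exact absurd rfl h
  | [c], h => exact measurable_fst.comp (measurable_pi_apply c)
  | c :: a :: u, h => exact (measurable_pi_apply _).comp (measurable_snd.comp (measurable_pi_apply c))

lemma meas_sh (c : Alpha d M) : Measurable (sh (d := d) (M := M) c) := by
  refine measurable_pi_iff.2 fun w => ?_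
  exact measurable_pi_apply _

lemma meas_shw (u : List (Alpha d M)) : Measurable (shw (d := d) (M := M) u) := by
  induction u with
  | nil => exact measurable_id
  | cons c u ih => exact ih.comp (meas_sh c)

/-- prepend a letter -/
def cns (c : Alpha d M) : Word d M ↪ Word d M :=
  ⟨fun w => ⟨c :: w.1, by simp⟩, fun w w' h => by
    simp only [Subtype.mk.injEq, List.cons.injEq, true_and] at h
    exact Subtype.ext h⟩

/-- one-letter word -/
def sgl (c : Alpha d M) : Word d M := ⟨[c], by simp⟩

/-- first letter -/
def hd1 (w : Word d M) : Alpha d M := w.1.head w.2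

lemma hd1_cases (w : Word d M) : w = sgl (hd1 w) ∨ ∃ v, w = cns (hd1 w) v := by
  obtain ⟨w, hw⟩ := w
  match w, hw with
  | [], h => exact absurd rfl h
  | [c], h => exact Or.inl rfl
  | c :: a :: u, h => exact Or.inr ⟨⟨a :: u, by simp⟩, rfl⟩

open Classical in
lemma card_split (S : Finset (Word d M)) :
    S.card = ∑ c, ((if sgl c ∈ S then 1 else 0) + (S.preimage (cns c) (cns c).injective.injOn).card) := by
  rw [Finset.card_eq_sum_card_fiberwise (f := hd1) (t := Finset.univ) (fun _ _ => by simp)]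
  refine Finset.sum_congr rfl fun c _ => ?_
  have : S.filter (fun w => hd1 w = c) = (if sgl c ∈ S then {sgl c} else ∅) ∪
      (S.preimage (cns c) (cns c).injective.injOn).map (cns c) := by
    ext w
    simp only [Finset.mem_filter, Finset.mem_union, Finset.mem_map, Finset.mem_preimage]
    constructor
    · rintro ⟨h1, rfl⟩
      rcases hd1_cases w with h | ⟨v, h⟩
      · left
        rw [← h, if_pos h1]; simp
      · right
        exact ⟨v, h ▸ h1, h.symm⟩
    · rintro (h | ⟨v, h1, rfl⟩)
      · split_ifs at h with h2
        · rw [Finset.mem_singleton] at h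
          subst h
          exact ⟨h2, rfl⟩
        · simp at h
      · exact ⟨h1, rfl⟩
  rw [this, Finset.card_union_of_disjoint, Finset.card_map]
  · split_ifs <;> simp
  · rw [Finset.disjoint_left]
    intro w hw h
    split_ifs at hw with h2
    · rw [Finset.mem_singleton] at hw
      subst hw
      rw [Finset.mem_map] at h
      obtain ⟨v, _, hv⟩ := h
      have h3 : c :: v.1 = [c] := congrArg Subtype.val hv
      exact v.2 (List.cons.inj h3).2
    · simp at hw

open Classical in
lemma map_Phi {p : ℝ} (hp0 : 0 ≤ p) (hp1 : p ≤ 1) {P : Measure (PercSpace d M)}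
    (hP : IsBernoulliPerc d M p P) :
    (Measure.pi fun _ : Alpha d M => (bern p).prod P).map Phi = P := by
  have := hP.1
  have := bern_prob hp0 hp1
  have : IsProbabilityMeasure ((Measure.pi fun _ : Alpha d M => (bern p).prod P).map Phi) :=
    Measure.isProbabilityMeasure_map meas_Phi.aemeasurable
  refine perc_uniq fun S => ?_
  rw [Measure.map_apply meas_Phi (meas_cyl S), perc_cyl hP]
  have : Phi ⁻¹' {ω : PercSpace d M | ∀ w ∈ S, ω w = true} = Set.univ.pi fun c =>
      {b : Bool | sgl c ∈ S → b = true} ×ˢ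
        {ω : PercSpace d M | ∀ w ∈ S.preimage (cns c) (cns c).injective.injOn, ω w = true} := by
    ext g
    simp only [Set.mem_preimage, Set.mem_ofPred_eq, Set.mem_univ_pi, Set.mem_prod, Finset.mem_preimage]
    constructor
    · intro h c
      refine ⟨fun hc => h _ hc, fun w hw => ?_⟩
      have := h _ hw
      rw [← Phi_sh]
      exact this
    · intro h w hw
      rcases hd1_cases w with h1 | ⟨v, h1⟩
      · have := (h (hd1 w)).1 (h1 ▸ hw)
        rw [h1]; exact this
      · have := (h (hd1 w)).2 v (h1 ▸ hw)
        rw [← Phi_sh] at this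
        rw [h1]; exact this
  rw [this, Measure.pi_pi]
  simp_rw [Measure.prod_prod, perc_cyl hP]
  have hb : ∀ c, bern p {b : Bool | sgl c ∈ S → b = true} = ENNReal.ofReal p ^ (if sgl c ∈ S then 1 else 0) := by
    intro c
    by_cases h : sgl c ∈ S
    · rw [bern_apply]; simp [h, Set.indicator]
    · rw [if_neg h]
      have : {b : Bool | sgl c ∈ S → b = true} = Set.univ := by ext; simp [h]
      rw [this, measure_univ, pow_zero]
  simp_rw [hb, ← pow_add]
  rw [Finset.prod_pow_eq_pow_sum, ← card_split]

lemma branch {p : ℝ} (hp0 : 0 ≤ p) (hp1 : p ≤ 1) {P : Measure (PercSpace d M)}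
    (hP : IsBernoulliPerc d M p P) {B : Set (PercSpace d M)} (hB : MeasurableSet B) :
    P.real {ω | ∀ c, ω (sgl c) = true → sh c ω ∈ B} = (1 - p + p * P.real B) ^ (M ^ d) := by
  have := hP.1
  have := bern_prob hp0 hp1
  have hm : MeasurableSet {ω : PercSpace d M | ∀ c, ω (sgl c) = true → sh c ω ∈ B} := by
    have : {ω : PercSpace d M | ∀ c, ω (sgl c) = true → sh c ω ∈ B} =
        ⋂ c, ({ω | ω (sgl c) = true}ᶜ ∪ sh c ⁻¹' B) := by
      ext ω; simp [imp_iff_not_or]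
    rw [this]
    exact MeasurableSet.iInter fun c => (meas_label _).compl.union (meas_sh c hB)
  have h1 : P {ω | ∀ c, ω (sgl c) = true → sh c ω ∈ B} =
      (ENNReal.ofReal p * P B + ENNReal.ofReal (1 - p)) ^ (M ^ d) := by
    conv_lhs => rw [← map_Phi hp0 hp1 hP]
    rw [Measure.map_apply meas_Phi hm]
    have : Phi ⁻¹' {ω : PercSpace d M | ∀ c, ω (sgl c) = true → sh c ω ∈ B} =
        Set.univ.pi fun _ => {x : Bool × PercSpace d M | x.1 = true → x.2 ∈ B} := by
      ext g
      simp only [Set.mem_preimage, Set.mem_ofPred_eq, Set.mem_univ_pi, Phi_sh]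
      rfl
    rw [this, Measure.pi_pi, Finset.prod_const]
    have hU : {x : Bool × PercSpace d M | x.1 = true → x.2 ∈ B} =
        ({true} : Set Bool) ×ˢ B ∪ ({false} : Set Bool) ×ˢ Set.univ := by
      ext ⟨b, ω⟩
      cases b <;> simp
    have hU2 : ((bern p).prod P) {x : Bool × PercSpace d M | x.1 = true → x.2 ∈ B} =
        ENNReal.ofReal p * P B + ENNReal.ofReal (1 - p) := by
      rw [hU, measure_union _ ((measurableSet_singleton _).prod MeasurableSet.univ), Measure.prod_prod,
        Measure.prod_prod, bern_apply, bern_apply]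
      · simp
      · rw [Set.disjoint_left]
        rintro ⟨b, ω⟩ h h'
        simp only [Set.mem_prod, Set.mem_singleton_iff] at h h'
        rw [h.1] at h'
        simp at h'
    rw [hU2]
    simp
  rw [measureReal_def, h1, ENNReal.toReal_pow, ENNReal.toReal_add, ENNReal.toReal_mul,
    ENNReal.toReal_ofReal hp0, ENNReal.toReal_ofReal (by linarith), measureReal_def]
  · ring
  · exact ENNReal.mul_ne_top ENNReal.ofReal_ne_top (measure_ne_top _ _)
  · exact ENNReal.ofReal_ne_top

lemma ret_append (u w : List (Alpha d M)) (ω : PercSpace d M) :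
    Retained d M ω (u ++ w) ↔ Retained d M ω u ∧ Retained d M (shw u ω) w := by
  induction u generalizing ω with
  | nil =>
    have : Retained d M ω [] := fun u hu h => absurd (List.prefix_nil.1 h) hu
    simp [shw, this]
  | cons c u ih => rw [List.cons_append, ret_sh, ret_sh, ih, shw, and_assoc]

/-- extinction -/
def Extn (d M : ℕ) : Set (PercSpace d M) := {ω | ∃ n, ∀ w ∈ wd d M n, ¬ Retained d M ω w}

/-- no good retained subtree -/
def Bad (G : Set (PercSpace d M)) : Set (PercSpace d M) := {ω | ∀ u, Retained d M ω u → shw u ω ∉ G}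

lemma meas_Ext : MeasurableSet (Extn d M) := by
  have : Extn d M = ⋃ n, ⋂ w ∈ wd d M n, {ω | Retained d M ω w}ᶜ := by
    ext ω; simp [Extn]
  rw [this]
  exact MeasurableSet.iUnion fun n => Finset.measurableSet_biInter _ fun w _ => (meas_retained w).compl

lemma meas_Bad {G : Set (PercSpace d M)} (hG : MeasurableSet G) : MeasurableSet (Bad G) := by
  have : Bad G = ⋂ u, ({ω | Retained d M ω u}ᶜ ∪ (shw u ⁻¹' G)ᶜ) := by
    ext ω; simp [Bad, imp_iff_not_or]
  rw [this]
  exact MeasurableSet.iInter fun u => (meas_retained u).compl.union (meas_shw u hG).compl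

lemma ext_mono {ω : PercSpace d M} {n m : ℕ} (hnm : n ≤ m) (h : ∀ w ∈ wd d M n, ¬ Retained d M ω w) :
    ∀ w ∈ wd d M m, ¬ Retained d M ω w := by
  intro w hw hr
  rw [mem_wd] at hw
  refine h (w.take n) ?_ (ret_pref hr (List.take_prefix _ _))
  rw [mem_wd, List.length_take]
  omega

lemma Ext_sub : {ω : PercSpace d M | ∀ c, ω (sgl c) = true → sh c ω ∈ Extn d M} ⊆ Extn d M := by
  intro ω h
  have h' : ∀ c, ∃ n, ω (sgl c) = true → ∀ w ∈ wd d M n, ¬ Retained d M (sh c ω) w := by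
    intro c
    by_cases hc : ω (sgl c) = true
    · obtain ⟨n, hn⟩ := h c hc
      exact ⟨n, fun _ => hn⟩
    · exact ⟨0, fun h => absurd h hc⟩
  choose n hn using h'
  refine ⟨Finset.univ.sup n + 1, fun w hw hr => ?_⟩
  rw [mem_wd] at hw
  cases w with
  | nil => simp at hw
  | cons c w =>
    rw [ret_sh] at hr
    exact ext_mono (Finset.le_sup (Finset.mem_univ c)) (hn c hr.1) w
      (by rw [mem_wd]; simpa using hw) hr.2

lemma Bad_sub (G : Set (PercSpace d M)) :
    Bad G ⊆ {ω : PercSpace d M | ∀ c, ω (sgl c) = true → sh c ω ∈ Bad G} := by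
  intro ω h c hc u hu
  exact h (c :: u) ((ret_sh c ω u).2 ⟨hc, hu⟩)

lemma zero_one {p : ℝ} (hd : 1 ≤ d) (hM : 2 ≤ M) (hp0 : 0 < p) (hp1 : p ≤ 1) {P : Measure (PercSpace d M)}
    (hP : IsBernoulliPerc d M p P) {G : Set (PercSpace d M)} (hG : MeasurableSet G) (hpos : 0 < P G)
    (hsurv : ∀ ω ∈ G, ω ∉ Extn d M) : P (Bad G \ Extn d M) = 0 := by
  have := hP.1
  set q := P.real (Bad G) with hq
  set e0 := P.real (Extn d M) with he
  have hsub : Extn d M ⊆ Bad G := by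
    rintro ω ⟨n, hn⟩ u hu hg
    refine hsurv _ hg ⟨n, fun w hw hr => ?_⟩
    rw [mem_wd] at hw
    exact ext_mono (m := (u ++ w).length) (by simp [hw]) hn (u ++ w) (by rw [mem_wd])
      ((ret_append u w ω).2 ⟨hu, hr⟩)
  have hq1 : q < 1 := by
    have h1 : Bad G ⊆ Gᶜ := fun ω h hg => h [] (fun u hu h => absurd (List.prefix_nil.1 h) hu) hg
    have h2 : q ≤ P.real Gᶜ := measureReal_mono h1
    rw [probReal_compl_eq_one_sub hG] at h2
    have h3 : 0 < P.real G := by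
      rw [measureReal_def]
      exact ENNReal.toReal_pos hpos.ne' (measure_ne_top _ _)
    linarith
  have hf : q ≤ (1 - p + p * q) ^ (M ^ d) := by
    rw [← branch hp0.le hp1 hP (meas_Bad hG)]
    exact measureReal_mono (Bad_sub G)
  have hf' : (1 - p + p * e0) ^ (M ^ d) ≤ e0 := by
    rw [← branch hp0.le hp1 hP meas_Ext]
    exact measureReal_mono Ext_sub
  have heq : e0 ≤ q := measureReal_mono hsub
  have he0 : 0 ≤ e0 := measureReal_nonneg
  have hN : 2 ≤ M ^ d := hM.trans (Nat.le_self_pow (by omega) M)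
  have hqe : q = e0 := by
    by_contra hne
    have hlt : e0 < q := lt_of_le_of_ne heq (Ne.symm hne)
    have ha1 : (0:ℝ) < (1 - q) / (1 - e0) := div_pos (by linarith) (by linarith)
    have hb1 : (0:ℝ) < (q - e0) / (1 - e0) := div_pos (by linarith) (by linarith)
    have hab : (1 - q) / (1 - e0) + (q - e0) / (1 - e0) = 1 := by
      rw [← add_div, div_eq_one_iff_eq] <;> linarith
    have hx0 : 1 - p + p * e0 ∈ Set.Ici (0:ℝ) := by rw [Set.mem_Ici]; nlinarith
    have hx1 : (1:ℝ) ∈ Set.Ici (0:ℝ) := by simp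
    have hxne : 1 - p + p * e0 ≠ 1 := by nlinarith
    have hsc : StrictConvexOn ℝ (Set.Ici 0) fun x : ℝ => x ^ (M ^ d) := strictConvexOn_pow hN
    have hconv := hsc.2 hx0 hx1 hxne ha1 hb1 hab
    simp only [smul_eq_mul, one_pow, mul_one] at hconv
    have h1e : 0 < 1 - e0 := by linarith
    have e1 : (1 - q) / (1 - e0) * (1 - p + p * e0) + (q - e0) / (1 - e0) = 1 - p + p * q := by
      field_simp; ring
    rw [e1] at hconv
    have e2 : (1 - q) / (1 - e0) * e0 + (q - e0) / (1 - e0) = q := by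
      field_simp; ring
    have e3 : (1 - q) / (1 - e0) * (1 - p + p * e0) ^ (M ^ d) ≤ (1 - q) / (1 - e0) * e0 :=
      mul_le_mul_of_nonneg_left hf' (div_nonneg (by linarith) h1e.le)
    linarith
  rw [measure_sdiff hsub meas_Ext.nullMeasurableSet (measure_ne_top _ _)]
  have : P (Bad G) = P (Extn d M) := by
    rw [hq, he, measureReal_def, measureReal_def, ENNReal.toReal_eq_toReal_iff' (measure_ne_top _ _) (measure_ne_top _ _)] at hqe
    exact hqe
  rw [this, tsub_self]

end zo


lemma G0_surv {d M R k : ℕ} {σ : ℝ → List (Alpha d M) → List (Alpha d M) → ℝ} :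
    ∀ ω ∈ G0 σ R k, ω ∉ Extn d M := by
  rintro ω h ⟨n, hn⟩
  obtain ⟨w, hw, w', hw', hr, -⟩ := h (n + k) (by omega) 0 (by omega)
  exact ext_mono (by omega : n ≤ n + k) hn w hw hr

lemma lim_surv {d M : ℕ} {ω : PercSpace d M} (h : percLimit d M ω ≠ ∅) : ω ∉ Extn d M := by
  rintro ⟨n, hn⟩
  obtain ⟨x, hx⟩ := Set.nonempty_iff_ne_empty.2 h
  have h1 := Set.mem_iInter₂.1 hx (n + 1) (by simp)
  simp only [approx, Set.mem_iUnion, Set.mem_ofPred_eq] at h1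
  obtain ⟨w, ⟨hl, hr⟩, -⟩ := h1
  exact ext_mono (by omega : n ≤ n + 1) hn w (by rw [mem_wd]; exact hl) hr

/-- if `p > M^{-d+1/2}`, then conditioned on `E ≠ ∅`, almost
surely the distance set `D(E)` contains a nonempty open interval. -/
theorem distance_set_one_percolation
    (d M : ℕ) (hd : 1 ≤ d) (hM : 2 ≤ M)
    (p : ℝ) (hp1 : p ≤ 1) (hp : (M : ℝ) ^ ((1 : ℝ) / 2 - (d : ℝ)) < p)
    (P : Measure (PercSpace d M)) (hP : IsBernoulliPerc d M p P) :
    ∀ᵐ ω ∂(ProbabilityTheory.cond P {ω | percLimit d M ω ≠ ∅}),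
      ∃ a b : ℝ, a < b ∧ Set.Ioo a b ⊆
        {r | ∃ x ∈ percLimit d M ω, ∃ y ∈ percLimit d M ω, r = dist x y} := by
  have hprob := hP.1
  obtain ⟨e, rfl⟩ : ∃ e, d = e + 1 := ⟨d - 1, by omega⟩
  have hM0 : (0:ℝ) < M := by positivity
  have hq0 : 0 < (M : ℝ) ^ ((1 : ℝ) / 2 - ((e + 1 : ℕ) : ℝ)) := Real.rpow_pos_of_pos hM0 _
  have hp0 : 0 < p := hq0.trans hp
  have hlam : 1 < p ^ 2 * (M:ℝ) ^ (2 * (e + 1) - 1) := by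
    have h1 : ((M : ℝ) ^ ((1 : ℝ) / 2 - ((e + 1 : ℕ) : ℝ))) ^ 2 * (M:ℝ) ^ (2 * (e + 1) - 1) = 1 := by
      rw [show 2 * (e + 1) - 1 = 2 * e + 1 by omega, ← Real.rpow_natCast _ 2, ← Real.rpow_mul hM0.le,
        ← Real.rpow_natCast _ (2 * e + 1), ← Real.rpow_add hM0]
      have : ((1 : ℝ) / 2 - ((e + 1 : ℕ) : ℝ)) * ((2:ℕ):ℝ) + ((2 * e + 1 : ℕ) : ℝ) = 0 := by
        push_cast; ring
      rw [this, Real.rpow_zero]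
    rw [← h1]
    gcongr
  obtain ⟨k, hk⟩ := core_pos (CC_pos e) (sg_link hM) hd hM hp0 hp1 hlam hP
  have hpos := G0_pos hp0 hp1 hP hk
  have hz := zero_one hd hM hp0 hp1 hP (meas_G0 _ _) hpos G0_surv
  have hR : 2 ≤ M ^ (4 * (e + 1) + 2) := hM.trans (Nat.le_self_pow (by omega) M)
  have hac : ProbabilityTheory.cond P {ω | percLimit (e + 1) M ω ≠ ∅} ≪ P.restrict (Extn (e + 1) M)ᶜ := by
    refine Measure.AbsolutelyContinuous.trans ?_
      (Measure.absolutelyContinuous_of_le (Measure.restrict_mono_set P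
        (s := {ω | percLimit (e + 1) M ω ≠ ∅}) (fun ω h => lim_surv h)))
    exact Measure.smul_absolutelyContinuous
  suffices hfin : ∀ᵐ ω ∂(P.restrict (Extn (e + 1) M)ᶜ), DI ω from hac.ae_le hfin
  rw [ae_restrict_iff' meas_Ext.compl]
  have h2 : ∀ᵐ ω ∂P, ω ∉ Bad (G0 (sg e M) (M ^ (4 * (e + 1) + 2)) k) \ Extn (e + 1) M :=
    measure_eq_zero_iff_ae_notMem.1 hz
  filter_upwards [h2] with ω h3 h4
  have h5 : ω ∉ Bad (G0 (sg e M) (M ^ (4 * (e + 1) + 2)) k) := fun h => h3 ⟨h, h4⟩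
  simp only [Bad, Set.mem_ofPred_eq, not_forall, not_not] at h5
  obtain ⟨u, hu, hg⟩ := h5
  exact DI_shw hM u hu (G0_DI hM hR hg)
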